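/- arXiv:2407.12509 — 3 statements merged into one kernel-verified Lean document; each statement's English description precedes it below -/
import Mathlib

section
/- (Fundamental lemma, Proposition 1.) Let (A_true, B_true, C_true, D_true) be a minimal discrete-time linear system with n_true states, m inputs, p outputs, and lag ℓ_true ≥ 1, and let integers L and N satisfy ℓ_true ≤ L and n_true ≤ N. Suppose the data (u_{[0,t−1]}, y_{[0,t−1]}) are generated by this system and that the input sequence u_{[0,t−1]} is persistently exciting of order N + L + 1. Then rank H_{L,t} = (L+1)m + n_true. -/
/-!
Stack the state matrix `[x(0) ⋯ x(t-L-1)]` on top of the input Hankel matrix with `L+1` block rows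
and call the result `S`. Two facts give the rank of `H_{L,t}`.

* `H_{L,t}` and `S` have the same kernel: if the weights `w` annihilate all the input rows, then
  the weighted states obey the autonomous recursion `X (r+1) = A X r`, so the weighted outputs are
  `C A^r X 0` for `r ≤ L`. Since `L` is at least the lag, these vanish only if `X 0 = 0`
  (`eq_zero_of_lag_le`).
* `S` has full row rank (`left_kernel_trivial`). A left annihilator is a pair `(ξ, η)` with
  `ξ ⬝ x(c) + ∑ r, η r ⬝ u(c+r) = 0`. Advancing time by one turns it into
  `T (ξ, η) = (ξ A, (ξ B, η 0, η 1, …))`. With `q` the characteristic polynomial of `A`,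
  Cayley–Hamilton says that `q(T) (ξ, η)` has zero state part, and persistency of excitation then
  kills its input part, so `q(T) (ξ, η) = 0`. Reducing `X ^ k` modulo `q`, all iterates
  `T ^ k (ξ, η)` lie in the span of the first `n` of them, so their input parts vanish beyond a
  fixed index. But those input parts contain arbitrarily far shifted copies of every `η i` and
  every `ξ A^j B`, so all of these are zero, and controllability gives `ξ = 0`.
-/

open Matrix

/-- The Hankel matrix with `rows` block rows and `cols` columns built from the
vector sequence `f` (starting at time `0`): the block entry in block row `r` and
column `c` is `f (r + c)`.  Thus `H_k(f_{[0,t-1]}) = hankel f (k+1) (t-k)`. -/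
def hankel {d : ℕ} (f : ℕ → Fin d → ℝ) (rows cols : ℕ) :
    Matrix (Fin rows × Fin d) (Fin cols) ℝ :=
  Matrix.of fun r c => f ((r.1 : ℕ) + (c : ℕ)) r.2

/-- `u_{[0,t-1]}` is persistently exciting of order `k+1`, i.e. the Hankel
matrix `H_k(u_{[0,t-1]})` (with `k+1` block rows) has full row rank. -/
def PersistentlyExciting {m : ℕ} (u : ℕ → Fin m → ℝ) (t k : ℕ) : Prop :=
  (hankel u (k + 1) (t - k)).rank = (k + 1) * m

/-- The Hankel matrix `H_{k,t}`: `H_k(y_{[0,t-1]})` stacked on top of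
`H_k(u_{[0,t-1]})`. -/
def Hkt {m p : ℕ} (u : ℕ → Fin m → ℝ) (y : ℕ → Fin p → ℝ) (k t : ℕ) :
    Matrix ((Fin (k + 1) × Fin p) ⊕ (Fin (k + 1) × Fin m)) (Fin (t - k)) ℝ :=
  Matrix.fromRows (hankel y (k + 1) (t - k)) (hankel u (k + 1) (t - k))

/-- The matrix `G_{k,t}`: `H_{k-1}(y_{[0,t-2]})` (which has `k` block rows and
`t-k` columns) stacked on top of `H_k(u_{[0,t-1]})`. -/
def Gkt {m p : ℕ} (u : ℕ → Fin m → ℝ) (y : ℕ → Fin p → ℝ) (k t : ℕ) :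
    Matrix ((Fin k × Fin p) ⊕ (Fin (k + 1) × Fin m)) (Fin (t - k)) ℝ :=
  Matrix.fromRows (hankel y k (t - k)) (hankel u (k + 1) (t - k))

/-- `δ_{k,t} = rank H_{k,t} - rank G_{k,t}`. -/
noncomputable def deltaKT {m p : ℕ} (u : ℕ → Fin m → ℝ) (y : ℕ → Fin p → ℝ) (k t : ℕ) : ℕ :=
  (Hkt u y k t).rank - (Gkt u y k t).rank

/-- `q_t`: the smallest `k ∈ [0, t-1]` with `δ_{k,t} = 0`. -/
noncomputable def qT {m p : ℕ} (u : ℕ → Fin m → ℝ) (y : ℕ → Fin p → ℝ) (t : ℕ) : ℕ :=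
  sInf {k | k ≤ t - 1 ∧ deltaKT u y k t = 0}

/-- A discrete-time linear system `(A, B, C, D)` with `m` inputs, `p` outputs
and `n` states. -/
structure LinSys (m p : ℕ) where
  n : ℕ
  A : Matrix (Fin n) (Fin n) ℝ
  B : Matrix (Fin n) (Fin m) ℝ
  C : Matrix (Fin p) (Fin n) ℝ
  D : Matrix (Fin p) (Fin m) ℝ

/-- `obsMat sys k` is the observability matrix `Ω_{k-1}` with `k` block rows,
stacking `C, CA, ..., CA^(k-1)`. -/
def obsMat {m p : ℕ} (sys : LinSys m p) (k : ℕ) :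
    Matrix (Fin k × Fin p) (Fin sys.n) ℝ :=
  Matrix.of fun r j => (sys.C * sys.A ^ (r.1 : ℕ)) r.2 j

/-- The lag `ℓ(C,A)`: the smallest `k ≥ 0` with `rank Ω_k = rank Ω_{k-1}`. -/
noncomputable def lag {m p : ℕ} (sys : LinSys m p) : ℕ :=
  sInf {k | (obsMat sys (k + 1)).rank = (obsMat sys k).rank}

/-- The controllability matrix with `k` blocks `[B, AB, ..., A^(k-1)B]`. -/
def ctrlMat {m p : ℕ} (sys : LinSys m p) (k : ℕ) :
    Matrix (Fin sys.n) (Fin k × Fin m) ℝ :=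
  Matrix.of fun i c => (sys.A ^ (c.1 : ℕ) * sys.B) i c.2

def Observable {m p : ℕ} (sys : LinSys m p) : Prop :=
  (obsMat sys sys.n).rank = sys.n

def Controllable {m p : ℕ} (sys : LinSys m p) : Prop :=
  (ctrlMat sys sys.n).rank = sys.n

def MinimalSys {m p : ℕ} (sys : LinSys m p) : Prop :=
  Controllable sys ∧ Observable sys

/-- The system explains the data `(u_{[0,t-1]}, y_{[0,t-1]})` with the
compatible state sequence `x`. -/
def ExplainsWith {m p : ℕ} (sys : LinSys m p) (t : ℕ) (u : ℕ → Fin m → ℝ)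
    (y : ℕ → Fin p → ℝ) (x : ℕ → Fin sys.n → ℝ) : Prop :=
  ∀ s < t, x (s + 1) = sys.A.mulVec (x s) + sys.B.mulVec (u s) ∧
    y s = sys.C.mulVec (x s) + sys.D.mulVec (u s)

/-- The system explains (equivalently, generates) the data
`(u_{[0,t-1]}, y_{[0,t-1]})`. -/
def Explains {m p : ℕ} (sys : LinSys m p) (t : ℕ) (u : ℕ → Fin m → ℝ)
    (y : ℕ → Fin p → ℝ) : Prop :=
  ∃ x : ℕ → Fin sys.n → ℝ, ExplainsWith sys t u y x

/-- `ℰ_t`, the set of systems explaining the data. -/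
def ExplSet {m p : ℕ} (t : ℕ) (u : ℕ → Fin m → ℝ) (y : ℕ → Fin p → ℝ) :
    Set (LinSys m p) :=
  {sys | Explains sys t u y}

/-- `ℓ_min,t`: the smallest lag among explaining systems. -/
noncomputable def lMin {m p : ℕ} (t : ℕ) (u : ℕ → Fin m → ℝ) (y : ℕ → Fin p → ℝ) : ℕ :=
  sInf {ℓ | ∃ sys : LinSys m p, Explains sys t u y ∧ lag sys = ℓ}

/-- `n_min,t`: the smallest state dimension among explaining systems. -/
noncomputable def nMin {m p : ℕ} (t : ℕ) (u : ℕ → Fin m → ℝ) (y : ℕ → Fin p → ℝ) : ℕ :=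
  sInf {n | ∃ sys : LinSys m p, Explains sys t u y ∧ sys.n = n}

/-- Two systems are isomorphic: `D₁ = D₂` and there is an invertible state
transformation `S` with `S A₁ = A₂ S`, `S B₁ = B₂`, `C₁ = C₂ S`. -/
def Isomorphic {m p : ℕ} (s1 s2 : LinSys m p) : Prop :=
  s1.D = s2.D ∧ ∃ (S : Matrix (Fin s2.n) (Fin s1.n) ℝ)
    (S' : Matrix (Fin s1.n) (Fin s2.n) ℝ),
    S * S' = 1 ∧ S' * S = 1 ∧ S * s1.A = s2.A * S ∧ S * s1.B = s2.B ∧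
    s1.C = s2.C * S

/-- `M`, the set of minimal systems. -/
def Mset (m p : ℕ) : Set (LinSys m p) := {sys | MinimalSys sys}

/-- `S_{L,N}`, the set of systems with lag at most `L` and at most `N` states. -/
def SLN (m p L N : ℕ) : Set (LinSys m p) := {sys | lag sys ≤ L ∧ sys.n ≤ N}

/-- The data `(u_{[0,t-1]}, y_{[0,t-1]})` are informative for system
identification (with prior bounds `L`, `N`, and true state dimension `nTrue`). -/
def Informative {m p : ℕ} (t : ℕ) (u : ℕ → Fin m → ℝ) (y : ℕ → Fin p → ℝ)
    (nTrue L N : ℕ) : Prop :=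
  (ExplSet t u y ∩ Mset m p ∩ SLN m p L N =
      {sys ∈ ExplSet t u y | sys.n = nTrue} ∩ Mset m p ∩ SLN m p L N) ∧
  ∀ s1 ∈ ExplSet t u y ∩ Mset m p ∩ SLN m p L N,
    ∀ s2 ∈ ExplSet t u y ∩ Mset m p ∩ SLN m p L N, Isomorphic s1 s2
/-! ### Ranks and kernels -/

lemma rank_add_finrank_ker {α β : Type*} [Fintype α] [Fintype β] [DecidableEq β]
    (M : Matrix α β ℝ) :
    M.rank + Module.finrank ℝ (LinearMap.ker M.mulVecLin) = Fintype.card β := by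
  have h := LinearMap.finrank_range_add_finrank_ker M.mulVecLin
  rw [Module.finrank_fintype_fun_eq_card] at h
  exact h

lemma ker_eq_of_rank_eq {α α' β : Type*} [Fintype α] [Fintype α'] [Fintype β] [DecidableEq β]
    (M : Matrix α β ℝ) (M' : Matrix α' β ℝ) (h : M.rank = M'.rank)
    (hle : ∀ z, M *ᵥ z = 0 → M' *ᵥ z = 0) (z : β → ℝ) (hz : M' *ᵥ z = 0) : M *ᵥ z = 0 := by
  have h1 := rank_add_finrank_ker M
  have h2 := rank_add_finrank_ker M'
  have hle' : LinearMap.ker M.mulVecLin ≤ LinearMap.ker M'.mulVecLin := by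
    intro z hz
    simpa using hle z (by simpa using hz)
  have := Submodule.eq_of_le_of_finrank_eq hle' (by omega)
  have hz' : z ∈ LinearMap.ker M'.mulVecLin := by simpa using hz
  rw [← this] at hz'
  simpa using hz'

lemma rank_eq_of_ker_eq {α α' β : Type*} [Fintype α] [Fintype α'] [Fintype β] [DecidableEq β]
    (M : Matrix α β ℝ) (M' : Matrix α' β ℝ)
    (h : ∀ z, M *ᵥ z = 0 ↔ M' *ᵥ z = 0) : M.rank = M'.rank := by
  have h1 := rank_add_finrank_ker M
  have h2 := rank_add_finrank_ker M'
  have : LinearMap.ker M.mulVecLin = LinearMap.ker M'.mulVecLin := by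
    ext z
    simpa using h z
  rw [this] at h1
  omega

lemma eq_zero_of_rank_eq_card_col {α β : Type*} [Fintype α] [Fintype β] [DecidableEq β]
    (M : Matrix α β ℝ) (h : M.rank = Fintype.card β) (z : β → ℝ) (hz : M *ᵥ z = 0) : z = 0 := by
  have h1 := rank_add_finrank_ker M
  have : LinearMap.ker M.mulVecLin = ⊥ := Submodule.finrank_eq_zero.mp (by omega)
  have hz' : z ∈ LinearMap.ker M.mulVecLin := by simpa using hz
  rw [this] at hz'
  simpa using hz'

lemma eq_zero_of_rank_eq_card_row {α β : Type*} [Fintype α] [Fintype β] [DecidableEq α]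
    (M : Matrix α β ℝ) (h : M.rank = Fintype.card α) (w : α → ℝ) (hw : w ᵥ* M = 0) : w = 0 :=
  eq_zero_of_rank_eq_card_col Mᵀ (by rw [Matrix.rank_transpose, h]) w
    (by rw [Matrix.mulVec_transpose, hw])

lemma rank_eq_card_row {α β : Type*} [Fintype α] [Fintype β] [DecidableEq α]
    (M : Matrix α β ℝ) (h : ∀ w, w ᵥ* M = 0 → w = 0) : M.rank = Fintype.card α := by
  have h1 := rank_add_finrank_ker Mᵀ
  have : LinearMap.ker Mᵀ.mulVecLin = ⊥ := by
    rw [LinearMap.ker_eq_bot']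
    intro w hw
    exact h w (by simpa [Matrix.mulVec_transpose] using hw)
  rw [this, finrank_bot, Matrix.rank_transpose] at h1
  simpa using h1

/-! ### Observability and controllability -/

lemma obsMat_mulVec {m p : ℕ} (sys : LinSys m p) (k : ℕ) (z : Fin sys.n → ℝ) :
    obsMat sys k *ᵥ z = 0 ↔ ∀ i < k, sys.C *ᵥ (sys.A ^ i *ᵥ z) = 0 := by
  constructor
  · intro h i hi
    ext a
    have := congrFun h (⟨i, hi⟩, a)
    rw [Matrix.mulVec_mulVec]
    exact this
  · intro h
    ext ⟨i, a⟩
    have := congrFun (h i i.2) a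
    rw [Matrix.mulVec_mulVec] at this
    exact this

/-- The lag of an observable system is attained: its defining set contains `n`. -/
lemma lag_spec {m p : ℕ} (sys : LinSys m p) (ho : Observable sys) :
    (obsMat sys (lag sys + 1)).rank = (obsMat sys (lag sys)).rank := by
  have hne : {k | (obsMat sys (k + 1)).rank = (obsMat sys k).rank}.Nonempty := by
    refine ⟨sys.n, ?_⟩
    have h0 : (obsMat sys sys.n).rank = sys.n := ho
    have : (obsMat sys (sys.n + 1)).rank = Fintype.card (Fin sys.n) := by
      have h1 := rank_add_finrank_ker (obsMat sys (sys.n + 1))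
      have : LinearMap.ker (obsMat sys (sys.n + 1)).mulVecLin = ⊥ := by
        rw [LinearMap.ker_eq_bot']
        intro z hz
        refine eq_zero_of_rank_eq_card_col (obsMat sys sys.n) (by simpa using h0) z ?_
        have hz' := (obsMat_mulVec sys _ z).mp (by simpa using hz)
        exact (obsMat_mulVec sys _ z).mpr fun i hi => hz' i (by omega)
      rw [this, finrank_bot] at h1
      simpa using h1
    simpa [h0] using this
  exact Nat.sInf_mem hne

/-- `lag` output blocks already determine the state: rank stagnation makes the kernel of the
observability matrix `A`-invariant, hence contained in the unobservable subspace. -/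
lemma eq_zero_of_lag_le {m p : ℕ} (sys : LinSys m p) (ho : Observable sys) (k : ℕ)
    (hk : lag sys ≤ k) (z : Fin sys.n → ℝ)
    (hz : ∀ i < k, sys.C *ᵥ (sys.A ^ i *ᵥ z) = 0) : z = 0 := by
  have step : ∀ z : Fin sys.n → ℝ, (∀ i < lag sys, sys.C *ᵥ (sys.A ^ i *ᵥ z) = 0) →
      ∀ i < lag sys + 1, sys.C *ᵥ (sys.A ^ i *ᵥ z) = 0 := by
    intro z hz
    refine (obsMat_mulVec sys _ z).mp (ker_eq_of_rank_eq _ _ (lag_spec sys ho) ?_ z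
      ((obsMat_mulVec sys _ z).mpr hz))
    intro z hz
    exact (obsMat_mulVec sys _ z).mpr fun i hi => (obsMat_mulVec sys _ z).mp hz i (by omega)
  have inv : ∀ j : ℕ, ∀ i < lag sys, sys.C *ᵥ (sys.A ^ i *ᵥ (sys.A ^ j *ᵥ z)) = 0 := by
    intro j
    induction j with
    | zero => intro i hi; simpa using hz i (by omega)
    | succ j ih =>
      intro i hi
      have := step _ ih (i + 1) (by omega)
      rwa [pow_succ, ← Matrix.mulVec_mulVec, Matrix.mulVec_mulVec (M := sys.A), ← pow_succ']
        at this
  have h0 : (obsMat sys sys.n).rank = sys.n := ho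
  refine eq_zero_of_rank_eq_card_col (obsMat sys sys.n) (by simpa using h0) z ?_
  refine (obsMat_mulVec sys _ z).mpr fun i _ => ?_
  simpa using step _ (inv i) 0 (by omega)

lemma eq_zero_of_controllable {m p : ℕ} (sys : LinSys m p) (hc : Controllable sys)
    (ξ : Fin sys.n → ℝ) (h : ∀ j : ℕ, (ξ ᵥ* sys.A ^ j) ᵥ* sys.B = 0) : ξ = 0 := by
  have h0 : (ctrlMat sys sys.n).rank = sys.n := hc
  refine eq_zero_of_rank_eq_card_row (ctrlMat sys sys.n) (by simpa using h0) ξ ?_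
  ext ⟨j, a⟩
  have := congrFun (h j) a
  rw [Matrix.vecMul_vecMul] at this
  exact this

/-! ### The time shift acting on annihilators -/

/-- The pair `(ξ, η)` encodes the functional `ξ ⬝ x(c) + ∑ r, η r ⬝ u(c+r)` of the trajectory;
`shiftEnd sys` sends it to `(ξ A, (ξ B, η 0, η 1, …))`, which encodes the same functional
evaluated one time step later. -/
def shiftEnd {m p : ℕ} (sys : LinSys m p) :
    Module.End ℝ ((Fin sys.n → ℝ) × (ℕ → Fin m → ℝ)) where
  toFun v := (v.1 ᵥ* sys.A, fun i => Nat.casesOn i (v.1 ᵥ* sys.B) v.2)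
  map_add' v w := by
    refine Prod.ext (Matrix.add_vecMul sys.A v.1 w.1) ?_
    funext i
    cases i
    · exact Matrix.add_vecMul sys.B v.1 w.1
    · rfl
  map_smul' a v := by
    refine Prod.ext (Matrix.smul_vecMul a v.1 sys.A) ?_
    funext i
    cases i
    · exact Matrix.smul_vecMul a v.1 sys.B
    · rfl

section Shift

variable {m p : ℕ} (sys : LinSys m p) (v : (Fin sys.n → ℝ) × (ℕ → Fin m → ℝ))

lemma shiftEnd_fst : (shiftEnd sys v).1 = v.1 ᵥ* sys.A := rfl

lemma shiftEnd_snd_zero : (shiftEnd sys v).2 0 = v.1 ᵥ* sys.B := rfl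

lemma shiftEnd_snd_succ (i : ℕ) : (shiftEnd sys v).2 (i + 1) = v.2 i := rfl

lemma shiftEnd_pow_succ (k : ℕ) :
    (shiftEnd sys ^ (k + 1)) v = shiftEnd sys ((shiftEnd sys ^ k) v) := by
  rw [pow_succ']
  rfl

lemma shiftEnd_pow_fst (k : ℕ) : ((shiftEnd sys ^ k) v).1 = v.1 ᵥ* sys.A ^ k := by
  induction k with
  | zero => simp
  | succ k ih => rw [shiftEnd_pow_succ, shiftEnd_fst, ih, Matrix.vecMul_vecMul, pow_succ]

lemma shiftEnd_pow_snd_add (k i : ℕ) : ((shiftEnd sys ^ k) v).2 (i + k) = v.2 i := by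
  induction k with
  | zero => simp
  | succ k ih => rw [shiftEnd_pow_succ, ← add_assoc, shiftEnd_snd_succ, ih]

lemma shiftEnd_pow_snd_vecMul (j k : ℕ) :
    ((shiftEnd sys ^ (j + 1 + k)) v).2 k = (v.1 ᵥ* sys.A ^ j) ᵥ* sys.B := by
  have := shiftEnd_pow_snd_add sys ((shiftEnd sys ^ (j + 1)) v) k 0
  rw [zero_add, ← Module.End.mul_apply, ← pow_add] at this
  rw [add_comm (j + 1) k, this, shiftEnd_pow_succ, shiftEnd_snd_zero, shiftEnd_pow_fst]

lemma shiftEnd_pow_snd_eq_zero (L : ℕ) (hv : ∀ i > L, v.2 i = 0) (k i : ℕ) (hi : L + k < i) :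
    ((shiftEnd sys ^ k) v).2 i = 0 := by
  obtain ⟨j, rfl⟩ : ∃ j, i = j + k := ⟨i - k, by omega⟩
  rw [shiftEnd_pow_snd_add]
  exact hv j (by omega)

lemma aeval_shiftEnd (q : Polynomial ℝ) :
    Polynomial.aeval (shiftEnd sys) q v =
      ∑ k ∈ Finset.range (q.natDegree + 1), q.coeff k • (shiftEnd sys ^ k) v := by
  rw [Polynomial.aeval_eq_sum_range, LinearMap.sum_apply]
  rfl

lemma aeval_shiftEnd_fst (q : Polynomial ℝ) :
    (Polynomial.aeval (shiftEnd sys) q v).1 = v.1 ᵥ* Polynomial.aeval sys.A q := by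
  rw [aeval_shiftEnd, Prod.fst_sum, Polynomial.aeval_eq_sum_range]
  rw [← Matrix.mulVec_transpose, Matrix.transpose_sum, Matrix.sum_mulVec]
  refine Finset.sum_congr rfl fun k _ => ?_
  rw [Matrix.mulVec_transpose, Matrix.vecMul_smul, Prod.smul_fst, shiftEnd_pow_fst]

lemma aeval_shiftEnd_snd_eq_zero (L : ℕ) (hv : ∀ i > L, v.2 i = 0) (q : Polynomial ℝ) (i : ℕ)
    (hi : L + q.natDegree < i) : (Polynomial.aeval (shiftEnd sys) q v).2 i = 0 := by
  rw [aeval_shiftEnd, Prod.snd_sum, Finset.sum_apply]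
  refine Finset.sum_eq_zero fun k hk => ?_
  rw [Finset.mem_range] at hk
  rw [Prod.smul_snd, Pi.smul_apply, shiftEnd_pow_snd_eq_zero sys v L hv k i (by omega), smul_zero]

/-- A finitely supported pair annihilated by a monic polynomial in the shift is zero: its iterates
stay in a finite-dimensional space, where the supports of the input parts are bounded. -/
lemma eq_zero_of_aeval_shiftEnd (hc : Controllable sys) (L : ℕ) (hv : ∀ i > L, v.2 i = 0)
    (q : Polynomial ℝ) (hq : q.Monic) (h : Polynomial.aeval (shiftEnd sys) q v = 0) : v = 0 := by
  have bound : ∀ k i : ℕ, L + q.natDegree < i → ((shiftEnd sys ^ k) v).2 i = 0 := by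
    intro k i hi
    have hmod := congrArg (fun r => Polynomial.aeval (shiftEnd sys) r v)
      (Polynomial.modByMonic_add_div (Polynomial.X ^ k : Polynomial ℝ) q)
    simp only [map_add, mul_comm q, map_mul, LinearMap.add_apply, Module.End.mul_apply, h,
      map_zero, add_zero, map_pow, Polynomial.aeval_X] at hmod
    rw [← hmod]
    refine aeval_shiftEnd_snd_eq_zero sys v L hv _ i ?_
    have := Polynomial.natDegree_modByMonic_le (Polynomial.X ^ k : Polynomial ℝ) hq
    omega
  refine Prod.ext ?_ ?_
  · refine eq_zero_of_controllable sys hc _ fun j => ?_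
    rw [← shiftEnd_pow_snd_vecMul sys v j (L + q.natDegree + 1)]
    exact bound _ _ (by omega)
  · funext i
    rw [← shiftEnd_pow_snd_add sys v (L + q.natDegree + 1) i]
    exact bound _ _ (by omega)

end Shift

/-- The value at time `c` of the functional encoded by `v`, the input part being truncated to its
first `R` terms. -/
def evalAt {m n : ℕ} (R : ℕ) (x : ℕ → Fin n → ℝ) (u : ℕ → Fin m → ℝ) (c : ℕ)
    (v : (Fin n → ℝ) × (ℕ → Fin m → ℝ)) : ℝ :=
  v.1 ⬝ᵥ x c + ∑ r ∈ Finset.range R, v.2 r ⬝ᵥ u (r + c)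

lemma evalAt_sum {m n : ℕ} (R : ℕ) (x : ℕ → Fin n → ℝ) (u : ℕ → Fin m → ℝ) (c : ℕ)
    (s : Finset ℕ) (a : ℕ → ℝ) (f : ℕ → (Fin n → ℝ) × (ℕ → Fin m → ℝ)) :
    evalAt R x u c (∑ k ∈ s, a k • f k) = ∑ k ∈ s, a k * evalAt R x u c (f k) := by
  simp only [evalAt, Prod.fst_sum, Prod.snd_sum, Prod.smul_fst, Prod.smul_snd, Finset.sum_apply,
    Pi.smul_apply, sum_dotProduct, smul_dotProduct, smul_eq_mul, mul_add, Finset.sum_add_distrib,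
    Finset.mul_sum]
  rw [Finset.sum_comm]

lemma evalAt_shiftEnd {m p : ℕ} (sys : LinSys m p) (t : ℕ) (u : ℕ → Fin m → ℝ)
    (y : ℕ → Fin p → ℝ) (x : ℕ → Fin sys.n → ℝ) (hx : ExplainsWith sys t u y x) (R c : ℕ)
    (hc : c < t) (v : (Fin sys.n → ℝ) × (ℕ → Fin m → ℝ)) (hv : v.2 R = 0) :
    evalAt (R + 1) x u c (shiftEnd sys v) = evalAt (R + 1) x u (c + 1) v := by
  unfold evalAt
  rw [Finset.sum_range_succ', Finset.sum_range_succ _ R, hv, zero_dotProduct, add_zero,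
    (hx c hc).1, shiftEnd_fst, shiftEnd_snd_zero, dotProduct_add, Matrix.dotProduct_mulVec,
    Matrix.dotProduct_mulVec, zero_add]
  simp only [shiftEnd_snd_succ, add_assoc, add_comm 1 c]
  ring

/-- The state matrix stacked on the input Hankel matrix has trivial left kernel. -/
lemma left_kernel_trivial {m p : ℕ} (sys : LinSys m p) (hc : Controllable sys) (t L N : ℕ)
    (hN : sys.n ≤ N) (u : ℕ → Fin m → ℝ) (y : ℕ → Fin p → ℝ) (x : ℕ → Fin sys.n → ℝ)
    (hx : ExplainsWith sys t u y x) (hpe : PersistentlyExciting u t (N + L))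
    (v : (Fin sys.n → ℝ) × (ℕ → Fin m → ℝ)) (hv : ∀ i > L, v.2 i = 0)
    (h : ∀ c < t - L, evalAt (L + 1) x u c v = 0) : v = 0 := by
  -- The truncation index `N + L + 1` accommodates the supports of all shifts up to order `n`.
  have h0 : ∀ c < t - L, evalAt (N + L + 1) x u c v = 0 := by
    intro c hct
    rw [← h c hct]
    unfold evalAt
    congr 1
    symm
    refine Finset.sum_subset (Finset.range_subset_range.mpr (by omega)) fun i _ hi => ?_
    rw [Finset.mem_range] at hi
    rw [hv i (by omega), zero_dotProduct]
  have hk : ∀ k ≤ sys.n, ∀ c, c + k < t - L →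
      evalAt (N + L + 1) x u c ((shiftEnd sys ^ k) v) = 0 := by
    intro k
    induction k with
    | zero => intro _ c hct; exact h0 c hct
    | succ k ih =>
      intro hkn c hct
      rw [shiftEnd_pow_succ, evalAt_shiftEnd sys t u y x hx _ c (by omega) _
        (shiftEnd_pow_snd_eq_zero sys v L hv k _ (by omega))]
      exact ih (by omega) (c + 1) (by omega)
  have hdeg : sys.A.charpoly.natDegree = sys.n := by
    simp
  refine eq_zero_of_aeval_shiftEnd sys v hc L hv sys.A.charpoly sys.A.charpoly_monic ?_
  have hfst : (Polynomial.aeval (shiftEnd sys) sys.A.charpoly v).1 = 0 := by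
    rw [aeval_shiftEnd_fst, Matrix.aeval_self_charpoly, Matrix.vecMul_zero]
  have hann : ∀ c < t - (N + L),
      evalAt (N + L + 1) x u c (Polynomial.aeval (shiftEnd sys) sys.A.charpoly v) = 0 := by
    intro c hct
    rw [aeval_shiftEnd, evalAt_sum]
    refine Finset.sum_eq_zero fun k hkr => ?_
    rw [Finset.mem_range, hdeg] at hkr
    rw [hk k (by omega) c (by omega), mul_zero]
  have hsupp := aeval_shiftEnd_snd_eq_zero sys v L hv sys.A.charpoly
  generalize Polynomial.aeval (shiftEnd sys) sys.A.charpoly v = w at hfst hann hsupp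
  have hw := eq_zero_of_rank_eq_card_row (hankel u (N + L + 1) (t - (N + L)))
    (by rw [show (hankel u (N + L + 1) (t - (N + L))).rank = _ from hpe]; simp)
    (fun r => w.2 r.1 r.2) (by
      ext c
      have := hann c c.2
      rw [evalAt, hfst, zero_dotProduct, zero_add, Finset.sum_range] at this
      rw [Pi.zero_apply, ← this]
      simp only [Matrix.vecMul, dotProduct, hankel, Matrix.of_apply, Fintype.sum_prod_type])
  refine Prod.ext hfst ?_
  funext i
  by_cases hi : i < N + L + 1
  · funext a
    exact congrFun hw (⟨i, hi⟩, a)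
  · exact hsupp i (by omega)

/-! ### From the state-input matrix to the output-input matrix -/

/-- The state matrix `[x(0) ⋯ x(t-k-1)]` stacked on the input Hankel matrix with `k+1` block
rows. -/
def stateInput {m n : ℕ} (x : ℕ → Fin n → ℝ) (u : ℕ → Fin m → ℝ) (k t : ℕ) :
    Matrix (Fin n ⊕ (Fin (k + 1) × Fin m)) (Fin (t - k)) ℝ :=
  Matrix.fromRows (Matrix.of fun i c => x c i) (hankel u (k + 1) (t - k))

lemma rank_stateInput {m p : ℕ} (sys : LinSys m p) (hc : Controllable sys) (t L N : ℕ)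
    (hN : sys.n ≤ N) (u : ℕ → Fin m → ℝ) (y : ℕ → Fin p → ℝ) (x : ℕ → Fin sys.n → ℝ)
    (hx : ExplainsWith sys t u y x) (hpe : PersistentlyExciting u t (N + L)) :
    (stateInput x u L t).rank = (L + 1) * m + sys.n := by
  rw [rank_eq_card_row]
  · simp [add_comm]
  · intro w hw
    have hv := left_kernel_trivial sys hc t L N hN u y x hx hpe
      (fun i => w (Sum.inl i), fun i a => if hi : i < L + 1 then w (Sum.inr (⟨i, hi⟩, a)) else 0)
      (by
        intro i hi
        funext a
        exact dif_neg (by omega))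
      (by
        intro c hct
        have := congrFun hw ⟨c, hct⟩
        rw [Pi.zero_apply] at this
        refine Eq.trans ?_ this
        rw [evalAt, Finset.sum_range]
        simp only [Matrix.vecMul, dotProduct, stateInput, hankel, Fintype.sum_prod_type,
          Fintype.sum_sum_type, Matrix.fromRows_apply_inl, Matrix.fromRows_apply_inr,
          Matrix.of_apply, Fin.is_lt, dite_true, Fin.eta])
    funext i
    rcases i with i | ⟨i, a⟩
    · exact congrFun (congrArg Prod.fst hv) i
    · have := congrFun (congrFun (congrArg Prod.snd hv) (i : ℕ)) a
      exact (dif_pos i.2).symm.trans this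

lemma hankel_mulVec {d : ℕ} (f : ℕ → Fin d → ℝ) (rows cols : ℕ) (w : Fin cols → ℝ) :
    hankel f rows cols *ᵥ w = 0 ↔ ∀ r < rows, ∑ c, w c • f (r + c) = 0 := by
  constructor
  · intro h r hr
    ext a
    have := congrFun h (⟨r, hr⟩, a)
    simpa [Matrix.mulVec, dotProduct, hankel, Finset.sum_apply, mul_comm] using this
  · intro h
    ext ⟨r, a⟩
    have := congrFun (h r r.2) a
    simpa [Matrix.mulVec, dotProduct, hankel, Finset.sum_apply, mul_comm] using this

lemma mulVec_sum_smul {ι α β : Type*} [Fintype ι] [Fintype β] (M : Matrix α β ℝ) (w : ι → ℝ)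
    (f : ι → β → ℝ) : M *ᵥ (∑ c, w c • f c) = ∑ c, w c • (M *ᵥ f c) := by
  rw [Matrix.mulVec_sum]
  simp only [Matrix.mulVec_smul]

lemma ker_Hkt {m p : ℕ} (sys : LinSys m p) (ho : Observable sys) (t L : ℕ)
    (hL : lag sys ≤ L) (u : ℕ → Fin m → ℝ) (y : ℕ → Fin p → ℝ) (x : ℕ → Fin sys.n → ℝ)
    (hx : ExplainsWith sys t u y x) (w : Fin (t - L) → ℝ) :
    Hkt u y L t *ᵥ w = 0 ↔ stateInput x u L t *ᵥ w = 0 := by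
  have split : ∀ {α β : Type} (a : α → ℝ) (b : β → ℝ), Sum.elim a b = 0 ↔ a = 0 ∧ b = 0 := by
    intro α β a b
    constructor
    · intro h
      exact ⟨funext fun i => congrFun h (Sum.inl i), funext fun i => congrFun h (Sum.inr i)⟩
    · rintro ⟨rfl, rfl⟩
      funext i
      cases i <;> rfl
  rw [Hkt, stateInput, Matrix.fromRows_mulVec, Matrix.fromRows_mulVec, split, split]
  refine and_congr_left fun hu => ?_
  rw [hankel_mulVec] at hu ⊢
  have hX : ∀ r ≤ L, ∑ c, w c • x (r + c) = sys.A ^ r *ᵥ ∑ c, w c • x c := by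
    intro r
    induction r with
    | zero => intro _; simp
    | succ r ih =>
      intro hr
      have h1 : ∀ c : Fin (t - L), w c • x (r + 1 + c) =
          w c • (sys.A *ᵥ x (r + c)) + w c • (sys.B *ᵥ u (r + c)) := by
        intro c
        rw [show r + 1 + (c : ℕ) = r + c + 1 by ring, (hx (r + c) (by omega)).1, smul_add]
      rw [Finset.sum_congr rfl fun c _ => h1 c, Finset.sum_add_distrib, ← mulVec_sum_smul,
        ← mulVec_sum_smul, hu r (by omega), ih (by omega), Matrix.mulVec_zero, add_zero,
        Matrix.mulVec_mulVec, ← pow_succ']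
  have hY : ∀ r < L + 1, ∑ c, w c • y (r + c) = sys.C *ᵥ (sys.A ^ r *ᵥ ∑ c, w c • x c) := by
    intro r hr
    have h1 : ∀ c : Fin (t - L), w c • y (r + c) =
        w c • (sys.C *ᵥ x (r + c)) + w c • (sys.D *ᵥ u (r + c)) := by
      intro c
      rw [(hx (r + c) (by omega)).2, smul_add]
    rw [Finset.sum_congr rfl fun c _ => h1 c, Finset.sum_add_distrib, ← mulVec_sum_smul,
      ← mulVec_sum_smul, hu r hr, hX r (by omega), Matrix.mulVec_zero, add_zero]
  have hS : (Matrix.of fun (i : Fin sys.n) (c : Fin (t - L)) => x c i) *ᵥ w =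
      ∑ c : Fin (t - L), w c • x c := by
    ext i
    simp [Matrix.mulVec, dotProduct, Finset.sum_apply, mul_comm]
  rw [hS]
  constructor
  · intro h
    refine eq_zero_of_lag_le sys ho (L + 1) (by omega) _ fun i hi => ?_
    rw [← hY i hi, h i hi]
  · intro h r hr
    rw [hY r hr, h, Matrix.mulVec_zero, Matrix.mulVec_zero]

/-- **Proposition 1 (fundamental lemma).** If the minimal true system (with lag
`ℓ_true ≥ 1`, `ℓ_true ≤ L`, `n_true ≤ N`) generates the data and `u_{[0,t-1]}`
is persistently exciting of order `N + L + 1`, then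
`rank H_{L,t} = (L+1)m + n_true`. -/
theorem fundamental_lemma {m p : ℕ} (hm : 1 ≤ m) (hp : 1 ≤ p)
    (sysT : LinSys m p) (hmin : MinimalSys sysT) (hlag : 1 ≤ lag sysT)
    (L N t : ℕ) (hL : lag sysT ≤ L) (hN : sysT.n ≤ N)
    (u : ℕ → Fin m → ℝ) (y : ℕ → Fin p → ℝ)
    (hdata : Explains sysT t u y)
    (hpe : PersistentlyExciting u t (N + L)) :
    (Hkt u y L t).rank = (L + 1) * m + sysT.n := by
  obtain ⟨x, hx⟩ := hdata
  rw [rank_eq_of_ker_eq _ _ (ker_Hkt sysT hmin.2 t L hL u y x hx)]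
  exact rank_stateInput sysT hmin.1 t L N hN u y x hx hpe
end

section
/- (Proposition 2.) Let (u_{[0,t−1]}, y_{[0,t−1]}) be input-output data with u(s) ∈ ℝ^m, y(s) ∈ ℝ^p and u_{[0,t−1]} ≠ 0. Then ℓ_min,t = q_t and n_min,t = Σ_{i=0}^{ℓ_min,t} δ_{i,t}. -/
/-!
The proof rests on the spaces `leadSpace u y t k` of vectors `η` such that `η · y(k + ·)` is a
combination of the rows of `G_{k,t}`, i.e. of leading output coefficients of the difference
equations of order `k` satisfied by the data. They increase with `k`, and `δ_{k,t}` is the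
codimension of the `k`-th one.

Lower bounds. If a system explains the data, then each `y(c + r)` is `C A^r x(c)` plus a fixed
combination of `u(c), …, u(c + r)`. Hence a linear dependence of `η C A^k` on the rows of `Ω_{k-1}`
yields a relation with leading coefficient `η`, so `δ_{k,t} ≤ rank Ω_k - rank Ω_{k-1}`
(`delta_le`). At `k` equal to the lag this gives `δ_{k,t} = 0`, so the lag is at least `q_t`;
summing gives `∑ δ_{i,t} ≤ rank Ω ≤ n` (`sum_delta_le`).

Attainment. Since `δ_{q,t} = 0` for `q = q_t`, the flag of leading coefficients reaches all of
`ℝ^p` at step `q`. A basis `(e_i)` adapted to the flag (`exists_adapted_basis`) provides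
orders `μ_i ≤ q` with `∑ μ_i = ∑_{k<q} δ_{k,t}` and one relation of order `μ_i` expressing
`e_i · y(s)` through earlier outputs and present and earlier inputs. These equations are solved for
the current output, so they have a realization in observer canonical form with `∑ μ_i` states whose
state is determined by `q` consecutive outputs (`exists_observer_form`). It explains the data: the
outputs are first extended beyond time `t` by the equations themselves, and the state is then
read off from the extended output sequence.
-/

open Matrix

open Module Submodule

/-! ### Row spaces and ranks -/

theorem finrank_comap_add_finrank_sup {V W : Type*} [AddCommGroup V] [Module ℝ V]
    [FiniteDimensional ℝ V] [AddCommGroup W] [Module ℝ W] [FiniteDimensional ℝ W]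
    (f : V →ₗ[ℝ] W) (G : Submodule ℝ W) :
    finrank ℝ (G.comap f) + finrank ℝ (G ⊔ LinearMap.range f : Submodule ℝ W) =
      finrank ℝ V + finrank ℝ G := by
  have h1 := Submodule.finrank_sup_add_finrank_inf_eq G (LinearMap.range f)
  have h2 := LinearMap.finrank_range_add_finrank_ker f
  have h3 := LinearMap.finrank_range_add_finrank_ker (f.domRestrict (G.comap f))
  rw [LinearMap.range_domRestrict, LinearMap.ker_domRestrict, Submodule.map_comap_eq,
    inf_comm] at h3
  have hle : LinearMap.ker f ≤ G.comap f := fun x hx => by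
    rw [LinearMap.mem_ker] at hx
    simp [hx]
  rw [(Submodule.comapSubtypeEquivOfLe hle).finrank_eq] at h3
  omega

/-- The row space of a matrix. -/
def rowSpan {a c : Type*} (M : Matrix a c ℝ) : Submodule ℝ (c → ℝ) :=
  span ℝ (Set.range M.row)

theorem range_vecMulLinear_eq {a c : Type*} [Fintype a] [DecidableEq a] (M : Matrix a c ℝ) :
    LinearMap.range M.vecMulLinear = rowSpan M := by
  exact _root_.range_vecMulLinear M

theorem row_mem_rowSpan {a c : Type*} (M : Matrix a c ℝ) (i : a) : M i ∈ rowSpan M :=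
  subset_span ⟨i, rfl⟩

/-- If the rows of `M'` are those of `M` and `N` together, then `rank M' - rank M` is the codimension
of the space of row combinations of `N` that lie in the row space of `M`. -/
theorem finrank_comap_rowSpan {a a' b c : Type*} [Fintype a] [Fintype a'] [Fintype b]
    [DecidableEq b] [Fintype c] (M : Matrix a c ℝ) (M' : Matrix a' c ℝ) (N : Matrix b c ℝ)
    (h : rowSpan M' = rowSpan M ⊔ rowSpan N) :
    finrank ℝ ((rowSpan M).comap N.vecMulLinear) + M'.rank = Fintype.card b + M.rank := by
  have := finrank_comap_add_finrank_sup N.vecMulLinear (rowSpan M)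
  rw [range_vecMulLinear_eq, ← h] at this
  rw [Matrix.rank_eq_finrank_span_row, Matrix.rank_eq_finrank_span_row]
  rw [Module.finrank_fintype_fun_eq_card] at this
  exact this

/-! ### Leading coefficients of the relations satisfied by the data -/

section Data

variable {m p : ℕ} (u : ℕ → Fin m → ℝ) (y : ℕ → Fin p → ℝ)

/-- The last block row `y_{[k,t-1]}` of outputs of `H_{k,t}`. -/
def lastRow (k t : ℕ) : Matrix (Fin p) (Fin (t - k)) ℝ :=
  Matrix.of fun i c => y (k + c) i

/-- Coefficient vectors `η` for which `η · y(k + ·)` is a linear combination of the rows of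
`G_{k,t}`: the leading output coefficients of the degree-`k` relations satisfied by the data. -/
def leadSpace (t k : ℕ) : Submodule ℝ (Fin p → ℝ) :=
  (rowSpan (Gkt u y k t)).comap (lastRow y k t).vecMulLinear

theorem rowSpan_Hkt (t k : ℕ) :
    rowSpan (Hkt u y k t) = rowSpan (Gkt u y k t) ⊔ rowSpan (lastRow y k t) := by
  apply le_antisymm
  · refine span_le.2 ?_
    rintro _ ⟨(⟨r, i⟩ | ⟨r, i⟩), rfl⟩
    · rcases Nat.lt_or_ge r.1 k with h | h
      · exact mem_sup_left (row_mem_rowSpan (Gkt u y k t) (Sum.inl (⟨r, h⟩, i)))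
      · have hr : r.1 = k := by omega
        apply mem_sup_right
        have := row_mem_rowSpan (lastRow y k t) i
        convert this using 1
        ext c
        simp [Hkt, hankel, lastRow, Matrix.row, hr]
    · exact mem_sup_left (row_mem_rowSpan (Gkt u y k t) (Sum.inr (r, i)))
  · refine sup_le (span_le.2 ?_) (span_le.2 ?_)
    · rintro _ ⟨(⟨r, i⟩ | ⟨r, i⟩), rfl⟩
      · exact row_mem_rowSpan (Hkt u y k t) (Sum.inl (r.castSucc, i))
      · exact row_mem_rowSpan (Hkt u y k t) (Sum.inr (r, i))
    · rintro _ ⟨i, rfl⟩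
      exact row_mem_rowSpan (Hkt u y k t) (Sum.inl (Fin.last k, i))

/-- `δ_{k,t}` is the codimension of the space of leading output coefficients. -/
theorem finrank_leadSpace (t k : ℕ) :
    finrank ℝ (leadSpace u y t k) + deltaKT u y k t = p := by
  have h := finrank_comap_rowSpan _ _ _ (rowSpan_Hkt u y t k)
  have h' : finrank ℝ (leadSpace u y t k) ≤ p := by
    simpa using Submodule.finrank_le (leadSpace u y t k)
  rw [Fintype.card_fin] at h
  unfold deltaKT
  unfold leadSpace at *
  omega

end Data

/-! ### Lower bounds from the observability matrices -/

section Obs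

variable {m p : ℕ} (sys : LinSys m p)

theorem rowSpan_obsMat (k : ℕ) :
    rowSpan (obsMat sys (k + 1)) = rowSpan (obsMat sys k) ⊔ rowSpan (sys.C * sys.A ^ k) := by
  apply le_antisymm
  · refine span_le.2 ?_
    rintro _ ⟨⟨r, i⟩, rfl⟩
    rcases Nat.lt_or_ge r.1 k with h | h
    · exact mem_sup_left (row_mem_rowSpan (obsMat sys k) (⟨r, h⟩, i))
    · have hr : r.1 = k := by omega
      apply mem_sup_right
      have := row_mem_rowSpan (sys.C * sys.A ^ k) i
      convert this using 1
      ext c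
      simp [obsMat, Matrix.row, hr]
  · refine sup_le (span_le.2 ?_) (span_le.2 ?_)
    · rintro _ ⟨⟨r, i⟩, rfl⟩
      exact row_mem_rowSpan (obsMat sys (k + 1)) (r.castSucc, i)
    · rintro _ ⟨i, rfl⟩
      exact row_mem_rowSpan (obsMat sys (k + 1)) (Fin.last k, i)

theorem rank_obsMat_mono (k : ℕ) : (obsMat sys k).rank ≤ (obsMat sys (k + 1)).rank := by
  rw [Matrix.rank_eq_finrank_span_row, Matrix.rank_eq_finrank_span_row]
  apply Submodule.finrank_mono
  have := rowSpan_obsMat sys k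
  exact le_sup_left.trans this.ge

theorem rank_obsMat_le (k : ℕ) : (obsMat sys k).rank ≤ sys.n := by
  simpa using (obsMat sys k).rank_le_card_width

/-- The infimum defining the lag is attained, since the ranks of the observability matrices are
bounded by the number of states. -/
theorem lag_mem : (obsMat sys (lag sys + 1)).rank = (obsMat sys (lag sys)).rank := by
  refine Nat.sInf_mem (s := {k | (obsMat sys (k + 1)).rank = (obsMat sys k).rank}) ?_
  by_contra hne
  have hlt : ∀ k, k ≤ (obsMat sys k).rank := by
    intro k
    induction k with
    | zero => simp
    | succ k ih =>
      have h1 := rank_obsMat_mono sys k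
      have h2 : (obsMat sys (k + 1)).rank ≠ (obsMat sys k).rank := fun h => hne ⟨k, h⟩
      omega
  have h1 := hlt (sys.n + 1)
  have h2 := rank_obsMat_le sys (sys.n + 1)
  omega

variable {sys} {u : ℕ → Fin m → ℝ} {y : ℕ → Fin p → ℝ} {x : ℕ → Fin sys.n → ℝ} {t : ℕ}

/-- Over a window of length `k+1`, every functional of the state increment
`x(r + c) - A^r x(c)` is a combination of the input rows. -/
theorem state_increment_mem (hx : ExplainsWith sys t u y x) (k r : ℕ) (hr : r ≤ k)
    (ζ : Fin sys.n → ℝ) :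
    (fun c : Fin (t - k) => ζ ⬝ᵥ x (r + c) - ζ ⬝ᵥ ((sys.A ^ r) *ᵥ x c)) ∈
      rowSpan (hankel u (k + 1) (t - k)) := by
  induction r generalizing ζ with
  | zero => simp [Pi.zero_def.symm]
  | succ r ih =>
    have h1 := ih (by omega) (ζ ᵥ* sys.A)
    have h2 : (∑ i, (ζ ᵥ* sys.B) i •
        (hankel u (k + 1) (t - k)) (⟨r, by omega⟩, i)) ∈ rowSpan (hankel u (k + 1) (t - k)) :=
      Submodule.sum_mem _ fun i _ => Submodule.smul_mem _ _ (row_mem_rowSpan _ _)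
    convert Submodule.add_mem _ h1 h2 using 1
    ext c
    have hs := (hx (r + c) (by omega)).1
    rw [show r + 1 + (c : ℕ) = r + c + 1 by omega, hs]
    simp only [Pi.add_apply, Finset.sum_apply, Pi.smul_apply, smul_eq_mul, hankel, Matrix.of_apply]
    rw [dotProduct_add, dotProduct_mulVec, dotProduct_mulVec ζ sys.B, pow_succ',
      ← Matrix.mulVec_mulVec, dotProduct_mulVec ζ sys.A]
    simp only [dotProduct]
    ring

/-- Over a window of length `k+1`, every functional of `y(r + c) - C A^r x(c)` is a combination of
the input rows. -/
theorem output_increment_mem (hx : ExplainsWith sys t u y x) (k r : ℕ) (hr : r ≤ k)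
    (ζ : Fin p → ℝ) :
    (fun c : Fin (t - k) => ζ ⬝ᵥ y (r + c) - (ζ ᵥ* (sys.C * sys.A ^ r)) ⬝ᵥ x c) ∈
      rowSpan (hankel u (k + 1) (t - k)) := by
  have h1 := state_increment_mem hx k r hr (ζ ᵥ* sys.C)
  have h2 : (∑ i, (ζ ᵥ* sys.D) i •
      (hankel u (k + 1) (t - k)) (⟨r, by omega⟩, i)) ∈ rowSpan (hankel u (k + 1) (t - k)) :=
    Submodule.sum_mem _ fun i _ => Submodule.smul_mem _ _ (row_mem_rowSpan _ _)
  convert Submodule.add_mem _ h1 h2 using 1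
  ext c
  have hs := (hx (r + c) (by omega)).2
  rw [hs]
  simp only [Pi.add_apply, Finset.sum_apply, Pi.smul_apply, smul_eq_mul, hankel, Matrix.of_apply]
  rw [dotProduct_add, dotProduct_mulVec, dotProduct_mulVec ζ sys.D, dotProduct_mulVec _ (sys.A ^ r),
    ← Matrix.vecMul_vecMul]
  simp only [dotProduct]
  ring

/-- If `η C A^k` is in the row space of `C, …, C A^(k-1)`, then `η` is the leading coefficient of a
degree-`k` relation satisfied by the data. -/
theorem obs_le_leadSpace (hx : ExplainsWith sys t u y x) (k : ℕ) :
    (rowSpan (obsMat sys k)).comap (sys.C * sys.A ^ k).vecMulLinear ≤ leadSpace u y t k := by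
  intro η hη
  have hU : rowSpan (hankel u (k + 1) (t - k)) ≤ rowSpan (Gkt u y k t) := by
    refine span_le.2 ?_
    rintro _ ⟨i, rfl⟩
    exact row_mem_rowSpan (Gkt u y k t) (Sum.inr i)
  -- the map sending a state functional to its values along the state sequence
  let X : Matrix (Fin sys.n) (Fin (t - k)) ℝ := Matrix.of fun j c => x c j
  have hX : ∀ ζ c, X.vecMulLinear ζ c = ζ ⬝ᵥ x c := fun ζ c => rfl
  have hmap : rowSpan (obsMat sys k) ≤ (rowSpan (Gkt u y k t)).comap X.vecMulLinear := by
    refine span_le.2 ?_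
    rintro _ ⟨⟨r, i⟩, rfl⟩
    have h1 := hU (output_increment_mem hx k r r.2.le (Pi.single i 1))
    have h2 := row_mem_rowSpan (Gkt u y k t) (Sum.inl (r, i))
    have h3 := Submodule.sub_mem _ h2 h1
    simp only [Submodule.comap_coe, Set.mem_preimage, SetLike.mem_coe]
    convert h3 using 1
    ext c
    rw [hX]
    simp [Gkt, hankel, Matrix.row, obsMat]
    rfl
  have h1 := hU (output_increment_mem hx k k le_rfl η)
  have h2 := hmap hη
  have h3 := Submodule.add_mem _ h1 h2
  simp only [leadSpace, Submodule.mem_comap]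
  convert h3 using 1
  ext c
  rw [Pi.add_apply, hX]
  simp
  rfl

/-- `δ_{k,t} ≤ rank Ω_k - rank Ω_{k-1}` for every explaining system. -/
theorem delta_le (hx : ExplainsWith sys t u y x) (k : ℕ) :
    (obsMat sys k).rank + deltaKT u y k t ≤ (obsMat sys (k + 1)).rank := by
  have h1 := Submodule.finrank_mono (obs_le_leadSpace hx k)
  have h2 := finrank_leadSpace u y t k
  have h3 := finrank_comap_rowSpan _ _ _ (rowSpan_obsMat sys k)
  rw [Fintype.card_fin] at h3
  omega

theorem sum_delta_le (hx : ExplainsWith sys t u y x) (K : ℕ) :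
    ∑ i ∈ Finset.range K, deltaKT u y i t ≤ (obsMat sys K).rank := by
  induction K with
  | zero => simp
  | succ K ih =>
    rw [Finset.sum_range_succ]
    have := delta_le hx K
    omega

end Obs

/-! ### Adapted bases and coordinate-free systems -/

/-- A basis of `L k` adapted to the flag `L 0 ≤ L 1 ≤ …`: the basis vector `v` lies in `L (μ v)`,
and `∑ μ v = ∑_{j<k} (dim L k - dim L j)`, written without subtraction. -/
theorem exists_adapted_basis {V : Type*} [AddCommGroup V] [Module ℝ V] [FiniteDimensional ℝ V]
    (L : ℕ → Submodule ℝ V) (hL : Monotone L) (k : ℕ) :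
    ∃ (s : Finset V) (μ : V → ℕ), LinearIndepOn ℝ id (s : Set V) ∧ span ℝ (s : Set V) = L k ∧
      (∀ v ∈ s, μ v ≤ k ∧ v ∈ L (μ v)) ∧
      ∑ v ∈ s, μ v + ∑ j ∈ Finset.range k, finrank ℝ (L j) = k * finrank ℝ (L k) := by
  classical
  induction k with
  | zero =>
    obtain ⟨b, hb, -, hspan, hli⟩ := exists_linearIndepOn_extension (K := ℝ) (v := (id : V → V))
      (s := ∅) (t := L 0) (linearIndepOn_empty _ _) (Set.empty_subset _)
    have hfin : b.Finite := hli.setFinite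
    refine ⟨hfin.toFinset, fun _ => 0, by simpa using hli, ?_, ?_, by simp⟩
    · rw [hfin.coe_toFinset]
      exact le_antisymm (span_le.2 hb) (by simpa using hspan)
    · intro v hv
      exact ⟨le_rfl, hb (by simpa using hv)⟩
  | succ k ih =>
    obtain ⟨s, μ, hsli, hs, hμ, hsum⟩ := ih
    have hsL : (s : Set V) ⊆ L (k + 1) :=
      subset_span.trans (hs.le.trans (hL (Nat.le_succ k)))
    obtain ⟨b, hb, hsb, hspan, hli⟩ := exists_linearIndepOn_extension (K := ℝ)
      (v := (id : V → V)) (s := s) (t := L (k + 1)) hsli hsL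
    have hfin : b.Finite := hli.setFinite
    lift b to Finset V using hfin
    have hsb' : s ⊆ b := by exact_mod_cast hsb
    have hbspan : span ℝ (b : Set V) = L (k + 1) :=
      le_antisymm (span_le.2 hb) (by simpa using hspan)
    refine ⟨b, fun v => if v ∈ s then μ v else k + 1, hli, hbspan, ?_, ?_⟩
    · intro v hv
      by_cases h : v ∈ s
      · simp only [h, if_true]
        exact ⟨(hμ v h).1.trans (Nat.le_succ k), (hμ v h).2⟩
      · simp only [h, if_false]
        exact ⟨le_rfl, hb hv⟩
    · have hc : finrank ℝ (L k) = s.card := by rw [← hs, finrank_span_finset_eq_card hsli]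
      have hc' : finrank ℝ (L (k + 1)) = b.card := by
        rw [← hbspan, finrank_span_finset_eq_card hli]
      have hcard := Finset.card_sdiff_add_card_eq_card hsb'
      have h1 : ∑ v ∈ s, (if v ∈ s then μ v else k + 1) = ∑ v ∈ s, μ v :=
        Finset.sum_congr rfl fun v hv => if_pos hv
      have h2 : ∑ v ∈ b \ s, (if v ∈ s then μ v else k + 1) = (b \ s).card * (k + 1) := by
        rw [Finset.sum_congr rfl fun v hv => if_neg (Finset.mem_sdiff.1 hv).2]
        simp
      rw [← Finset.sum_sdiff hsb', h1, h2, Finset.sum_range_succ, hc, hc', ← hcard]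
      rw [hc] at hsum
      linarith

/-- A coordinate-free system on a finite-dimensional state space `X` gives a matrix system with
`dim X` states; trajectories and the kernel condition for observability transfer. -/
theorem exists_linSys {m p : ℕ} {X : Type*} [AddCommGroup X] [Module ℝ X] [FiniteDimensional ℝ X]
    (𝒜 : X →ₗ[ℝ] X) (ℬ : (Fin m → ℝ) →ₗ[ℝ] X) (𝒞 : X →ₗ[ℝ] (Fin p → ℝ))
    (𝒟 : (Fin m → ℝ) →ₗ[ℝ] (Fin p → ℝ)) :
    ∃ sys : LinSys m p, sys.n = finrank ℝ X ∧
      (∀ (t : ℕ) (u : ℕ → Fin m → ℝ) (y : ℕ → Fin p → ℝ) (x : ℕ → X),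
        (∀ s < t, x (s + 1) = 𝒜 (x s) + ℬ (u s) ∧ y s = 𝒞 (x s) + 𝒟 (u s)) →
        Explains sys t u y) ∧
      (∀ K, (∀ ξ : X, (∀ r < K, 𝒞 ((𝒜 ^ r) ξ) = 0) → ξ = 0) →
        (obsMat sys K).rank = sys.n) := by
  let φ : X ≃ₗ[ℝ] (Fin (finrank ℝ X) → ℝ) := (finBasis ℝ X).equivFun
  let sys : LinSys m p :=
    { n := finrank ℝ X
      A := LinearMap.toMatrix' (φ.toLinearMap ∘ₗ 𝒜 ∘ₗ φ.symm.toLinearMap)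
      B := LinearMap.toMatrix' (φ.toLinearMap ∘ₗ ℬ)
      C := LinearMap.toMatrix' (𝒞 ∘ₗ φ.symm.toLinearMap)
      D := LinearMap.toMatrix' 𝒟 }
  have hA : ∀ ξ, sys.A *ᵥ (φ ξ) = φ (𝒜 ξ) := fun ξ => by
    simp only [sys, LinearMap.toMatrix'_mulVec]
    simp
  have hC : ∀ ξ, sys.C *ᵥ (φ ξ) = 𝒞 ξ := fun ξ => by
    simp only [sys, LinearMap.toMatrix'_mulVec]
    simp
  have hAr : ∀ (r : ℕ) ξ, (sys.A ^ r) *ᵥ (φ ξ) = φ ((𝒜 ^ r) ξ) := by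
    intro r
    induction r with
    | zero => simp
    | succ r ih =>
      intro ξ
      rw [pow_succ, ← Matrix.mulVec_mulVec, hA, ih, pow_succ, Module.End.mul_apply]
  refine ⟨sys, rfl, ?_, ?_⟩
  · intro t u y x hx
    refine ⟨fun s => φ (x s), fun s hs => ⟨?_, ?_⟩⟩
    · beta_reduce
      rw [(hx s hs).1, hA, map_add]
      simp only [sys, LinearMap.toMatrix'_mulVec]
      simp
    · beta_reduce
      rw [(hx s hs).2, hC]
      simp only [sys, LinearMap.toMatrix'_mulVec]
  · intro K hK
    have hinj : LinearMap.ker (obsMat sys K).mulVecLin = ⊥ := by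
      refine (Submodule.eq_bot_iff _).2 fun v hv => ?_
      obtain ⟨ξ, rfl⟩ := φ.surjective v
      rw [hK ξ, map_zero]
      intro r hr
      rw [← hC, ← hAr, Matrix.mulVec_mulVec]
      ext i
      exact congrFun (LinearMap.mem_ker.1 hv) (⟨r, hr⟩, i)
    have := LinearMap.finrank_range_add_finrank_ker (obsMat sys K).mulVecLin
    rw [hinj, finrank_bot] at this
    simpa [Matrix.rank] using this

/-! ### Observer canonical form -/

section Realization

variable {m p : ℕ} {ι : Type*} (μ : ι → ℕ)
  (Ψ : (Fin p → ℝ) ≃ₗ[ℝ] (ι → ℝ)) (α : ι → ℕ → (Fin p → ℝ) →ₗ[ℝ] ℝ)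
  (β : ι → ℕ → (Fin m → ℝ) →ₗ[ℝ] ℝ) (d : ι → (Fin m → ℝ) →ₗ[ℝ] ℝ)

/-- The right-hand side of the `i`-th difference equation
`Ψ(y(s))_i = ∑_{r<μ i} (α_{i,r} y(s-1-r) + β_{i,r} u(s-1-r)) + d_i u(s)`, which is only
imposed for `s ≥ μ i`, where no subtraction is truncated. -/
def relRHS (u : ℕ → Fin m → ℝ) (y : ℕ → Fin p → ℝ) (s : ℕ) (i : ι) : ℝ :=
  ∑ r ∈ Finset.range (μ i), (α i r (y (s - 1 - r)) + β i r (u (s - 1 - r))) + d i (u s)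

/-- The output sequence which agrees with `y` before time `t` and is continued from time `t` on
by solving the difference equations for the current output. -/
noncomputable def extendOut (u : ℕ → Fin m → ℝ) (y : ℕ → Fin p → ℝ) (t : ℕ) : ℕ → Fin p → ℝ
  | s => if s < t then y s else Ψ.symm fun i =>
      ∑ r ∈ Finset.range (μ i),
        (α i r (if _h : s - 1 - r < s then extendOut u y t (s - 1 - r) else 0) +
          β i r (u (s - 1 - r))) + d i (u s)
  termination_by s => s

/-- Outputs that satisfy the difference equations on `[0, t-1]` extend to outputs that satisfy them
for all times. -/
theorem exists_extension (u : ℕ → Fin m → ℝ) (y : ℕ → Fin p → ℝ) (t : ℕ) (ht : 0 < t)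
    (hrel : ∀ s < t, ∀ i, μ i ≤ s → Ψ (y s) i = relRHS μ α β d u y s i) :
    ∃ y' : ℕ → Fin p → ℝ, (∀ s < t, y' s = y s) ∧
      ∀ s i, μ i ≤ s → Ψ (y' s) i = relRHS μ α β d u y' s i := by
  have hlt : ∀ s < t, extendOut μ Ψ α β d u y t s = y s := fun s hs => by
    rw [extendOut, if_pos hs]
  refine ⟨extendOut μ Ψ α β d u y t, hlt, fun s i hi => ?_⟩
  by_cases hs : s < t
  · rw [hlt s hs, hrel s hs i hi]
    unfold relRHS
    congr 1
    refine Finset.sum_congr rfl fun r hr => ?_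
    rw [hlt _ (by omega)]
  · rw [extendOut, if_neg hs, LinearEquiv.apply_symm_apply]
    unfold relRHS
    congr 1
    refine Finset.sum_congr rfl fun r hr => ?_
    rw [dif_pos (by omega)]

/-- The coordinate `ξ_{i,k}` of a state of the observer form, with `ξ_{i,k} = 0` for
`k ≥ μ i`. -/
def stateCoord (i : ι) (k : ℕ) : ((Σ i, Fin (μ i)) → ℝ) →ₗ[ℝ] ℝ :=
  if h : k < μ i then LinearMap.proj ⟨i, ⟨k, h⟩⟩ else 0

theorem stateCoord_of_lt {i : ι} {k : ℕ} (h : k < μ i) (ξ : (Σ i, Fin (μ i)) → ℝ) :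
    stateCoord μ i k ξ = ξ ⟨i, ⟨k, h⟩⟩ := by
  simp [stateCoord, h]

theorem stateCoord_of_ge {i : ι} {k : ℕ} (h : μ i ≤ k) (ξ : (Σ i, Fin (μ i)) → ℝ) :
    stateCoord μ i k ξ = 0 := by
  simp [stateCoord, not_lt.2 h]

/-- Observer canonical form of the difference equations with right-hand sides `relRHS`. With states
`ξ_{i,k}`, `k < μ i`, the dynamics are `ξ_{i,k}(s+1) = ξ_{i,k+1}(s) + α_{i,k} y(s) + β_{i,k} u(s)`
and the output is `Ψ(y(s))_i = ξ_{i,0}(s) + d_i u(s)`. The state is determined by the first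
`max μ` outputs of its free response. -/
theorem exists_observer_form [Fintype ι] (q : ℕ) (hμ : ∀ i, μ i ≤ q) :
    ∃ sys : LinSys m p, sys.n = ∑ i, μ i ∧ (obsMat sys q).rank = sys.n ∧
      ∀ (t : ℕ) (u : ℕ → Fin m → ℝ) (y : ℕ → Fin p → ℝ), 0 < t →
        (∀ s < t, ∀ i, μ i ≤ s → Ψ (y s) i = relRHS μ α β d u y s i) → Explains sys t u y := by
  let 𝒞 : ((Σ i, Fin (μ i)) → ℝ) →ₗ[ℝ] (Fin p → ℝ) :=
    Ψ.symm.toLinearMap ∘ₗ LinearMap.pi fun i => stateCoord μ i 0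
  let 𝒟 : (Fin m → ℝ) →ₗ[ℝ] (Fin p → ℝ) := Ψ.symm.toLinearMap ∘ₗ LinearMap.pi d
  let 𝒜 : ((Σ i, Fin (μ i)) → ℝ) →ₗ[ℝ] ((Σ i, Fin (μ i)) → ℝ) :=
    LinearMap.pi fun j => stateCoord μ j.1 (j.2 + 1) + α j.1 j.2 ∘ₗ 𝒞
  let ℬ : (Fin m → ℝ) →ₗ[ℝ] ((Σ i, Fin (μ i)) → ℝ) :=
    LinearMap.pi fun j => α j.1 j.2 ∘ₗ 𝒟 + β j.1 j.2
  have hC : ∀ ξ i, Ψ (𝒞 ξ) i = stateCoord μ i 0 ξ := fun ξ i => by simp [𝒞]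
  have hD : ∀ v i, Ψ (𝒟 v) i = d i v := fun v i => by simp [𝒟]
  have hA : ∀ ξ (j : Σ i, Fin (μ i)),
      𝒜 ξ j = stateCoord μ j.1 (j.2 + 1) ξ + α j.1 j.2 (𝒞 ξ) := fun ξ j => rfl
  have hB : ∀ v (j : Σ i, Fin (μ i)), ℬ v j = α j.1 j.2 (𝒟 v) + β j.1 j.2 v := fun v j => rfl
  obtain ⟨sys, hn, hexp, hobs⟩ := exists_linSys 𝒜 ℬ 𝒞 𝒟
  refine ⟨sys, by simp [hn], hobs q ?_, ?_⟩
  · intro ξ hξ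
    -- a vanishing output turns the dynamics into the shift `ξ_{i,k}(r+1) = ξ_{i,k+1}(r)`
    have key : ∀ k r i, r + k < q → stateCoord μ i k ((𝒜 ^ r) ξ) = 0 := by
      intro k
      induction k with
      | zero =>
        intro r i hr
        rw [← hC, hξ r (by omega)]
        simp
      | succ k ih =>
        intro r i hr
        rcases Nat.lt_or_ge (k + 1) (μ i) with h | h
        · have h1 := ih (r + 1) i (by omega)
          rw [stateCoord_of_lt μ (by omega : k < μ i), pow_succ', Module.End.mul_apply, hA,
            hξ r (by omega), map_zero, add_zero] at h1
          exact h1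
        · exact stateCoord_of_ge μ h _
    ext ⟨i, k⟩
    have := key k 0 i (by have := k.2; have := hμ i; omega)
    rwa [pow_zero, Module.End.one_apply, stateCoord_of_lt μ k.2] at this
  · intro t u y ht hrel
    obtain ⟨y', hy', hrel'⟩ := exists_extension μ Ψ α β d u y t ht hrel
    -- the value of `ξ_{i,k}(s)` read off from the outputs `y'(s), …, y'(s+k)`
    let X : ℕ → ι → ℕ → ℝ := fun s i k => Ψ (y' (s + k)) i - d i (u (s + k)) -
      ∑ r ∈ Finset.range k, (α i r (y' (s + k - 1 - r)) + β i r (u (s + k - 1 - r)))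
    let x : ℕ → ((Σ i, Fin (μ i)) → ℝ) := fun s j => X s j.1 j.2
    have hx : ∀ s i k, k ≤ μ i → stateCoord μ i k (x s) = X s i k := by
      intro s i k hk
      rcases hk.lt_or_eq with h | h
      · rw [stateCoord_of_lt μ h]
      · rw [stateCoord_of_ge μ h.ge]
        simp only [X, h]
        rw [hrel' (s + μ i) i (by omega), relRHS]
        ring
    have hout : ∀ s, y' s = 𝒞 (x s) + 𝒟 (u s) := by
      intro s
      apply Ψ.injective
      ext i
      rw [map_add, Pi.add_apply, hC, hD, hx s i 0 (Nat.zero_le _)]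
      simp [X]
    refine hexp t u y x fun s hs => ⟨?_, ?_⟩
    · ext ⟨i, k⟩
      rw [Pi.add_apply, hA, hB, hx s i (k + 1) k.2]
      have hα : α i k (y' s) = α i k (𝒞 (x s)) + α i k (𝒟 (u s)) := by
        rw [hout s, map_add]
      simp only [x, X]
      rw [Finset.sum_range_succ, show s + 1 + (k : ℕ) = s + (k + 1) by omega,
        show s + ((k : ℕ) + 1) - 1 - k = s by omega, hα]
      ring
    · rw [← hy' s hs, hout]

end Realization

/-! ### Relations satisfied by the data and the optimal system -/

section Final

variable {m p : ℕ} (u : ℕ → Fin m → ℝ) (y : ℕ → Fin p → ℝ)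

theorem vecMul_Gkt (t k : ℕ) (v : (Fin k × Fin p) ⊕ (Fin (k + 1) × Fin m) → ℝ)
    (c : Fin (t - k)) :
    (v ᵥ* Gkt u y k t) c =
      ∑ r : Fin k, (fun i => v (Sum.inl (r, i))) ⬝ᵥ y (r + c) +
      ∑ r : Fin (k + 1), (fun i => v (Sum.inr (r, i))) ⬝ᵥ u (r + c) := by
  simp only [Matrix.vecMul, dotProduct, Fintype.sum_sum_type, Fintype.sum_prod_type]
  rfl

/-- An element of the leading-coefficient space, spelled out as a difference equation satisfied by
the data. -/
theorem exists_relation {t k : ℕ} {η : Fin p → ℝ} (h : η ∈ leadSpace u y t k) :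
    ∃ (α : ℕ → (Fin p → ℝ) →ₗ[ℝ] ℝ) (β : ℕ → (Fin m → ℝ) →ₗ[ℝ] ℝ) (d : (Fin m → ℝ) →ₗ[ℝ] ℝ),
      ∀ s < t, k ≤ s → η ⬝ᵥ y s =
        ∑ r ∈ Finset.range k, (α r (y (s - 1 - r)) + β r (u (s - 1 - r))) + d (u s) := by
  rw [leadSpace, Submodule.mem_comap, ← range_vecMulLinear_eq] at h
  obtain ⟨v, hv⟩ := h
  let a : ℕ → (Fin p → ℝ) →ₗ[ℝ] ℝ := fun r =>
    if h : r < k then dotProductBilin ℝ ℝ (fun i => v (Sum.inl (⟨r, h⟩, i))) else 0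
  let b : ℕ → (Fin m → ℝ) →ₗ[ℝ] ℝ := fun r =>
    if h : r < k + 1 then dotProductBilin ℝ ℝ (fun i => v (Sum.inr (⟨r, h⟩, i))) else 0
  refine ⟨fun r => a (k - 1 - r), fun r => b (k - 1 - r), b k, fun s hs hks => ?_⟩
  have h1 := congrFun hv ⟨s - k, by omega⟩
  rw [Matrix.vecMulLinear_apply, vecMul_Gkt] at h1
  have h2 : (lastRow y k t).vecMulLinear η ⟨s - k, by omega⟩ = η ⬝ᵥ y s := by
    have : k + (s - k) = s := by omega
    simp [Matrix.vecMul, lastRow, dotProduct, this]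
  rw [h2] at h1
  have h3 : ∑ r ∈ Finset.range k, (a (k - 1 - r) (y (s - 1 - r)) + b (k - 1 - r) (u (s - 1 - r))) =
      ∑ r ∈ Finset.range k, (a r (y (r + (s - k))) + b r (u (r + (s - k)))) := by
    rw [← Finset.sum_range_reflect]
    refine Finset.sum_congr rfl fun r hr => ?_
    rw [Finset.mem_range] at hr
    rw [show k - 1 - (k - 1 - r) = r by omega, show s - 1 - (k - 1 - r) = r + (s - k) by omega]
  rw [← h1, h3, Finset.sum_add_distrib, add_assoc]
  congr 1
  · rw [Finset.sum_range]
    refine Finset.sum_congr rfl fun r _ => ?_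
    simp [a, dotProductBilin]
  · have : u s = u (k + (s - k)) := by rw [show k + (s - k) = s by omega]
    rw [this, ← Finset.sum_range_succ (fun r => b r (u (r + (s - k)))), Finset.sum_range]
    refine Finset.sum_congr rfl fun r _ => ?_
    simp only [b]
    rw [dif_pos r.2]
    rfl

/-- A relation of degree `k` with leading output coefficient `η`, delayed by one step, is a relation
of degree `k + 1` with the same leading coefficient. -/
theorem leadSpace_mono (t : ℕ) : Monotone (leadSpace u y t) := by
  refine monotone_nat_of_le_succ fun k η h => ?_
  -- restricting a relation to the columns `1, 2, …` shifts it by one step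
  let σ : (Fin (t - k) → ℝ) →ₗ[ℝ] (Fin (t - (k + 1)) → ℝ) :=
    LinearMap.funLeft ℝ ℝ fun c => ⟨c + 1, by omega⟩
  have hσ : rowSpan (Gkt u y k t) ≤ (rowSpan (Gkt u y (k + 1) t)).comap σ := by
    refine span_le.2 ?_
    rintro _ ⟨(⟨r, i⟩ | ⟨r, i⟩), rfl⟩
    · have := row_mem_rowSpan (Gkt u y (k + 1) t) (Sum.inl (r.succ, i))
      simp only [Submodule.comap_coe, Set.mem_preimage, SetLike.mem_coe]
      convert this using 1
      ext c
      simp only [σ, LinearMap.funLeft_apply, Gkt, hankel, Matrix.row, Matrix.fromRows_apply_inl,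
        Matrix.of_apply, Fin.val_succ]
      exact congrFun (congrArg y (by omega)) i
    · have := row_mem_rowSpan (Gkt u y (k + 1) t) (Sum.inr (r.succ, i))
      simp only [Submodule.comap_coe, Set.mem_preimage, SetLike.mem_coe]
      convert this using 1
      ext c
      simp only [σ, LinearMap.funLeft_apply, Gkt, hankel, Matrix.row, Matrix.fromRows_apply_inr,
        Matrix.of_apply, Fin.val_succ]
      exact congrFun (congrArg u (by omega)) i
  have h1 := hσ h
  rw [Submodule.mem_comap] at h1
  rw [leadSpace, Submodule.mem_comap]
  convert h1 using 1
  ext c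
  simp only [σ, LinearMap.funLeft_apply, Matrix.vecMulLinear_apply, Matrix.vecMul, dotProduct,
    lastRow, Matrix.of_apply]
  refine Finset.sum_congr rfl fun i _ => ?_
  exact congrArg (η i * ·) (congrFun (congrArg y (by omega)) i)

/-- `H_{t-1,t}` and `G_{t-1,t}` have a single column, and `G_{t-1,t} ≠ 0` because it contains the
input. -/
theorem delta_last {t : ℕ} (hu : ∃ s < t, u s ≠ 0) : deltaKT u y (t - 1) t = 0 := by
  obtain ⟨s, hs, hus⟩ := hu
  obtain ⟨i, hi⟩ := Function.ne_iff.1 hus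
  have htop : leadSpace u y t (t - 1) = ⊤ := by
    refine (Submodule.eq_top_iff'.2 fun η => ?_)
    rw [leadSpace, Submodule.mem_comap]
    set w := (lastRow y (t - 1) t).vecMulLinear η
    have h1 := row_mem_rowSpan (Gkt u y (t - 1) t) (Sum.inr (⟨s, by omega⟩, i))
    have h2 := Submodule.smul_mem _ (w ⟨0, by omega⟩ / u s i) h1
    convert h2 using 1
    ext c
    have hc : c = ⟨0, by omega⟩ := Fin.ext (by omega)
    subst hc
    simp only [Pi.smul_apply, Gkt, hankel, Matrix.fromRows_apply_inr, Matrix.of_apply, smul_eq_mul,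
      add_zero]
    exact (div_mul_cancel₀ _ hi).symm
  have := finrank_leadSpace u y t (t - 1)
  rw [htop, finrank_top] at this
  simpa using this

/-- Once `δ_q = 0`, some explaining system has lag at most `q` and exactly `∑_{i≤q} δ_i` states. -/
theorem exists_optimal {t : ℕ} (ht : 0 < t) (q : ℕ) (hq : deltaKT u y q t = 0) :
    ∃ sys : LinSys m p, Explains sys t u y ∧ lag sys ≤ q ∧
      sys.n = ∑ i ∈ Finset.range (q + 1), deltaKT u y i t := by
  obtain ⟨b, μ, hli, hspan, hμ, hsum⟩ :=
    exists_adapted_basis (leadSpace u y t) (leadSpace_mono u y t) q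
  have hfr : finrank ℝ (leadSpace u y t q) = p := by
    simpa [hq] using finrank_leadSpace u y t q
  have htop : leadSpace u y t q = ⊤ := Submodule.eq_top_of_finrank_eq (by simp [hfr])
  have hcard : b.card = p := by rw [← finrank_span_finset_eq_card hli, hspan, hfr]
  -- the outputs in the coordinates given by the adapted basis `b`
  let f : (Fin p → ℝ) →ₗ[ℝ] (b → ℝ) := LinearMap.pi fun i => dotProductBilin ℝ ℝ i.1
  have hf : ∀ z i, f z i = i.1 ⬝ᵥ z := fun z i => rfl
  have hinj : Function.Injective f := by
    rw [← LinearMap.ker_eq_bot, Submodule.eq_bot_iff]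
    intro z hz
    have hall : ∀ v ∈ span ℝ (b : Set (Fin p → ℝ)), v ⬝ᵥ z = 0 := by
      intro v hv
      induction hv using Submodule.span_induction with
      | mem v hv =>
        have := congrFun (LinearMap.mem_ker.1 hz) ⟨v, hv⟩
        rwa [hf] at this
      | zero => simp
      | add v w _ _ h1 h2 => rw [add_dotProduct, h1, h2, add_zero]
      | smul a v _ h => rw [smul_dotProduct, h, smul_zero]
    have := hall z (by rw [hspan, htop]; trivial)
    exact dotProduct_self_eq_zero.1 this
  let Ψ := LinearEquiv.ofInjectiveOfFinrankEq f hinj (by simp [hcard])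
  have hΨ : ∀ z i, Ψ z i = i.1 ⬝ᵥ z := fun z i => rfl
  have hrel := fun i : b => exists_relation u y (hμ i.1 i.2).2
  choose α β d hrel using hrel
  obtain ⟨sys, hn, hobs, hexp⟩ :=
    exists_observer_form (fun i : b => μ i) Ψ α β d q fun i => (hμ i.1 i.2).1
  refine ⟨sys, hexp t u y ht fun s hs i hi => ?_, ?_, ?_⟩
  · rw [hΨ]
    exact hrel i s hs hi
  · refine Nat.sInf_le ?_
    have h1 := rank_obsMat_mono sys q
    have h2 := rank_obsMat_le sys (q + 1)
    change (obsMat sys (q + 1)).rank = (obsMat sys q).rank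
    omega
  · have h1 : ∑ i : b, μ i = ∑ v ∈ b, μ v := Finset.sum_coe_sort b μ
    have h2 : ∑ j ∈ Finset.range q, finrank ℝ (leadSpace u y t j) +
        ∑ j ∈ Finset.range q, deltaKT u y j t = q * p := by
      rw [← Finset.sum_add_distrib, Finset.sum_congr rfl fun j _ => finrank_leadSpace u y t j]
      simp
    rw [hfr] at hsum
    rw [hn, h1, Finset.sum_range_succ, hq]
    omega

end Final

/-- **Proposition 2.** If `u_{[0,t-1]} ≠ 0` then `ℓ_min,t = q_t` and
`n_min,t = Σ_{i=0}^{ℓ_min,t} δ_{i,t}`. -/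
theorem lMin_eq_qT_and_nMin_eq_sum {m p : ℕ} (t : ℕ)
    (u : ℕ → Fin m → ℝ) (y : ℕ → Fin p → ℝ) (hu : ∃ s < t, u s ≠ 0) :
    lMin t u y = qT u y t ∧
    nMin t u y = ∑ i ∈ Finset.range (lMin t u y + 1), deltaKT u y i t := by
  have hlast := delta_last u y hu
  have ht : 0 < t := by
    obtain ⟨s, hs, -⟩ := hu
    omega
  have hqle : qT u y t ≤ t - 1 := Nat.sInf_le ⟨le_rfl, hlast⟩
  have hq : deltaKT u y (qT u y t) t = 0 :=
    (Nat.sInf_mem (s := {k | k ≤ t - 1 ∧ deltaKT u y k t = 0}) ⟨t - 1, le_rfl, hlast⟩).2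
  obtain ⟨sys, hexp, hlag, hn⟩ := exists_optimal u y ht (qT u y t) hq
  have hl : lMin t u y = qT u y t := by
    apply le_antisymm
    · exact le_trans (Nat.sInf_le ⟨sys, hexp, rfl⟩) hlag
    · refine le_csInf ⟨_, sys, hexp, rfl⟩ ?_
      rintro _ ⟨sys', ⟨x, hx⟩, rfl⟩
      rcases Nat.lt_or_ge (t - 1) (lag sys') with h | h
      · omega
      · refine Nat.sInf_le ⟨h, ?_⟩
        have h1 := delta_le hx (lag sys')
        have h2 := lag_mem sys'
        omega
  refine ⟨hl, ?_⟩
  rw [hl]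
  apply le_antisymm
  · exact Nat.sInf_le ⟨sys, hexp, hn⟩
  · refine le_csInf ⟨_, sys, hexp, rfl⟩ ?_
    rintro _ ⟨sys', ⟨x, hx⟩, rfl⟩
    exact (sum_delta_le hx _).trans (rank_obsMat_le sys' _)
end

section
/- (Theorem 1, characterization of informativity.) Let the data (u_{[0,t−1]}, y_{[0,t−1]}) with u_{[0,t−1]} ≠ 0 be generated by a minimal true system with n_true states and lag ℓ_true, and let L, N satisfy ℓ_true ≤ L and n_true ≤ N. Then the data are informative for system identification if and only if both of the following hold: (i) t ≥ L_t^a + (L_t^a + 1)m + n_min,t, and (ii) rank H_{L_t^a,t} = (L_t^a + 1)m + n_min,t, where L_t^a := min(L, N − n_min,t + ℓ_min,t). -/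
/-!
The time bound follows from the rank condition by counting columns, so the theorem amounts to the
equivalence of informativity with the rank condition. For an explaining system with `n` states, the
rank of the Hankel matrix of depth `k` is at most `(k + 1) m + n`, and equality means
(`rank_eq_iff_rich`) that the system is observable at depth `k + 1` and that the data are *rich*:
combinations of data windows realise every initial state together with every input window.

*The rank condition suffices* (`informative_of_rank`). Take an explaining system `s0` with the
minimal number of states. Richness shows that every window of a trajectory of `s0` is also produced
by any other explaining system `s1` (`transfer`). This bounds the lag of `s1` in terms of its state
dimension (`lag_bound`), so every candidate in `S_{L,N}` is observable at the given depth; gluing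
overlapping windows then gives inclusion of behaviours (`behaviour`) and equal Markov parameters
(`markov_eq`). Minimal systems with equal Markov parameters are isomorphic.

*The rank condition is necessary* (`rank_of_informative`). If the data are not rich at depth
`K = lag T + d` for the true system `T`, a nonzero functional `(ξ, η₀, …, η_K)` annihilates the state
and the next `K + 1` inputs along the data. Choose a direction `v` whose response at the output is
delayed by exactly the lag, and put `d` first-order modes in front of it, which makes the delay equal
to `K` and adds `d` states (`Tower.ext`). Now force the system along `v` by `-ε` times the value of
the annihilator. On the data the forcing is zero as long as it is defined by the data, and afterwards
it is delayed beyond the horizon, so the data are still explained (`drive_data`). The dependence of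
the forcing on future inputs is removed by a shift of the state (`pstate_succ`, `C_pstate`), the
delay of the channel keeps the system observable with lag at most `K`, and it is controllable for all
but finitely many `ε` (`perturb_ctrl`), because only finitely many complex numbers are compatible
with the annihilator (`resSet_finite`). The resulting minimal system is not isomorphic to `T`
(`exists_alternative`), which contradicts informativity.
-/

open Matrix

namespace InfId

/-! ### Unobservable subspaces, lag, and dual forms of controllability -/

section Kernels

variable {m p : ℕ}

/-- The states invisible in the first `k` outputs of the free motion: the kernel of the
observability matrix with `k` block rows. -/
def Unobs (sys : LinSys m p) (k : ℕ) : Submodule ℝ (Fin sys.n → ℝ) :=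
  LinearMap.ker (obsMat sys k).mulVecLin

lemma mem_unobs {sys : LinSys m p} {k : ℕ} {x : Fin sys.n → ℝ} :
    x ∈ Unobs sys k ↔ ∀ i < k, sys.C *ᵥ (sys.A ^ i *ᵥ x) = 0 := by
  unfold Unobs
  rw [LinearMap.mem_ker, Matrix.mulVecLin_apply]
  constructor
  · intro h i hi
    rw [Matrix.mulVec_mulVec]
    funext j
    exact congrFun h (⟨i, hi⟩, j)
  · intro h
    funext r
    have := congrFun (h r.1 r.1.2) r.2
    rw [Matrix.mulVec_mulVec] at this
    exact this

lemma rank_add_finrank_unobs (sys : LinSys m p) (k : ℕ) :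
    (obsMat sys k).rank + Module.finrank ℝ (Unobs sys k) = sys.n := by
  have := LinearMap.finrank_range_add_finrank_ker (obsMat sys k).mulVecLin
  rw [Module.finrank_pi, Fintype.card_fin] at this
  exact this

lemma unobs_anti (sys : LinSys m p) {j k : ℕ} (h : j ≤ k) : Unobs sys k ≤ Unobs sys j := by
  intro x hx
  rw [mem_unobs] at hx ⊢
  exact fun i hi => hx i (by omega)

lemma rank_eq_iff (sys : LinSys m p) (k : ℕ) :
    (obsMat sys (k + 1)).rank = (obsMat sys k).rank ↔ Unobs sys (k + 1) = Unobs sys k := by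
  have h1 := rank_add_finrank_unobs sys k
  have h2 := rank_add_finrank_unobs sys (k + 1)
  constructor
  · intro h
    exact Submodule.eq_of_le_of_finrank_eq (unobs_anti sys (Nat.le_succ k)) (by omega)
  · intro h
    rw [h] at h2
    omega

/-- Once two consecutive unobservable subspaces agree, the sequence is constant. -/
lemma unobs_stable (sys : LinSys m p) {k : ℕ} (h : Unobs sys (k + 1) = Unobs sys k) :
    ∀ j, k ≤ j → Unobs sys j = Unobs sys k := by
  intro j hj
  induction j, hj using Nat.le_induction with
  | base => rfl
  | succ j hj ih =>
    refine le_antisymm (unobs_anti sys (by omega)) ?_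
    intro x hx
    -- `A x` lies in the stable subspace, which is therefore `A`-invariant
    have h1 : sys.A *ᵥ x ∈ Unobs sys k := by
      rw [← h, mem_unobs] at hx
      rw [mem_unobs]
      intro i hi
      have := hx (i + 1) (by omega)
      rwa [pow_succ, ← Matrix.mulVec_mulVec] at this
    rw [← ih, mem_unobs] at h1
    rw [← ih, mem_unobs] at hx
    rw [mem_unobs]
    intro i hi
    rcases Nat.eq_zero_or_pos i with rfl | hi0
    · rcases Nat.eq_zero_or_pos j with rfl | hj0
      · have hk : k = 0 := by omega
        subst hk
        have hx' : x ∈ Unobs sys 0 := by rw [mem_unobs]; simp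
        rw [← h, mem_unobs] at hx'
        exact hx' 0 (by omega)
      · exact hx 0 hj0
    · obtain ⟨i, rfl⟩ : ∃ i', i = i' + 1 := ⟨i - 1, by omega⟩
      have := h1 i (by omega)
      rwa [Matrix.mulVec_mulVec x, ← pow_succ] at this

/-- Before stabilisation the dimension drops by at least one at each step. -/
lemma finrank_drop (sys : LinSys m p) {i : ℕ} (hij : ∀ k, k < i → Unobs sys (k + 1) ≠ Unobs sys k)
    {j : ℕ} (hj : j ≤ i) :
    Module.finrank ℝ (Unobs sys i) + (i - j) ≤ Module.finrank ℝ (Unobs sys j) := by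
  induction i, hj using Nat.le_induction with
  | base => simp
  | succ i hi ih =>
    have h1 := ih (fun k hk => hij k (by omega))
    have h2 : Unobs sys (i + 1) < Unobs sys i :=
      lt_of_le_of_ne (unobs_anti sys (by omega)) (hij i (by omega))
    have h3 := Submodule.finrank_lt_finrank_of_lt h2
    omega

lemma lag_nonempty (sys : LinSys m p) :
    {k | (obsMat sys (k + 1)).rank = (obsMat sys k).rank}.Nonempty := by
  by_contra hne
  rw [Set.not_nonempty_iff_eq_empty] at hne
  have h : ∀ k, Unobs sys (k + 1) ≠ Unobs sys k := by
    intro k hk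
    have : k ∈ {k | (obsMat sys (k + 1)).rank = (obsMat sys k).rank} := (rank_eq_iff sys k).2 hk
    rw [hne] at this
    exact this
  have h1 := finrank_drop sys (i := sys.n + 1) (fun k _ => h k) (Nat.zero_le _)
  have h2 := rank_add_finrank_unobs sys 0
  omega

lemma unobs_lag (sys : LinSys m p) : Unobs sys (lag sys + 1) = Unobs sys (lag sys) :=
  (rank_eq_iff sys _).1 (Nat.sInf_mem (lag_nonempty sys))

lemma unobs_ne_of_lt_lag (sys : LinSys m p) {k : ℕ} (hk : k < lag sys) :
    Unobs sys (k + 1) ≠ Unobs sys k := fun h =>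
  Nat.notMem_of_lt_sInf hk ((rank_eq_iff sys k).2 h)

lemma lag_le_of_eq (sys : LinSys m p) {k : ℕ} (h : Unobs sys (k + 1) = Unobs sys k) :
    lag sys ≤ k := Nat.sInf_le ((rank_eq_iff sys k).2 h)

lemma lag_le_of_bot (sys : LinSys m p) {k : ℕ} (h : Unobs sys k = ⊥) : lag sys ≤ k := by
  refine lag_le_of_eq sys ?_
  rw [h, eq_bot_iff, ← h]
  exact unobs_anti sys (by omega)

lemma lag_le_n (sys : LinSys m p) : lag sys ≤ sys.n := by
  have h1 := finrank_drop sys (i := lag sys) (fun k hk => unobs_ne_of_lt_lag sys hk) (Nat.zero_le _)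
  have h2 := rank_add_finrank_unobs sys 0
  omega

lemma observable_iff_unobs (sys : LinSys m p) : Observable sys ↔ Unobs sys sys.n = ⊥ := by
  unfold Observable
  have h := rank_add_finrank_unobs sys sys.n
  rw [← Submodule.finrank_eq_zero (R := ℝ)]
  omega

lemma unobs_bot (sys : LinSys m p) (ho : Observable sys) {k : ℕ} (hk : lag sys ≤ k) :
    Unobs sys k = ⊥ := by
  rw [unobs_stable sys (unobs_lag sys) k hk,
    ← unobs_stable sys (unobs_lag sys) sys.n (lag_le_n sys)]
  exact (observable_iff_unobs sys).1 ho

/-- Observability at any depth `k`, possibly larger than the state dimension, implies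
observability, since the unobservable subspaces are constant from the lag on. -/
lemma observable_of_bot (sys : LinSys m p) {k : ℕ} (h : Unobs sys k = ⊥) : Observable sys := by
  rw [observable_iff_unobs, unobs_stable sys (unobs_lag sys) sys.n (lag_le_n sys),
    ← unobs_stable sys (unobs_lag sys) k (lag_le_of_bot sys h), h]

lemma observable_iff (sys : LinSys m p) :
    Observable sys ↔ ∀ x, (∀ i, sys.C *ᵥ (sys.A ^ i *ᵥ x) = 0) → x = 0 := by
  constructor
  · intro ho x hx
    have : x ∈ Unobs sys sys.n := mem_unobs.2 (fun i _ => hx i)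
    rw [(observable_iff_unobs sys).1 ho] at this
    simpa using this
  · intro h
    refine observable_of_bot sys (k := lag sys) ?_
    rw [eq_bot_iff]
    intro x hx
    rw [Submodule.mem_bot]
    refine h x fun i => ?_
    have h1 : x ∈ Unobs sys (lag sys + i + 1) := by
      rwa [unobs_stable sys (unobs_lag sys) _ (by omega)]
    exact mem_unobs.1 h1 i (by omega)

/-- The dual system, which exchanges controllability and observability. -/
abbrev dualSys (sys : LinSys m p) : LinSys p m :=
  ⟨sys.n, sys.Aᵀ, sys.Cᵀ, sys.Bᵀ, sys.Dᵀ⟩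

lemma controllable_iff_dual (sys : LinSys m p) : Controllable sys ↔ Observable (dualSys sys) := by
  have h : obsMat (dualSys sys) sys.n = (ctrlMat sys sys.n)ᵀ := by
    ext r j
    change (sys.Bᵀ * sys.Aᵀ ^ (r.1 : ℕ)) r.2 j = (sys.A ^ (r.1 : ℕ) * sys.B) j r.2
    rw [← Matrix.transpose_pow, ← Matrix.transpose_mul, Matrix.transpose_apply]
  unfold Controllable Observable
  change _ ↔ (obsMat (dualSys sys) sys.n).rank = sys.n
  rw [h]
  exact Iff.of_eq (congrArg (· = sys.n) (Matrix.rank_transpose _).symm)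

lemma controllable_iff_dot (sys : LinSys m p) :
    Controllable sys ↔
      ∀ x : Fin sys.n → ℝ, (∀ i w, x ⬝ᵥ (sys.A ^ i *ᵥ (sys.B *ᵥ w)) = 0) → x = 0 := by
  rw [controllable_iff_dual, observable_iff]
  have key : ∀ (x : Fin sys.n → ℝ) (i : ℕ),
      (sys.Bᵀ *ᵥ (sys.Aᵀ ^ i *ᵥ x) = 0 ↔ ∀ w, x ⬝ᵥ (sys.A ^ i *ᵥ (sys.B *ᵥ w)) = 0) := by
    intro x i
    have e : sys.Bᵀ *ᵥ (sys.Aᵀ ^ i *ᵥ x) = x ᵥ* (sys.A ^ i * sys.B) := by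
      rw [Matrix.mulVec_mulVec, ← Matrix.transpose_pow, ← Matrix.transpose_mul,
        Matrix.mulVec_transpose]
    rw [e]
    constructor
    · intro h w
      rw [Matrix.mulVec_mulVec, Matrix.dotProduct_mulVec, h, zero_dotProduct]
    · intro h
      refine dotProduct_eq_zero _ fun w => ?_
      rw [← Matrix.dotProduct_mulVec, ← Matrix.mulVec_mulVec, h]
  exact forall_congr' fun x => imp_congr (forall_congr' fun i => key x i) Iff.rfl

lemma linear_eq_dot {n : ℕ} (ψ : (Fin n → ℝ) →ₗ[ℝ] ℝ) (x : Fin n → ℝ) :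
    ψ x = (fun j => ψ (Pi.single j 1)) ⬝ᵥ x := by
  conv_lhs => rw [← Finset.univ_sum_single x]
  rw [map_sum, dotProduct]
  refine Finset.sum_congr rfl fun j _ => ?_
  rw [mul_comm, ← smul_eq_mul, ← map_smul, ← Pi.single_smul, smul_eq_mul, mul_one]

/-- Controllability in dual form: no nonzero functional annihilates all the reachable vectors
`A ^ i (B w)`. -/
lemma controllable_iff (sys : LinSys m p) :
    Controllable sys ↔
      ∀ ψ : (Fin sys.n → ℝ) →ₗ[ℝ] ℝ, (∀ i w, ψ (sys.A ^ i *ᵥ (sys.B *ᵥ w)) = 0) → ψ = 0 := by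
  rw [controllable_iff_dot]
  constructor
  · intro h ψ hψ
    have h0 := h (fun j => ψ (Pi.single j 1)) (fun i w => by rw [← linear_eq_dot]; exact hψ i w)
    refine LinearMap.ext fun x => ?_
    rw [linear_eq_dot, h0, zero_dotProduct, LinearMap.zero_apply]
  · intro h x hx
    have h0 := h (dotProductBilin ℝ ℝ x) (fun i w => hx i w)
    exact dotProduct_eq_zero _ fun w => LinearMap.congr_fun h0 w

end Kernels

/-! ### Trajectories, data windows and the rank condition -/

section Data

variable {m p : ℕ}

/-- The state trajectory from the initial state `x` under the input `u`. -/
def traj (sys : LinSys m p) (x : Fin sys.n → ℝ) (u : ℕ → Fin m → ℝ) : ℕ → Fin sys.n → ℝ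
  | 0 => x
  | s + 1 => sys.A *ᵥ traj sys x u s + sys.B *ᵥ u s

/-- The output at time `s` from the initial state `x` under the input `u`. -/
def out (sys : LinSys m p) (x : Fin sys.n → ℝ) (u : ℕ → Fin m → ℝ) (s : ℕ) : Fin p → ℝ :=
  sys.C *ᵥ traj sys x u s + sys.D *ᵥ u s

lemma traj_congr (sys : LinSys m p) (x : Fin sys.n → ℝ) {u u' : ℕ → Fin m → ℝ} {s : ℕ}
    (h : ∀ i < s, u i = u' i) : traj sys x u s = traj sys x u' s := by
  induction s with
  | zero => rfl
  | succ s ih => rw [traj, traj, ih fun i hi => h i (by omega), h s (by omega)]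

lemma out_congr (sys : LinSys m p) (x : Fin sys.n → ℝ) {u u' : ℕ → Fin m → ℝ} {s : ℕ}
    (h : ∀ i ≤ s, u i = u' i) : out sys x u s = out sys x u' s := by
  rw [out, out, traj_congr sys x fun i hi => h i hi.le, h s le_rfl]

lemma traj_sum {ι : Type*} [Fintype ι] (sys : LinSys m p) (g : ι → ℝ) (x : ι → Fin sys.n → ℝ)
    (u : ι → ℕ → Fin m → ℝ) (s : ℕ) :
    traj sys (∑ c, g c • x c) (fun i => ∑ c, g c • u c i) s = ∑ c, g c • traj sys (x c) (u c) s := by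
  induction s with
  | zero => rfl
  | succ s ih =>
    simp only [traj, ih, smul_add, Finset.sum_add_distrib, Matrix.mulVec_sum, Matrix.mulVec_smul]

lemma out_sum {ι : Type*} [Fintype ι] (sys : LinSys m p) (g : ι → ℝ) (x : ι → Fin sys.n → ℝ)
    (u : ι → ℕ → Fin m → ℝ) (s : ℕ) :
    out sys (∑ c, g c • x c) (fun i => ∑ c, g c • u c i) s = ∑ c, g c • out sys (x c) (u c) s := by
  simp only [out, traj_sum, smul_add, Finset.sum_add_distrib, Matrix.mulVec_sum,
    Matrix.mulVec_smul]

lemma traj_sub (sys : LinSys m p) (x x' : Fin sys.n → ℝ) (u : ℕ → Fin m → ℝ) (s : ℕ) :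
    traj sys x u s = traj sys x' u s + sys.A ^ s *ᵥ (x - x') := by
  induction s with
  | zero => simp [traj]
  | succ s ih =>
    rw [traj, traj, ih, Matrix.mulVec_add, Matrix.mulVec_mulVec, ← pow_succ']
    abel

lemma out_sub (sys : LinSys m p) (x x' : Fin sys.n → ℝ) (u : ℕ → Fin m → ℝ) (s : ℕ) :
    out sys x u s = out sys x' u s + sys.C *ᵥ (sys.A ^ s *ᵥ (x - x')) := by
  rw [out, out, traj_sub sys x x', Matrix.mulVec_add]
  abel

lemma traj_shift (sys : LinSys m p) (x : Fin sys.n → ℝ) (u : ℕ → Fin m → ℝ) (s r : ℕ) :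
    traj sys x u (s + r) = traj sys (traj sys x u s) (fun i => u (s + i)) r := by
  induction r with
  | zero => rfl
  | succ r ih => rw [← Nat.add_assoc, traj, ih, traj]

lemma out_shift (sys : LinSys m p) (x : Fin sys.n → ℝ) (u : ℕ → Fin m → ℝ) (s r : ℕ) :
    out sys x u (s + r) = out sys (traj sys x u s) (fun i => u (s + i)) r := by
  rw [out, out, traj_shift]

lemma traj_zero (sys : LinSys m p) (x : Fin sys.n → ℝ) (s : ℕ) :
    traj sys x (fun _ => 0) s = sys.A ^ s *ᵥ x := by
  induction s with
  | zero => simp [traj]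
  | succ s ih => rw [traj, ih, Matrix.mulVec_zero, add_zero, Matrix.mulVec_mulVec, pow_succ']

lemma out_zero (sys : LinSys m p) (x : Fin sys.n → ℝ) (s : ℕ) :
    out sys x (fun _ => 0) s = sys.C *ᵥ (sys.A ^ s *ᵥ x) := by
  rw [out, traj_zero, Matrix.mulVec_zero, add_zero]

variable {t : ℕ} {u : ℕ → Fin m → ℝ} {y : ℕ → Fin p → ℝ}

lemma traj_of_explains {sys : LinSys m p} {x : ℕ → Fin sys.n → ℝ}
    (h : ExplainsWith sys t u y x) {c s : ℕ} (hs : c + s ≤ t) :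
    x (c + s) = traj sys (x c) (fun i => u (c + i)) s := by
  induction s with
  | zero => rfl
  | succ s ih => rw [← Nat.add_assoc, (h (c + s) (by omega)).1, ih (by omega), traj]

lemma out_of_explains {sys : LinSys m p} {x : ℕ → Fin sys.n → ℝ}
    (h : ExplainsWith sys t u y x) {c s : ℕ} (hs : c + s < t) :
    y (c + s) = out sys (x c) (fun i => u (c + i)) s := by
  rw [(h (c + s) hs).2, traj_of_explains h hs.le, out]

/-- The outputs of a combination of windows of the data. -/
lemma out_comb {sys : LinSys m p} {x : ℕ → Fin sys.n → ℝ}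
    (h : ExplainsWith sys t u y x) {k r : ℕ} (hr : r ≤ k) (g : Fin (t - k) → ℝ) :
    out sys (∑ c, g c • x c) (fun i => ∑ c, g c • u (c + i)) r = ∑ c, g c • y (c + r) := by
  rw [out_sum]
  refine Finset.sum_congr rfl fun c _ => ?_
  rw [out_of_explains h (by omega)]

/-- Sends coefficients `g` on the `t - k` data windows of length `k + 1` to the corresponding
combination of initial states and of input windows. -/
def dataMap {n : ℕ} (x : ℕ → Fin n → ℝ) (u : ℕ → Fin m → ℝ) (k t : ℕ) :
    (Fin (t - k) → ℝ) →ₗ[ℝ] (Fin n → ℝ) × (Fin (k + 1) → Fin m → ℝ) :=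
  LinearMap.prod (Fintype.linearCombination ℝ fun c : Fin (t - k) => x c)
    (LinearMap.pi fun i => Fintype.linearCombination ℝ fun c : Fin (t - k) => u (c + i))

lemma dataMap_apply {n : ℕ} (x : ℕ → Fin n → ℝ) (u : ℕ → Fin m → ℝ) (k t : ℕ)
    (g : Fin (t - k) → ℝ) :
    dataMap x u k t g = (∑ c, g c • x c, fun i : Fin (k + 1) => ∑ c, g c • u (c + i)) := rfl

lemma hankel_mulVec {d : ℕ} (f : ℕ → Fin d → ℝ) (rows cols : ℕ) (g : Fin cols → ℝ)
    (r : Fin rows × Fin d) :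
    (hankel f rows cols *ᵥ g) r = (∑ c, g c • f (c + r.1)) r.2 := by
  rw [Finset.sum_apply, Matrix.mulVec, dotProduct]
  refine Finset.sum_congr rfl fun c _ => ?_
  simp only [hankel, Matrix.of_apply, Pi.smul_apply, smul_eq_mul]
  rw [mul_comm, Nat.add_comm]

lemma mem_ker_Hkt (u : ℕ → Fin m → ℝ) (y : ℕ → Fin p → ℝ) (k t : ℕ) (g : Fin (t - k) → ℝ) :
    g ∈ LinearMap.ker (Hkt u y k t).mulVecLin ↔
      (∀ i ≤ k, ∑ c, g c • y (c + i) = 0) ∧ ∀ i ≤ k, ∑ c, g c • u (c + i) = 0 := by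
  rw [LinearMap.mem_ker, Matrix.mulVecLin_apply, Hkt, Matrix.fromRows_mulVec]
  constructor
  · intro h
    refine ⟨fun i hi => funext fun j => ?_, fun i hi => funext fun j => ?_⟩
    · have := congrFun h (Sum.inl (⟨i, by omega⟩, j))
      rwa [Sum.elim_inl, hankel_mulVec] at this
    · have := congrFun h (Sum.inr (⟨i, by omega⟩, j))
      rwa [Sum.elim_inr, hankel_mulVec] at this
  · rintro ⟨h1, h2⟩
    funext r
    rcases r with r | r
    · rw [Sum.elim_inl, hankel_mulVec, h1 _ (by omega)]; rfl
    · rw [Sum.elim_inr, hankel_mulVec, h2 _ (by omega)]; rfl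

lemma mem_ker_dataMap {n : ℕ} (x : ℕ → Fin n → ℝ) (u : ℕ → Fin m → ℝ) (k t : ℕ)
    (g : Fin (t - k) → ℝ) :
    g ∈ LinearMap.ker (dataMap x u k t) ↔
      (∑ c, g c • x c = 0) ∧ ∀ i ≤ k, ∑ c, g c • u (c + i) = 0 := by
  rw [LinearMap.mem_ker, dataMap_apply, Prod.mk_eq_zero]
  refine and_congr Iff.rfl ⟨fun h i hi => congrFun h ⟨i, by omega⟩, fun h => ?_⟩
  exact funext fun i => h i (by omega)

/-- The state and the inputs of a window determine its outputs. -/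
lemma ker_dataMap_le {sys : LinSys m p} {x : ℕ → Fin sys.n → ℝ}
    (h : ExplainsWith sys t u y x) (k : ℕ) :
    LinearMap.ker (dataMap x u k t) ≤ LinearMap.ker (Hkt u y k t).mulVecLin := by
  intro g hg
  rw [mem_ker_dataMap] at hg
  rw [mem_ker_Hkt]
  refine ⟨fun i hi => ?_, hg.2⟩
  rw [← out_comb h hi g, hg.1,
    out_congr sys 0 (u' := fun _ => 0) fun j hj => hg.2 j (by omega), out_zero]
  simp

lemma rank_Hkt_add (u : ℕ → Fin m → ℝ) (y : ℕ → Fin p → ℝ) (k t : ℕ) :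
    (Hkt u y k t).rank + Module.finrank ℝ (LinearMap.ker (Hkt u y k t).mulVecLin) = t - k := by
  have := LinearMap.finrank_range_add_finrank_ker (Hkt u y k t).mulVecLin
  rw [Module.finrank_pi, Fintype.card_fin] at this
  exact this

lemma rank_dataMap_add {n : ℕ} (x : ℕ → Fin n → ℝ) (u : ℕ → Fin m → ℝ) (k t : ℕ) :
    Module.finrank ℝ (LinearMap.range (dataMap x u k t)) +
      Module.finrank ℝ (LinearMap.ker (dataMap x u k t)) = t - k := by
  have := LinearMap.finrank_range_add_finrank_ker (dataMap x u k t)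
  rw [Module.finrank_pi, Fintype.card_fin] at this
  exact this

lemma finrank_target (n m k : ℕ) :
    Module.finrank ℝ ((Fin n → ℝ) × (Fin (k + 1) → Fin m → ℝ)) = (k + 1) * m + n := by
  rw [Module.finrank_prod, Module.finrank_pi, Module.finrank_pi_fintype]
  simp [add_comm]

lemma rank_dataMap_le {n : ℕ} (x : ℕ → Fin n → ℝ) (u : ℕ → Fin m → ℝ) (k t : ℕ) :
    Module.finrank ℝ (LinearMap.range (dataMap x u k t)) ≤ (k + 1) * m + n := by
  rw [← finrank_target]
  exact Submodule.finrank_le _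

lemma rank_Hkt_le {sys : LinSys m p} (h : Explains sys t u y) (k : ℕ) :
    (Hkt u y k t).rank ≤ (k + 1) * m + sys.n := by
  obtain ⟨x, hx⟩ := h
  have h1 := rank_Hkt_add u y k t
  have h2 := rank_dataMap_add x u k t
  have h3 := rank_dataMap_le x u k t
  have h4 := Submodule.finrank_mono (ker_dataMap_le hx k)
  omega

/-- The data are rich at depth `k`: the state and the next `k + 1` inputs can be prescribed
freely by a combination of the data windows. -/
def Rich {n : ℕ} (x : ℕ → Fin n → ℝ) (u : ℕ → Fin m → ℝ) (k t : ℕ) : Prop :=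
  ∀ (z : Fin n → ℝ) (w : ℕ → Fin m → ℝ), ∃ g : Fin (t - k) → ℝ,
    (∑ c, g c • x c = z) ∧ ∀ i ≤ k, ∑ c, g c • u (c + i) = w i

lemma rich_iff_range {n : ℕ} (x : ℕ → Fin n → ℝ) (u : ℕ → Fin m → ℝ) (k t : ℕ) :
    Rich x u k t ↔ LinearMap.range (dataMap x u k t) = ⊤ := by
  rw [LinearMap.range_eq_top]
  constructor
  · rintro h ⟨z, w⟩
    obtain ⟨g, h1, h2⟩ := h z (fun i => if hi : i < k + 1 then w ⟨i, hi⟩ else 0)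
    refine ⟨g, ?_⟩
    rw [dataMap_apply, h1]
    congr 1
    funext i
    rw [h2 i (by omega), dif_pos i.2]
  · intro h z w
    obtain ⟨g, hg⟩ := h (z, fun i => w i)
    rw [dataMap_apply, Prod.mk.injEq] at hg
    exact ⟨g, hg.1, fun i hi => congrFun hg.2 ⟨i, by omega⟩⟩

/-- The rank of the Hankel matrix is at most `(k + 1) * m + n` for every explaining system with
`n` states; equality splits into richness of the data (the state/input windows span everything)
and observability at depth `k + 1`. -/
lemma rank_eq_iff_rich {sys : LinSys m p} {x : ℕ → Fin sys.n → ℝ}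
    (h : ExplainsWith sys t u y x) (k : ℕ) :
    (Hkt u y k t).rank = (k + 1) * m + sys.n ↔ Rich x u k t ∧ Unobs sys (k + 1) = ⊥ := by
  have h1 := rank_Hkt_add u y k t
  have h2 := rank_dataMap_add x u k t
  have h3 := rank_dataMap_le x u k t
  have h4 := Submodule.finrank_mono (ker_dataMap_le h k)
  rw [rich_iff_range]
  constructor
  · intro hr
    have htop : LinearMap.range (dataMap x u k t) = ⊤ := by
      apply Submodule.eq_top_of_finrank_eq
      rw [finrank_target]
      omega
    refine ⟨htop, ?_⟩
    have hker := Submodule.eq_of_le_of_finrank_eq (ker_dataMap_le h k) (by omega)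
    rw [eq_bot_iff]
    intro z hz
    rw [← rich_iff_range] at htop
    obtain ⟨g, hg1, hg2⟩ := htop z (fun _ => 0)
    have hgk : g ∈ LinearMap.ker (Hkt u y k t).mulVecLin := by
      rw [mem_ker_Hkt]
      refine ⟨fun i hi => ?_, hg2⟩
      rw [← out_comb h hi g, hg1,
        out_congr sys z (u' := fun _ => 0) fun j hj => hg2 j (by omega), out_zero]
      exact mem_unobs.1 hz i (by omega)
    rw [← hker, mem_ker_dataMap, hg1] at hgk
    exact hgk.1
  · rintro ⟨htop, hun⟩
    have hker : LinearMap.ker (Hkt u y k t).mulVecLin ≤ LinearMap.ker (dataMap x u k t) := by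
      intro g hg
      rw [mem_ker_Hkt] at hg
      rw [mem_ker_dataMap]
      refine ⟨?_, hg.2⟩
      have : ∑ c, g c • x c ∈ Unobs sys (k + 1) := by
        rw [mem_unobs]
        intro i hi
        rw [← out_zero, ← out_congr sys _ (u := fun i => ∑ c, g c • u (c + i))
          fun j hj => hg.2 j (by omega), out_comb h (by omega : i ≤ k), hg.1 i (by omega)]
      rw [hun] at this
      exact this
    have h5 := Submodule.finrank_mono hker
    rw [htop, finrank_top, finrank_target] at h2
    omega

/-- Richness at a larger depth implies richness at a smaller one. -/
lemma rich_mono {n : ℕ} {x : ℕ → Fin n → ℝ} {j k : ℕ} (hjk : j ≤ k) (h : Rich x u k t) :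
    Rich x u j t := by
  intro z w
  obtain ⟨g, h1, h2⟩ := h z w
  -- pad the coefficients by zeros, the depth-`j` window matrix having more columns
  have hle : t - k ≤ t - j := by omega
  have key : ∀ {d : ℕ} (f : ℕ → Fin d → ℝ),
      ∑ c : Fin (t - j), (if hc : (c : ℕ) < t - k then g ⟨c, hc⟩ else 0) • f c =
        ∑ c : Fin (t - k), g c • f c := by
    intro d f
    rw [← Finset.sum_subset (Finset.subset_univ (Finset.univ.map (Fin.castLEEmb hle)))]
    · rw [Finset.sum_map]
      refine Finset.sum_congr rfl fun c _ => ?_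
      simp
    · intro c _ hc
      have : ¬ (c : ℕ) < t - k := fun hlt => hc (by
        rw [Finset.mem_map]
        exact ⟨⟨c, hlt⟩, Finset.mem_univ _, rfl⟩)
      rw [dif_neg this, zero_smul]
  refine ⟨fun c => if hc : (c : ℕ) < t - k then g ⟨c, hc⟩ else 0, ?_, fun i hi => ?_⟩
  · rw [← h1]; exact key x
  · rw [← h2 i (by omega)]; exact key fun c => u (c + i)

/-- If the data are not rich at depth `k`, a nonzero functional `(ξ, η₀, …, η_k)` annihilates
every pair formed of the state and the next `k + 1` inputs along the data. -/
lemma exists_annihilator {n : ℕ} {x : ℕ → Fin n → ℝ} {k : ℕ} (h : ¬ Rich x u k t) :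
    ∃ (ξ : (Fin n → ℝ) →ₗ[ℝ] ℝ) (η : ℕ → (Fin m → ℝ) →ₗ[ℝ] ℝ),
      (∀ i, k < i → η i = 0) ∧ ¬ (ξ = 0 ∧ ∀ i, η i = 0) ∧
      ∀ s, s + k < t → ξ (x s) + ∑ i ∈ Finset.range (k + 1), η i (u (s + i)) = 0 := by
  rw [rich_iff_range] at h
  obtain ⟨f, hf, hle⟩ := Submodule.exists_le_ker_of_lt_top _ (lt_top_iff_ne_top.2 h)
  let η : ℕ → (Fin m → ℝ) →ₗ[ℝ] ℝ := fun i => if hi : i < k + 1 then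
    f ∘ₗ LinearMap.inr ℝ _ _ ∘ₗ LinearMap.single ℝ (fun _ : Fin (k + 1) => Fin m → ℝ) ⟨i, hi⟩ else 0
  have hdec : ∀ (z : Fin n → ℝ) (w : ℕ → Fin m → ℝ),
      f (z, fun i => w i) = f (z, 0) + ∑ i ∈ Finset.range (k + 1), η i (w i) := by
    intro z w
    have e : (z, fun i : Fin (k + 1) => w i) = (z, 0) + (0, fun i : Fin (k + 1) => w i) := by simp
    rw [e, map_add, Finset.sum_range]
    congr 1
    have e2 : (0, fun i : Fin (k + 1) => w i) =
        LinearMap.inr ℝ (Fin n → ℝ) _ (∑ i : Fin (k + 1), Pi.single i (w i)) := by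
      rw [Finset.univ_sum_single (fun i : Fin (k + 1) => w i)]; rfl
    rw [e2, map_sum, map_sum]
    refine Finset.sum_congr rfl fun i _ => ?_
    simp only [η, dif_pos i.2]
    rfl
  refine ⟨f ∘ₗ LinearMap.inl ℝ _ _, η, fun i hi => dif_neg (by omega), ?_, fun s hs => ?_⟩
  · rintro ⟨h1, h2⟩
    refine hf (LinearMap.ext fun q => ?_)
    obtain ⟨z, w⟩ := q
    obtain ⟨w', rfl⟩ : ∃ w' : ℕ → Fin m → ℝ, w = fun i : Fin (k + 1) => w' i :=
      ⟨fun i => if hi : i < k + 1 then w ⟨i, hi⟩ else 0, funext fun i => by simp only [dif_pos i.2]⟩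
    rw [hdec z w', Finset.sum_eq_zero fun i _ => by rw [h2 i]; rfl, add_zero]
    exact LinearMap.congr_fun h1 z
  · have : dataMap x u k t (Pi.single ⟨s, by omega⟩ 1) = (x s, fun i : Fin (k + 1) => u (s + i)) := by
      rw [dataMap_apply]
      congr 1
      · simp [Pi.single_apply]
      · funext i
        simp [Pi.single_apply]
    have h0 : f (dataMap x u k t (Pi.single ⟨s, by omega⟩ 1)) = 0 :=
      hle (LinearMap.mem_range_self _ _)
    rw [this, hdec (x s) (fun i => u (s + i))] at h0
    exact h0

/-- Every window of length `k + 1` of a trajectory of `s1` is a combination of data windows when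
the data are rich for `s1`, and is therefore also produced by any other explaining system. -/
lemma transfer {s1 s2 : LinSys m p} {x1 : ℕ → Fin s1.n → ℝ}
    (h1 : ExplainsWith s1 t u y x1) (h2 : Explains s2 t u y) {k : ℕ} (hr : Rich x1 u k t)
    (z : Fin s1.n → ℝ) (w : ℕ → Fin m → ℝ) :
    ∃ x : Fin s2.n → ℝ, ∀ r ≤ k, out s1 z w r = out s2 x w r := by
  obtain ⟨x2, h2⟩ := h2
  obtain ⟨g, hg1, hg2⟩ := hr z w
  refine ⟨∑ c, g c • x2 c, fun r hrk => ?_⟩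
  rw [← out_congr s2 _ (u := fun i => ∑ c, g c • u (c + i)) fun j hj => hg2 j (by omega),
    ← out_congr s1 _ (u := fun i => ∑ c, g c • u (c + i)) fun j hj => hg2 j (by omega),
    ← hg1, out_comb h1 hrk, out_comb h2 hrk]

/-- An explaining system for which the data are rich at depth `lag s2` has lag at most that of `s2`:
its free responses, on windows of that length, are free responses of `s2`. -/
lemma lag_le_of_rich {s1 s2 : LinSys m p} {x1 : ℕ → Fin s1.n → ℝ}
    (h1 : ExplainsWith s1 t u y x1) (h2 : Explains s2 t u y) (hr : Rich x1 u (lag s2) t) :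
    lag s1 ≤ lag s2 := by
  refine lag_le_of_eq s1 (le_antisymm (unobs_anti s1 (by omega)) ?_)
  intro z hz
  obtain ⟨x, hx⟩ := transfer h1 h2 hr z (fun _ => 0)
  simp only [out_zero] at hx
  rw [mem_unobs] at hz ⊢
  have hx2 : x ∈ Unobs s2 (lag s2) := mem_unobs.2 fun i hi => by
    rw [← hx i hi.le]; exact hz i hi
  rw [← unobs_lag, mem_unobs] at hx2
  intro i hi
  rw [hx i (by omega)]
  exact hx2 i hi

end Data

/-! ### Rich data determine the system -/

section Identification

variable {m p : ℕ} {t : ℕ} {u : ℕ → Fin m → ℝ} {y : ℕ → Fin p → ℝ}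

/-- If the Markov parameters agree, every state of the controllable system `s1` can be linearly
matched with a state of `s2` having the same free response. -/
lemma exists_link (s1 s2 : LinSys m p) (hc : Controllable s1)
    (hM : ∀ i w, s1.C *ᵥ (s1.A ^ i *ᵥ (s1.B *ᵥ w)) = s2.C *ᵥ (s2.A ^ i *ᵥ (s2.B *ᵥ w))) :
    ∃ f : (Fin s1.n → ℝ) →ₗ[ℝ] (Fin s2.n → ℝ),
      ∀ x i, s2.C *ᵥ (s2.A ^ i *ᵥ f x) = s1.C *ᵥ (s1.A ^ i *ᵥ x) := by
  let W : Submodule ℝ (Fin s1.n → ℝ) :=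
    { carrier := {x | ∃ x', ∀ i, s2.C *ᵥ (s2.A ^ i *ᵥ x') = s1.C *ᵥ (s1.A ^ i *ᵥ x)}
      add_mem' := by
        rintro a b ⟨a', ha⟩ ⟨b', hb⟩
        exact ⟨a' + b', fun i => by simp only [Matrix.mulVec_add, ha, hb]⟩
      zero_mem' := ⟨0, fun i => by simp only [Matrix.mulVec_zero]⟩
      smul_mem' := by
        rintro c a ⟨a', ha⟩
        exact ⟨c • a', fun i => by simp only [Matrix.mulVec_smul, ha]⟩ }
  have hW : W = ⊤ := by
    by_contra hne
    obtain ⟨ψ, hψ, hle⟩ := Submodule.exists_le_ker_of_lt_top W (lt_top_iff_ne_top.2 hne)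
    refine hψ ((controllable_iff s1).1 hc ψ fun j w => ?_)
    refine hle (show _ ∈ W from ⟨s2.A ^ j *ᵥ (s2.B *ᵥ w), fun i => ?_⟩)
    rw [Matrix.mulVec_mulVec _ (s2.A ^ i), Matrix.mulVec_mulVec _ (s1.A ^ i), ← pow_add, ← pow_add]
    exact (hM _ _).symm
  have hall : ∀ x : Fin s1.n → ℝ, ∃ x', ∀ i, s2.C *ᵥ (s2.A ^ i *ᵥ x') = s1.C *ᵥ (s1.A ^ i *ᵥ x) :=
    fun x => show x ∈ W from hW ▸ Submodule.mem_top
  choose g hg using hall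
  let f := (Pi.basisFun ℝ (Fin s1.n)).constr ℝ fun j => g (Pi.single j 1)
  refine ⟨f, fun x i => ?_⟩
  have : s2.C.mulVecLin ∘ₗ (s2.A ^ i).mulVecLin ∘ₗ f = s1.C.mulVecLin ∘ₗ (s1.A ^ i).mulVecLin := by
    refine (Pi.basisFun ℝ (Fin s1.n)).ext fun j => ?_
    simp only [LinearMap.comp_apply, Matrix.mulVecLin_apply, f, Module.Basis.constr_basis]
    rw [hg, Pi.basisFun_apply]
  exact LinearMap.congr_fun this x

lemma link_injective {s1 s2 : LinSys m p} (ho : Observable s1)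
    {f : (Fin s1.n → ℝ) →ₗ[ℝ] (Fin s2.n → ℝ)}
    (hf : ∀ x i, s2.C *ᵥ (s2.A ^ i *ᵥ f x) = s1.C *ᵥ (s1.A ^ i *ᵥ x)) :
    Function.Injective f := by
  rw [injective_iff_map_eq_zero]
  intro x hx
  refine (observable_iff s1).1 ho x fun i => ?_
  rw [← hf, hx, Matrix.mulVec_zero, Matrix.mulVec_zero]

lemma eq_of_obs {sys : LinSys m p} (ho : Observable sys) {a b : Fin sys.n → ℝ}
    (h : ∀ i, sys.C *ᵥ (sys.A ^ i *ᵥ a) = sys.C *ᵥ (sys.A ^ i *ᵥ b)) : a = b := by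
  rw [← sub_eq_zero]
  refine (observable_iff sys).1 ho _ fun i => ?_
  rw [Matrix.mulVec_sub, Matrix.mulVec_sub, h, sub_self]

lemma mulVec_pow_succ {n : ℕ} (A : Matrix (Fin n) (Fin n) ℝ) (i : ℕ) (x : Fin n → ℝ) :
    A ^ i *ᵥ (A *ᵥ x) = A ^ (i + 1) *ᵥ x := by
  rw [Matrix.mulVec_mulVec, ← pow_succ]

/-- Minimal systems with the same Markov parameters are isomorphic. -/
lemma isomorphic_of_markov {s1 s2 : LinSys m p} (h1 : MinimalSys s1) (h2 : MinimalSys s2)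
    (hD : s1.D = s2.D)
    (hM : ∀ i w, s1.C *ᵥ (s1.A ^ i *ᵥ (s1.B *ᵥ w)) = s2.C *ᵥ (s2.A ^ i *ᵥ (s2.B *ᵥ w))) :
    Isomorphic s1 s2 := by
  obtain ⟨f, hf⟩ := exists_link s1 s2 h1.1 hM
  obtain ⟨g, hg⟩ := exists_link s2 s1 h2.1 fun i w => (hM i w).symm
  have hfm : ∀ x, LinearMap.toMatrix' f *ᵥ x = f x := fun x => LinearMap.toMatrix'_mulVec f x
  have hgm : ∀ x, LinearMap.toMatrix' g *ᵥ x = g x := fun x => LinearMap.toMatrix'_mulVec g x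
  refine ⟨hD, LinearMap.toMatrix' f, LinearMap.toMatrix' g, ?_, ?_, ?_, ?_, ?_⟩ <;>
    refine Matrix.mulVec_injective <| funext fun x => ?_
  · rw [← Matrix.mulVec_mulVec, hfm, hgm, Matrix.one_mulVec]
    exact eq_of_obs h2.2 fun i => by rw [hf, hg]
  · rw [← Matrix.mulVec_mulVec, hfm, hgm, Matrix.one_mulVec]
    exact eq_of_obs h1.2 fun i => by rw [hg, hf]
  · rw [← Matrix.mulVec_mulVec, hfm, ← Matrix.mulVec_mulVec, hfm]
    exact eq_of_obs h2.2 fun i => by rw [hf, mulVec_pow_succ, mulVec_pow_succ, hf]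
  · rw [← Matrix.mulVec_mulVec, hfm]
    exact eq_of_obs h2.2 fun i => by rw [hf, hM]
  · rw [← Matrix.mulVec_mulVec, hfm]
    have := hf x 0
    rw [pow_zero, pow_zero, Matrix.one_mulVec, Matrix.one_mulVec] at this
    exact this.symm

/-- Behaviour inclusion over the whole time axis. Each window of length `k + 1` of an `s0`
trajectory is matched by a state of `s1`; consecutive windows overlap in `k` samples, so by
observability of `s1` at depth `k` the matching states form a single trajectory of `s1`. -/
lemma behaviour {s0 s1 : LinSys m p} {x0 : ℕ → Fin s0.n → ℝ}
    (h0 : ExplainsWith s0 t u y x0) (h1 : Explains s1 t u y) {k : ℕ} (hr : Rich x0 u k t)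
    (hk : Unobs s1 k = ⊥) (z : Fin s0.n → ℝ) (w : ℕ → Fin m → ℝ) :
    ∃ x : Fin s1.n → ℝ, ∀ s, out s0 z w s = out s1 x w s := by
  choose X hX using fun s => transfer h0 h1 hr (traj s0 z w s) (fun i => w (s + i))
  simp only [← out_shift] at hX
  have hstep : ∀ s, X (s + 1) = s1.A *ᵥ X s + s1.B *ᵥ w s := by
    intro s
    rw [← sub_eq_zero, ← Submodule.mem_bot ℝ, ← hk, mem_unobs]
    intro r hrk
    have e1 := hX (s + 1) r hrk.le
    have e2 := hX s (1 + r) (by omega)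
    rw [out_shift s1] at e2
    rw [← Nat.add_assoc, e1, out_sub s1 _ (traj s1 (X s) (fun i => w (s + i)) 1)] at e2
    simp only [← Nat.add_assoc] at e2
    exact add_eq_left.1 e2
  have htraj : ∀ s, X s = traj s1 (X 0) w s := by
    intro s
    induction s with
    | zero => rfl
    | succ s ih => rw [hstep, traj, ← ih]
  refine ⟨X 0, fun s => ?_⟩
  have := hX s 0 (Nat.zero_le _)
  rw [Nat.add_zero] at this
  rw [this, out, out, ← htraj s]
  rfl

lemma traj_impulse (sys : LinSys m p) (k : ℕ) (w : Fin m → ℝ) (i : ℕ) :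
    traj sys 0 (Pi.single k w) (k + 1 + i) = sys.A ^ i *ᵥ (sys.B *ᵥ w) := by
  have h0 : traj sys 0 (Pi.single k w) k = 0 := by
    rw [traj_congr sys 0 (u' := fun _ => 0) fun i hi => Pi.single_eq_of_ne hi.ne _, traj_zero,
      Matrix.mulVec_zero]
  rw [traj_shift, traj_congr sys _ (u' := fun _ => 0) fun i _ => Pi.single_eq_of_ne (by omega) _,
    traj_zero, traj, h0, Matrix.mulVec_zero, zero_add, Pi.single_eq_same]

lemma out_impulse (sys : LinSys m p) (k : ℕ) (w : Fin m → ℝ) (i : ℕ) :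
    out sys 0 (Pi.single k w) (k + 1 + i) = sys.C *ᵥ (sys.A ^ i *ᵥ (sys.B *ᵥ w)) := by
  rw [out, traj_impulse, Pi.single_eq_of_ne (by omega), Matrix.mulVec_zero, add_zero]

lemma out_impulse_self (sys : LinSys m p) (k : ℕ) (w : Fin m → ℝ) :
    out sys 0 (Pi.single k w) k = sys.D *ᵥ w := by
  rw [out, traj_congr sys 0 (u' := fun _ => 0) fun i hi => Pi.single_eq_of_ne hi.ne _, traj_zero,
    Matrix.mulVec_zero, Matrix.mulVec_zero, zero_add, Pi.single_eq_same]

lemma out_impulse_lt (sys : LinSys m p) {k i : ℕ} (hi : i < k) (x : Fin sys.n → ℝ) (w : Fin m → ℝ) :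
    out sys x (Pi.single k w) i = sys.C *ᵥ (sys.A ^ i *ᵥ x) := by
  rw [out_congr sys x (u' := fun _ => 0) fun j hj => Pi.single_eq_of_ne (by omega) _, out_zero]

/-- Equality of the Markov parameters: the response of `s0` to an impulse at time `k` from the
zero state is a response of `s1`, whose initial state must be zero because the first `k` outputs
vanish. -/
lemma markov_eq {s0 s1 : LinSys m p} {x0 : ℕ → Fin s0.n → ℝ}
    (h0 : ExplainsWith s0 t u y x0) (h1 : Explains s1 t u y) {k : ℕ} (hr : Rich x0 u k t)
    (hk : Unobs s1 k = ⊥) :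
    s1.D = s0.D ∧
    ∀ i w, s1.C *ᵥ (s1.A ^ i *ᵥ (s1.B *ᵥ w)) = s0.C *ᵥ (s0.A ^ i *ᵥ (s0.B *ᵥ w)) := by
  have key : ∀ w : Fin m → ℝ, ∀ s, out s0 0 (Pi.single k w) s = out s1 0 (Pi.single k w) s := by
    intro w
    obtain ⟨x, hx⟩ := behaviour h0 h1 hr hk 0 (Pi.single k w)
    have : x = 0 := by
      rw [← Submodule.mem_bot ℝ, ← hk, mem_unobs]
      intro i hi
      rw [← out_impulse_lt s1 hi x w, ← hx, out_impulse_lt s0 hi, Matrix.mulVec_zero,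
        Matrix.mulVec_zero]
    rwa [this] at hx
  constructor
  · refine Matrix.mulVec_injective <| funext fun w => ?_
    rw [← out_impulse_self s1 k, ← key, out_impulse_self]
  · intro i w
    rw [← out_impulse s1 k, ← key, out_impulse]

/-- The lag of an explaining system exceeds `l` by at most the excess of its state dimension over
that of `s0`: the observability matrix of `s1` already has rank at least `s0.n` at depth `l`, and
the remaining rank grows by at least one per step up to the lag. -/
lemma lag_bound {s0 s1 : LinSys m p} {x0 : ℕ → Fin s0.n → ℝ}
    (h0 : ExplainsWith s0 t u y x0) (h1 : Explains s1 t u y) {l : ℕ} (hr : Rich x0 u l t)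
    (hl : Unobs s0 l = ⊥) : lag s1 + s0.n ≤ l + s1.n := by
  have hrank : s0.n ≤ (obsMat s1 l).rank := by
    have e : (obsMat s0 l).rank = s0.n := by
      have := rank_add_finrank_unobs s0 l
      rwa [hl, finrank_bot, add_zero] at this
    rw [← e]
    refine Submodule.finrank_mono ?_
    rintro _ ⟨z, rfl⟩
    obtain ⟨x, hx⟩ := transfer h0 h1 hr z (fun _ => 0)
    simp only [out_zero] at hx
    refine ⟨x, ?_⟩
    funext r
    have := congrFun (hx r.1 r.1.2.le) r.2
    rw [Matrix.mulVec_mulVec, Matrix.mulVec_mulVec] at this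
    exact this.symm
  have h2 := rank_add_finrank_unobs s1 l
  rcases le_or_gt (lag s1) l with h | h
  · omega
  · have := finrank_drop s1 (i := lag s1) (fun k hk => unobs_ne_of_lt_lag s1 hk) h.le
    omega

lemma lMin_spec {sys : LinSys m p} (h : Explains sys t u y) :
    ∃ s0 : LinSys m p, Explains s0 t u y ∧ lag s0 = lMin t u y :=
  Nat.sInf_mem (s := {ℓ | ∃ sys : LinSys m p, Explains sys t u y ∧ lag sys = ℓ}) ⟨_, sys, h, rfl⟩

lemma nMin_spec {sys : LinSys m p} (h : Explains sys t u y) :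
    ∃ s0 : LinSys m p, Explains s0 t u y ∧ s0.n = nMin t u y :=
  Nat.sInf_mem (s := {n | ∃ sys : LinSys m p, Explains sys t u y ∧ sys.n = n}) ⟨_, sys, h, rfl⟩

lemma lMin_le {sys : LinSys m p} (h : Explains sys t u y) : lMin t u y ≤ lag sys :=
  Nat.sInf_le ⟨sys, h, rfl⟩

lemma nMin_le {sys : LinSys m p} (h : Explains sys t u y) : nMin t u y ≤ sys.n :=
  Nat.sInf_le ⟨sys, h, rfl⟩

/-- Sufficiency of the rank condition. By `lag_bound`, every candidate in `S_{L,N}` has lag at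
most the depth at which the rank is assumed, so `markov_eq` applies to it. -/
lemma informative_of_rank (L N : ℕ) (sysT : LinSys m p) (hmin : MinimalSys sysT)
    (hdata : Explains sysT t u y) (hL : lag sysT ≤ L) (hN : sysT.n ≤ N)
    (hrank : (Hkt u y (min L (N - nMin t u y + lMin t u y)) t).rank =
          (min L (N - nMin t u y + lMin t u y) + 1) * m + nMin t u y) :
    Informative t u y sysT.n L N := by
  obtain ⟨sm, ⟨x0, h0⟩, hn⟩ := nMin_spec hdata
  obtain ⟨sl, hsl, hlag⟩ := lMin_spec hdata
  set k := min L (N - nMin t u y + lMin t u y) with hkdef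
  have hlk : lMin t u y ≤ k := by
    have := lMin_le hdata
    omega
  rw [← hn] at hrank
  obtain ⟨hr, hbot⟩ := (rank_eq_iff_rich h0 k).1 hrank
  have hobs := observable_of_bot sm hbot
  have hrl : Rich x0 u (lMin t u y) t := rich_mono hlk hr
  have hlsm : lag sm ≤ lMin t u y := by
    rw [← hlag] at hrl ⊢
    exact lag_le_of_rich h0 hsl hrl
  have hmk : ∀ s1 : LinSys m p, s1 ∈ ExplSet t u y ∩ Mset m p ∩ SLN m p L N →
      s1.n = nMin t u y ∧ s1.D = sm.D ∧
      ∀ i w, s1.C *ᵥ (s1.A ^ i *ᵥ (s1.B *ᵥ w)) = sm.C *ᵥ (sm.A ^ i *ᵥ (sm.B *ᵥ w)) := by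
    rintro s1 ⟨⟨he, hm1⟩, hl1, hn1⟩
    have hb := lag_bound h0 he hrl (unobs_bot sm hobs hlsm)
    have hk : lag s1 ≤ k := by omega
    have hM := markov_eq h0 he hr (unobs_bot s1 hm1.2 hk)
    refine ⟨le_antisymm ?_ (nMin_le he), hM⟩
    obtain ⟨f, hf⟩ := exists_link s1 sm hm1.1 hM.2
    have := LinearMap.finrank_le_finrank_of_injective (link_injective hm1.2 hf)
    rwa [Module.finrank_fin_fun, Module.finrank_fin_fun, hn] at this
  have hT := hmk sysT ⟨⟨hdata, hmin⟩, hL, hN⟩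
  constructor
  · ext s1
    constructor
    · intro h1
      exact ⟨⟨⟨h1.1.1, (hmk s1 h1).1.trans hT.1.symm⟩, h1.1.2⟩, h1.2⟩
    · intro h1
      exact ⟨⟨h1.1.1.1, h1.1.2⟩, h1.2⟩
  · intro s1 h1 s2 h2
    have e1 := hmk s1 h1
    have e2 := hmk s2 h2
    exact isomorphic_of_markov h1.1.2 h2.1.2 (e1.2.1.trans e2.2.1.symm)
      fun i w => (e1.2.2 i w).trans (e2.2.2 i w).symm

end Identification

/-! ### The Hautus test and inhomogeneous eigenvector equations -/

section Spectral

open Polynomial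

variable {m : ℕ} {V : Type} [AddCommGroup V] [Module ℝ V]

/-- Controllability of the coordinate-free pair `(A, B)` in dual form: no nonzero functional
annihilates all the reachable vectors. -/
def CtrlPair (A : V →ₗ[ℝ] V) (B : (Fin m → ℝ) →ₗ[ℝ] V) : Prop :=
  ∀ ψ : V →ₗ[ℝ] ℝ, (∀ i w, ψ ((A ^ i) (B w)) = 0) → ψ = 0

/-- Hautus test over `ℂ`: the complex functionals annihilating the reachable vectors form a space
stable under composition with `A`, which contains an eigenvector unless it is zero. -/
lemma ctrlPair_of_hautus [FiniteDimensional ℝ V] {A : V →ₗ[ℝ] V} {B : (Fin m → ℝ) →ₗ[ℝ] V}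
    (h : ∀ (φ : V →ₗ[ℝ] ℂ) (l : ℂ), (∀ x, φ (A x) = l * φ x) → (∀ w, φ (B w) = 0) → φ = 0) :
    CtrlPair A B := by
  intro ψ hψ
  let W : Submodule ℂ (V →ₗ[ℝ] ℂ) :=
    { carrier := {φ | ∀ i w, φ ((A ^ i) (B w)) = 0}
      add_mem' := by
        intro a b ha hb i w
        rw [LinearMap.add_apply, ha, hb, add_zero]
      zero_mem' := fun i w => rfl
      smul_mem' := by
        intro c a ha i w
        rw [LinearMap.smul_apply, ha, smul_zero] }
  let E : Module.End ℂ (V →ₗ[ℝ] ℂ) :=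
    { toFun := fun φ => φ ∘ₗ A
      map_add' := fun a b => rfl
      map_smul' := fun c a => rfl }
  have hE : ∀ φ ∈ W, E φ ∈ W := by
    intro φ hφ i w
    change φ (A ((A ^ i) (B w))) = 0
    rw [← Module.End.mul_apply, ← pow_succ']
    exact hφ _ _
  by_contra hne
  let ψc : V →ₗ[ℝ] ℂ := Complex.ofRealCLM.toLinearMap ∘ₗ ψ
  have hψc : ψc ∈ W := by
    intro i w
    change ((ψ ((A ^ i) (B w)) : ℝ) : ℂ) = 0
    rw [hψ, Complex.ofReal_zero]
  have : Nontrivial W := by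
    refine ⟨⟨⟨ψc, hψc⟩, 0, fun h0 => hne ?_⟩⟩
    have h1 : ψc = 0 := congrArg Subtype.val h0
    refine LinearMap.ext fun x => ?_
    exact Complex.ofReal_eq_zero.1 (LinearMap.congr_fun h1 x)
  obtain ⟨l, hl⟩ := Module.End.exists_eigenvalue (E.restrict hE)
  obtain ⟨φ, hφ⟩ := hl.exists_hasEigenvector
  have heq : E φ = l • (φ : V →ₗ[ℝ] ℂ) := congrArg Subtype.val hφ.apply_eq_smul
  refine hφ.2 (Subtype.ext (h φ l (fun x => LinearMap.congr_fun heq x) fun w => ?_))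
  exact φ.2 0 w

lemma pow_apply_eigen {A : V →ₗ[ℝ] V} {φ : V →ₗ[ℝ] ℂ} {l : ℂ} (hA : ∀ x, φ (A x) = l * φ x)
    (i : ℕ) (x : V) : φ ((A ^ i) x) = l ^ i * φ x := by
  induction i with
  | zero => simp
  | succ i ih => rw [pow_succ', Module.End.mul_apply, hA, ih]; ring

lemma hautus_of_ctrlPair {A : V →ₗ[ℝ] V} {B : (Fin m → ℝ) →ₗ[ℝ] V} (hc : CtrlPair A B)
    {φ : V →ₗ[ℝ] ℂ} {l : ℂ} (hA : ∀ x, φ (A x) = l * φ x) (hB : ∀ w, φ (B w) = 0) : φ = 0 := by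
  have h0 : ∀ i w, φ ((A ^ i) (B w)) = 0 := fun i w => by
    rw [pow_apply_eigen hA, hB, mul_zero]
  have hre := hc (Complex.reCLM.toLinearMap ∘ₗ φ) fun i w => by
    change (φ ((A ^ i) (B w))).re = 0
    rw [h0, Complex.zero_re]
  have him := hc (Complex.imCLM.toLinearMap ∘ₗ φ) fun i w => by
    change (φ ((A ^ i) (B w))).im = 0
    rw [h0, Complex.zero_im]
  refine LinearMap.ext fun x => Complex.ext ?_ ?_
  · exact LinearMap.congr_fun hre x
  · exact LinearMap.congr_fun him x

/-- If `τ ∘ A = l τ + ξ`, then `q(A)` can be evaluated under `τ` coefficient by coefficient, each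
step producing a term in `ξ`. Here `divX^[r] q` is `q` with its `r` lowest coefficients removed
and shifted down. -/
lemma resolvent_identity {A : V →ₗ[ℝ] V} {ξ : V →ₗ[ℝ] ℝ} {τ : V →ₗ[ℝ] ℂ} {l : ℂ}
    (h : ∀ x, τ (A x) = l * τ x + ξ x) (q : ℝ[X]) (x : V) (r : ℕ) :
    ∑ i ∈ Finset.range r, (q.coeff i : ℂ) * τ ((A ^ i) x) + aeval l (divX^[r] q) * τ ((A ^ r) x) =
      aeval l q * τ x + ∑ i ∈ Finset.range r, aeval l (divX^[i + 1] q) * ξ ((A ^ i) x) := by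
  induction r with
  | zero => simp
  | succ r ih =>
    have hco : ∀ (i : ℕ) (q : ℝ[X]), (divX^[i] q).coeff 0 = q.coeff i := by
      intro i
      induction i with
      | zero => intro q; rfl
      | succ i ihi => intro q; rw [Function.iterate_succ_apply, ihi, coeff_divX]
    have hsplit : aeval l (divX^[r] q) = l * aeval l (divX^[r + 1] q) + (q.coeff r : ℂ) := by
      conv_lhs => rw [← X_mul_divX_add (divX^[r] q), hco r q]
      rw [map_add, map_mul, aeval_X, aeval_C, Function.iterate_succ_apply']
      rfl
    rw [Finset.sum_range_succ, Finset.sum_range_succ, ← add_assoc, ← ih, hsplit, pow_succ',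
      Module.End.mul_apply, h]
    ring

lemma coeff_divX_iterate (i : ℕ) (q : ℝ[X]) (e : ℕ) : (divX^[i] q).coeff e = q.coeff (e + i) := by
  induction i generalizing q with
  | zero => rfl
  | succ i ih => rw [Function.iterate_succ_apply, ih, coeff_divX, Nat.add_assoc]

/-- Cayley–Hamilton applied to `resolvent_identity`: `τ x` times the characteristic polynomial at
`l` is a polynomial expression in `l` with coefficients the numbers `ξ (A ^ i x)`. -/
lemma resolvent_poly [FiniteDimensional ℝ V] {A : V →ₗ[ℝ] V} {ξ : V →ₗ[ℝ] ℝ} {τ : V →ₗ[ℝ] ℂ} {l : ℂ}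
    (h : ∀ x, τ (A x) = l * τ x + ξ x) (x : V) :
    aeval l A.charpoly * τ x + ∑ i ∈ Finset.range (A.charpoly.natDegree + 1),
      aeval l (divX^[i + 1] A.charpoly) * ξ ((A ^ i) x) = 0 := by
  rw [← resolvent_identity h]
  have h1 : divX^[A.charpoly.natDegree + 1] A.charpoly = 0 := by
    ext e
    rw [coeff_divX_iterate, coeff_zero]
    exact coeff_eq_zero_of_natDegree_lt (by omega)
  have h2 : ∑ i ∈ Finset.range (A.charpoly.natDegree + 1),
      (A.charpoly.coeff i : ℂ) * τ ((A ^ i) x) = τ (aeval A A.charpoly x) := by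
    rw [aeval_eq_sum_range, LinearMap.sum_apply, map_sum]
    refine Finset.sum_congr rfl fun i _ => ?_
    rw [LinearMap.smul_apply, map_smul, Complex.real_smul]
  rw [h1, h2, LinearMap.aeval_self_charpoly]
  simp

/-- If for infinitely many `l` a solution `τ` of `τ ∘ A = l τ + ξ` takes at `x` the polynomial
value `H(l)`, then `H` vanishes and `ξ x = 0`. The identity of `resolvent_poly` reads
`Q + χ H = 0` with `deg Q < deg χ`, so `Q = H = 0`, and `ξ x` is the coefficient of `Q` of
index `deg χ - 1`. -/
lemma resolvent_vanish [FiniteDimensional ℝ V] {A : V →ₗ[ℝ] V} {ξ : V →ₗ[ℝ] ℝ} {Λ : Set ℂ} (hΛ : Λ.Infinite)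
    (x : V) (H : ℝ[X])
    (h : ∀ l ∈ Λ, ∃ τ : V →ₗ[ℝ] ℂ, (∀ x, τ (A x) = l * τ x + ξ x) ∧ τ x = aeval l H) :
    H = 0 ∧ ξ x = 0 := by
  set χ := A.charpoly with hχ
  have hmonic : χ.Monic := A.charpoly_monic
  let Q : ℝ[X] := ∑ i ∈ Finset.range (χ.natDegree + 1), C (ξ ((A ^ i) x)) * divX^[i + 1] χ
  have hQ : ∀ e, Q.coeff e =
      ∑ i ∈ Finset.range (χ.natDegree + 1), ξ ((A ^ i) x) * χ.coeff (e + (i + 1)) := by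
    intro e
    simp only [Q, finsetSum_coeff, coeff_C_mul, coeff_divX_iterate]
  have hF : Q + χ * H = 0 := by
    have hinj : Function.Injective (algebraMap ℝ ℂ) := (algebraMap ℝ ℂ).injective
    rw [← Polynomial.map_eq_zero_iff hinj]
    refine Polynomial.eq_zero_of_infinite_isRoot _ (hΛ.mono fun l hl => ?_)
    obtain ⟨τ, h1, h2⟩ := h l hl
    have h3 := resolvent_poly h1 x
    rw [h2, ← hχ] at h3
    rw [Set.mem_ofPred_eq, IsRoot.def, eval_map_algebraMap, map_add, map_mul]
    simp only [Q, map_sum, map_mul, aeval_C]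
    rw [← h3, add_comm]
    congr 1
    exact Finset.sum_congr rfl fun i _ => mul_comm _ _
  have hdeg : Q.degree < χ.degree := by
    rw [degree_eq_natDegree hmonic.ne_zero]
    refine (degree_lt_iff_coeff_zero _ _).2 fun e he => ?_
    rw [hQ]
    exact Finset.sum_eq_zero fun i _ => by
      rw [coeff_eq_zero_of_natDegree_lt (by omega), mul_zero]
  have huniq := div_modByMonic_unique H Q hmonic ⟨hF, hdeg⟩
  rw [zero_divByMonic, zero_modByMonic] at huniq
  refine ⟨huniq.1.symm, ?_⟩
  rcases Nat.eq_zero_or_pos χ.natDegree with h0 | hpos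
  · have : Module.finrank ℝ V = 0 := by rw [← A.charpoly_natDegree]; exact h0
    have := Module.finrank_zero_iff.1 this
    rw [Subsingleton.elim x 0, map_zero]
  · have hc := hQ (χ.natDegree - 1)
    rw [← huniq.2, coeff_zero, Finset.sum_range_succ', Finset.sum_eq_zero fun i _ => by
      rw [coeff_eq_zero_of_natDegree_lt (by omega), mul_zero]] at hc
    rw [zero_add, zero_add, Nat.sub_add_cancel hpos, hmonic.coeff_natDegree, mul_one] at hc
    exact hc.symm

/-- The complex numbers `l` for which `τ ∘ A = l τ + ξ`, `τ ∘ B = ∑ l ^ i η i` has a solution `τ`.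
These are the only possible new uncontrollable modes of the perturbed system. -/
def ResSet (A : V →ₗ[ℝ] V) (B : (Fin m → ℝ) →ₗ[ℝ] V) (ξ : V →ₗ[ℝ] ℝ)
    (η : ℕ → (Fin m → ℝ) →ₗ[ℝ] ℝ) (K : ℕ) : Set ℂ :=
  {l | ∃ τ : V →ₗ[ℝ] ℂ, (∀ x, τ (A x) = l * τ x + ξ x) ∧
    ∀ w, τ (B w) = ∑ i ∈ Finset.range (K + 1), l ^ i * η i w}

/-- For a controllable pair and a nonzero annihilator `(ξ, η)` only finitely many `l` are
compatible. -/
lemma resSet_finite [FiniteDimensional ℝ V] {A : V →ₗ[ℝ] V} {B : (Fin m → ℝ) →ₗ[ℝ] V} (hc : CtrlPair A B)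
    {ξ : V →ₗ[ℝ] ℝ} {η : ℕ → (Fin m → ℝ) →ₗ[ℝ] ℝ} {K : ℕ} (hη : ∀ i, K < i → η i = 0)
    (hne : ¬ (ξ = 0 ∧ ∀ i, η i = 0)) : (ResSet A B ξ η K).Finite := by
  by_contra hinf
  refine hne ?_
  have hH : ∀ w, (∑ i ∈ Finset.range (K + 1), C (η i w) * X ^ i : ℝ[X]) = 0 := by
    intro w
    refine (resolvent_vanish (A := A) (ξ := ξ) hinf (B w) _ fun l hl => ?_).1
    obtain ⟨τ, h1, h2⟩ := hl
    refine ⟨τ, h1, ?_⟩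
    rw [h2, map_sum]
    refine Finset.sum_congr rfl fun i _ => ?_
    rw [map_mul, aeval_C, map_pow, aeval_X, mul_comm]
    rfl
  have hη0 : ∀ i, η i = 0 := by
    intro i
    rcases le_or_gt i K with hi | hi
    · refine LinearMap.ext fun w => ?_
      have := congrArg (fun q => coeff q i) (hH w)
      simp only [finsetSum_coeff, coeff_C_mul_X_pow, coeff_zero] at this
      rw [Finset.sum_ite_eq, if_pos (Finset.mem_range.2 (by omega))] at this
      exact this
    · exact hη i hi
  refine ⟨hc ξ fun i w => ?_, hη0⟩
  -- all the functionals `τ` vanish on the reachable vectors `A ^ i (B w)`, by induction on `i`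
  have hξ : ∀ i, (∀ (l : ℂ) (τ : V →ₗ[ℝ] ℂ), (∀ x, τ (A x) = l * τ x + ξ x) →
      (∀ w, τ (B w) = 0) → τ ((A ^ i) (B w)) = 0) → ξ ((A ^ i) (B w)) = 0 := by
    intro i hz
    refine (resolvent_vanish (A := A) (ξ := ξ) hinf _ 0 fun l hl => ?_).2
    obtain ⟨τ, h1, h2⟩ := hl
    exact ⟨τ, h1, by rw [hz l τ h1 fun w => by simp [h2, hη0], map_zero]⟩
  refine hξ i ?_
  induction i with
  | zero => exact fun l τ _ h2 => h2 w
  | succ i ih =>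
    intro l τ h1 h2
    rw [pow_succ', Module.End.mul_apply, h1, ih l τ h1 h2, hξ i ih, mul_zero,
      Complex.ofReal_zero, add_zero]

end Spectral

/-! ### Matrix realizations of coordinate-free systems -/

section Realization

variable {m p : ℕ} {V : Type} [AddCommGroup V] [Module ℝ V] [FiniteDimensional ℝ V]

/-- Coordinates on `V` given by an arbitrary basis. -/
noncomputable def coord (V : Type) [AddCommGroup V] [Module ℝ V] [FiniteDimensional ℝ V] :
    V ≃ₗ[ℝ] (Fin (Module.finrank ℝ V) → ℝ) :=
  (Module.finBasis ℝ V).equivFun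

/-- The matrix system representing the coordinate-free system `(A, B, C, D)` on `V` in the
coordinates `coord V`. -/
noncomputable def realize (A : V →ₗ[ℝ] V) (B : (Fin m → ℝ) →ₗ[ℝ] V) (C : V →ₗ[ℝ] (Fin p → ℝ))
    (D : (Fin m → ℝ) →ₗ[ℝ] (Fin p → ℝ)) : LinSys m p where
  n := Module.finrank ℝ V
  A := LinearMap.toMatrix' ((coord V).toLinearMap ∘ₗ A ∘ₗ (coord V).symm.toLinearMap)
  B := LinearMap.toMatrix' ((coord V).toLinearMap ∘ₗ B)
  C := LinearMap.toMatrix' (C ∘ₗ (coord V).symm.toLinearMap)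
  D := LinearMap.toMatrix' D

variable (A : V →ₗ[ℝ] V) (B : (Fin m → ℝ) →ₗ[ℝ] V) (C : V →ₗ[ℝ] (Fin p → ℝ))
    (D : (Fin m → ℝ) →ₗ[ℝ] (Fin p → ℝ))

/-- The coordinates on `V`, valued in the state space of `realize A B C D`. -/
noncomputable def stateEquiv : V ≃ₗ[ℝ] (Fin (realize A B C D).n → ℝ) := coord V

lemma realize_A (x : V) :
    (realize A B C D).A *ᵥ stateEquiv A B C D x = stateEquiv A B C D (A x) := by
  refine (LinearMap.toMatrix'_mulVec _ _).trans ?_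
  change coord V (A ((coord V).symm (coord V x))) = coord V (A x)
  rw [LinearEquiv.symm_apply_apply]

lemma realize_B (w : Fin m → ℝ) : (realize A B C D).B *ᵥ w = stateEquiv A B C D (B w) :=
  LinearMap.toMatrix'_mulVec _ _

lemma realize_C (x : V) : (realize A B C D).C *ᵥ stateEquiv A B C D x = C x := by
  refine (LinearMap.toMatrix'_mulVec _ _).trans ?_
  change C ((coord V).symm (coord V x)) = C x
  rw [LinearEquiv.symm_apply_apply]

lemma realize_D (w : Fin m → ℝ) : (realize A B C D).D *ᵥ w = D w :=
  LinearMap.toMatrix'_mulVec _ _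

lemma realize_pow (i : ℕ) (x : V) :
    (realize A B C D).A ^ i *ᵥ stateEquiv A B C D x = stateEquiv A B C D ((A ^ i) x) := by
  induction i generalizing x with
  | zero => exact Matrix.one_mulVec _
  | succ i ih =>
    rw [← mulVec_pow_succ, realize_A, ih, pow_succ, Module.End.mul_apply]

lemma realize_unobs {k : ℕ} (h : ∀ x, (∀ i < k, C ((A ^ i) x) = 0) → x = 0) :
    Unobs (realize A B C D) k = ⊥ := by
  rw [eq_bot_iff]
  intro z hz
  rw [mem_unobs] at hz
  obtain ⟨x, rfl⟩ := (stateEquiv A B C D).surjective z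
  have : x = 0 := h x fun i hi => by
    rw [← realize_C A B C D, ← realize_pow A B C D]
    exact hz i hi
  rw [this, map_zero]
  exact Submodule.zero_mem _

lemma realize_controllable (h : CtrlPair A B) : Controllable (realize A B C D) := by
  rw [controllable_iff]
  intro ψ hψ
  have h0 := h (ψ ∘ₗ (stateEquiv A B C D).toLinearMap) fun i w => by
    have := hψ i w
    rw [realize_B, realize_pow] at this
    exact this
  refine LinearMap.ext fun z => ?_
  obtain ⟨x, rfl⟩ := (stateEquiv A B C D).surjective z
  exact LinearMap.congr_fun h0 x

end Realization

/-! ### Extending a system by unexcited first-order modes -/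

section Tower

variable {m p : ℕ} {V : Type} [AddCommGroup V] [Module ℝ V]

/-- A coordinate-free system `(A, B, C)` on the state space `V`, together with the direction `v`
(and feedthrough `d0`) along which it is going to be perturbed and the state part `ξ` of a
functional annihilating the data. The system `(A, v, C, d0)` with scalar input is the channel
through which the perturbation reaches the output. -/
structure Pre (m p : ℕ) (V : Type) [AddCommGroup V] [Module ℝ V] where
  A : V →ₗ[ℝ] V
  B : (Fin m → ℝ) →ₗ[ℝ] V
  C : V →ₗ[ℝ] (Fin p → ℝ)
  v : V
  d0 : Fin p → ℝ
  ξ : V →ₗ[ℝ] ℝ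

/-- The impulse response of the perturbation channel `(A, v, C, d0)`. -/
def Pre.resp (S : Pre m p V) : ℕ → Fin p → ℝ
  | 0 => S.d0
  | i + 1 => S.C ((S.A ^ i) S.v)

/-- The parameters kept fixed while the state space is extended: the data `(t, u, y)`, the
feedthrough `D`, the depth `K` and input part `η` of the annihilator, the pole `-a` of the added
modes, the finite set `Λ` of critical complex numbers (avoiding `-a`), and a function `σ` recording
the value at the original direction `v` of the solution `τ` attached to `l ∈ Λ`. -/
structure Ctx (m p : ℕ) where
  t : ℕ
  u : ℕ → Fin m → ℝ
  y : ℕ → Fin p → ℝ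
  D : (Fin m → ℝ) →ₗ[ℝ] (Fin p → ℝ)
  K : ℕ
  η : ℕ → (Fin m → ℝ) →ₗ[ℝ] ℝ
  hη : ∀ i, K < i → η i = 0
  a : ℝ
  Λ : Set ℂ
  hΛ : Λ.Finite
  ha : ∀ l ∈ Λ, l + a ≠ 0
  σ : ℂ → ℂ

/-- The invariants preserved by each extension: the system explains the data and the functional
`(ξ, η)` annihilates them; the perturbation channel has delay exactly `k`; the system is observable
at depth `k`; and (`spec`) the inhomogeneous eigenvector equations for `(ξ, η)` with multiplier `g`
have, for `g ≠ 0`, solutions only for `l ∈ Λ` with `φ v = g σ(l) / (l + a) ^ j`, whereas for `g = 0`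
the pair `(A, [B v])` passes the Hautus test. -/
structure Tower (c : Ctx m p) (S : Pre m p V) (k j : ℕ) : Prop where
  expl : ∃ x : ℕ → V, (∀ s < c.t, x (s + 1) = S.A (x s) + S.B (c.u s) ∧
      c.y s = S.C (x s) + c.D (c.u s)) ∧
    ∀ s, s + c.K < c.t → S.ξ (x s) + ∑ i ∈ Finset.range (c.K + 1), c.η i (c.u (s + i)) = 0
  resp_zero : ∀ i < k, S.resp i = 0
  resp_ne : S.resp k ≠ 0
  obs : ∀ x, (∀ i < k, S.C ((S.A ^ i) x) = 0) → x = 0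
  spec : ∀ (φ : V →ₗ[ℝ] ℂ) (l g : ℂ), (∀ x, φ (S.A x) = l * φ x + g * S.ξ x) →
    (∀ w, φ (S.B w) = g * ∑ i ∈ Finset.range (c.K + 1), l ^ i * c.η i w) →
    (g = 0 → φ S.v = 0 → φ = 0) ∧ (g ≠ 0 → l ∈ c.Λ ∧ φ S.v * (l + c.a) ^ j = g * c.σ l)

/-- Adjoins a state `z` with `z⁺ = -a z` that drives the system through the channel `(v, d0)`. The
new direction is that of `z`, so the channel gets one more unit of delay. -/
def Pre.ext (S : Pre m p V) (a : ℝ) : Pre m p (V × ℝ) where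
  A := LinearMap.prod (S.A ∘ₗ LinearMap.fst ℝ V ℝ + (LinearMap.snd ℝ V ℝ).smulRight S.v)
    ((-a) • LinearMap.snd ℝ V ℝ)
  B := LinearMap.inl ℝ V ℝ ∘ₗ S.B
  C := S.C ∘ₗ LinearMap.fst ℝ V ℝ + (LinearMap.snd ℝ V ℝ).smulRight S.d0
  v := (0, 1)
  d0 := 0
  ξ := S.ξ ∘ₗ LinearMap.fst ℝ V ℝ

lemma ext_A (S : Pre m p V) (a : ℝ) (x : V) (z : ℝ) :
    (S.ext a).A (x, z) = (S.A x + z • S.v, -a * z) := rfl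

lemma ext_C (S : Pre m p V) (a : ℝ) (x : V) (z : ℝ) :
    (S.ext a).C (x, z) = S.C x + z • S.d0 := rfl

lemma ext_pow_inl (S : Pre m p V) (a : ℝ) (x : V) (i : ℕ) :
    ((S.ext a).A ^ i) (x, 0) = ((S.A ^ i) x, 0) := by
  induction i with
  | zero => rfl
  | succ i ih =>
    rw [pow_succ', Module.End.mul_apply, ih, ext_A, zero_smul, add_zero, mul_zero, pow_succ',
      Module.End.mul_apply]

lemma ext_resp (S : Pre m p V) (a : ℝ) (i : ℕ) :
    (S.ext a).resp (i + 1) = S.resp i - a • (S.ext a).resp i := by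
  cases i with
  | zero =>
    change (S.ext a).C (0, 1) = S.d0 - a • (0 : Fin p → ℝ)
    rw [ext_C, map_zero, one_smul, zero_add, smul_zero, sub_zero]
  | succ i =>
    change (S.ext a).C (((S.ext a).A ^ (i + 1)) (0, 1)) =
      S.C ((S.A ^ i) S.v) - a • (S.ext a).C (((S.ext a).A ^ i) (0, 1))
    have e : (S.ext a).A (0, 1) = (S.v, 0) - a • ((0, 1) : V × ℝ) := by
      rw [ext_A]; simp
    rw [pow_succ, Module.End.mul_apply, e, map_sub, map_sub, map_smul, map_smul, ext_pow_inl, ext_C,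
      zero_smul, add_zero]

lemma ext_obs (S : Pre m p V) (a : ℝ) (i : ℕ) (x : V) (z : ℝ) :
    (S.ext a).C (((S.ext a).A ^ i) (x, z)) = S.C ((S.A ^ i) x) + z • (S.ext a).resp (i + 1) := by
  have e : ((x, z) : V × ℝ) = (x, 0) + z • ((0, 1) : V × ℝ) := by simp
  rw [e, map_add, map_add, map_smul, map_smul, ext_pow_inl, ext_C, zero_smul, add_zero]
  rfl

/-- One extension raises both the state dimension and the observability depth by one. -/
lemma Tower.ext {c : Ctx m p} {S : Pre m p V} {k j : ℕ} (h : Tower c S k j) :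
    Tower c (S.ext c.a) (k + 1) (j + 1) := by
  have hz : ∀ i < k + 1, (S.ext c.a).resp i = 0 := by
    intro i hi
    induction i with
    | zero => rfl
    | succ i ih => rw [ext_resp, ih (by omega), h.resp_zero i (by omega), smul_zero, sub_zero]
  have hk : (S.ext c.a).resp (k + 1) = S.resp k := by
    rw [ext_resp, hz k (by omega), smul_zero, sub_zero]
  refine ⟨?_, hz, hk ▸ h.resp_ne, ?_, ?_⟩
  · obtain ⟨x, hx, hann⟩ := h.expl
    refine ⟨fun s => (x s, 0), fun s hs => ⟨?_, ?_⟩, hann⟩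
    · change (x (s + 1), (0 : ℝ)) = (S.ext c.a).A (x s, 0) + (S.B (c.u s), 0)
      rw [ext_A, (hx s hs).1]
      simp
    · rw [ext_C, (hx s hs).2, zero_smul, add_zero]
  · rintro ⟨x, z⟩ hxz
    have hx : x = 0 := h.obs x fun i hi => by
      have := hxz i (by omega)
      rwa [ext_obs, hz (i + 1) (by omega), smul_zero, add_zero] at this
    have hz0 := hxz k (by omega)
    rw [ext_obs, hx, map_zero, map_zero, zero_add, hk, smul_eq_zero] at hz0
    rw [hx, hz0.resolve_right h.resp_ne]
    rfl
  · intro φ l g hA hB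
    let φ1 : V →ₗ[ℝ] ℂ := φ ∘ₗ LinearMap.inl ℝ V ℝ
    have hsplit : ∀ x z, φ (x, z) = φ1 x + z * φ (0, 1) := by
      intro x z
      have e : ((x, z) : V × ℝ) = (x, 0) + z • ((0, 1) : V × ℝ) := by simp
      rw [e, map_add, map_smul, Complex.real_smul]
      rfl
    have hA1 : ∀ x, φ1 (S.A x) = l * φ1 x + g * S.ξ x := by
      intro x
      have := hA (x, 0)
      rw [ext_A, zero_smul, add_zero, mul_zero] at this
      exact this
    -- the last coordinate of the eigenvector equation
    have hv : φ1 S.v = (l + c.a) * φ (0, 1) := by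
      have := hA (0, 1)
      rw [ext_A, map_zero, one_smul, zero_add, mul_one, hsplit] at this
      have h0 : (S.ext c.a).ξ ((0, 1) : V × ℝ) = 0 := map_zero S.ξ
      rw [h0] at this
      push_cast at this
      linear_combination this
    obtain ⟨h1, h2⟩ := h.spec φ1 l g hA1 hB
    refine ⟨fun hg h0 => ?_, fun hg => ⟨(h2 hg).1, ?_⟩⟩
    · change φ (0, 1) = 0 at h0
      have h3 := h1 hg (by rw [hv, h0, mul_zero])
      refine LinearMap.ext fun q => ?_
      obtain ⟨x, z⟩ := q
      rw [hsplit, h3, h0]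
      simp
    · change φ (0, 1) * _ = _
      rw [← (h2 hg).2, hv]
      ring

end Tower

/-! ### The perturbed system and its trajectories -/

section Perturbation

variable {m p : ℕ} {V : Type} [AddCommGroup V] [Module ℝ V]

/-- The perturbed state matrix `A - ε v ξ`. -/
def Pre.pA (S : Pre m p V) (ε : ℝ) : V →ₗ[ℝ] V := S.A - ε • S.ξ.smulRight S.v

/-- The perturbed input matrix. Future inputs occurring in the annihilator are absorbed by
shifting the state, which replaces `η i w • v` by `η i w • (pA ε ^ i) v`. -/
def Pre.pB (S : Pre m p V) (c : Ctx m p) (ε : ℝ) : (Fin m → ℝ) →ₗ[ℝ] V :=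
  S.B - ε • ∑ i ∈ Finset.range (c.K + 1), (c.η i).smulRight ((S.pA ε ^ i) S.v)

/-- The perturbed feedthrough; only the deepest coefficient `η K` sees the channel, since its
impulse response vanishes before index `K`. -/
def Pre.pD (S : Pre m p V) (c : Ctx m p) (ε : ℝ) : (Fin m → ℝ) →ₗ[ℝ] (Fin p → ℝ) :=
  c.D - ε • (c.η c.K).smulRight (S.resp c.K)

lemma pA_apply (S : Pre m p V) (ε : ℝ) (x : V) : S.pA ε x = S.A x - ε • S.ξ x • S.v := rfl

lemma pB_apply (S : Pre m p V) (c : Ctx m p) (ε : ℝ) (w : Fin m → ℝ) :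
    S.pB c ε w = S.B w - ε • ∑ i ∈ Finset.range (c.K + 1), c.η i w • (S.pA ε ^ i) S.v := by
  simp only [Pre.pB, LinearMap.sub_apply, LinearMap.smul_apply, LinearMap.sum_apply,
    LinearMap.smulRight_apply]

lemma pD_apply (S : Pre m p V) (c : Ctx m p) (ε : ℝ) (w : Fin m → ℝ) :
    S.pD c ε w = c.D w - ε • c.η c.K w • S.resp c.K := rfl

/-- Before the channel delay elapses, the perturbation is invisible in the free response. -/
lemma C_pA_pow {S : Pre m p V} {k : ℕ} (h : ∀ i < k, S.resp i = 0) (ε : ℝ) {i : ℕ} (hi : i < k)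
    (x : V) : S.C ((S.pA ε ^ i) x) = S.C ((S.A ^ i) x) := by
  induction i generalizing x with
  | zero => rfl
  | succ i ih =>
    rw [pow_succ, Module.End.mul_apply, ih (by omega), pA_apply, map_sub, map_sub, map_smul,
      map_smul, map_smul, map_smul, show S.C ((S.A ^ i) S.v) = 0 from h (i + 1) hi, smul_zero,
      smul_zero, sub_zero, pow_succ, Module.End.mul_apply]

/-- The value of the annihilator `(ξ, η)` on the state `z` and the inputs `w 0, …, w K`; it is zero
along the data. -/
def Pre.defect (S : Pre m p V) (c : Ctx m p) (z : V) (w : ℕ → Fin m → ℝ) : ℝ :=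
  S.ξ z + ∑ i ∈ Finset.range (c.K + 1), c.η i (w i)

/-- The trajectory of the original system with the additional forcing `-ε v` times the defect. This
recursion looks ahead in the input; `pstate` turns it into a causal one. -/
def Pre.drive (S : Pre m p V) (c : Ctx m p) (ε : ℝ) (z : V) (w : ℕ → Fin m → ℝ) : ℕ → V
  | 0 => z
  | s + 1 => S.A (S.drive c ε z w s) + S.B (w s) -
      ε • S.defect c (S.drive c ε z w s) (fun i => w (s + i)) • S.v

/-- The contribution to the defect at time `s - i - 1` of the inputs from time `s` on.
Entries `η i` with `i > K` vanish, so summing over `j < K` loses nothing. -/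
def Ctx.f (c : Ctx m p) (w : ℕ → Fin m → ℝ) (i s : ℕ) : ℝ :=
  ∑ j ∈ Finset.range c.K, c.η (i + 1 + j) (w (s + j))

lemma f_rec (c : Ctx m p) (w : ℕ → Fin m → ℝ) (i s : ℕ) (hK : 1 ≤ c.K) :
    c.f w i s = c.η (i + 1) (w s) + c.f w (i + 1) (s + 1) := by
  obtain ⟨k, hk⟩ : ∃ k, c.K = k + 1 := ⟨c.K - 1, by omega⟩
  unfold Ctx.f
  rw [hk, Finset.sum_range_succ', Finset.sum_range_succ,
    c.hη (i + 1 + 1 + k) (by omega), add_comm]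
  simp only [LinearMap.zero_apply, add_zero]
  congr 1
  refine Finset.sum_congr rfl fun j _ => ?_
  rw [show i + 1 + (j + 1) = i + 1 + 1 + j by omega, show s + (j + 1) = s + 1 + j by omega]

lemma f_zero (c : Ctx m p) (w : ℕ → Fin m → ℝ) {i : ℕ} (s : ℕ) (hi : c.K ≤ i) :
    c.f w i s = 0 :=
  Finset.sum_eq_zero fun j _ => by rw [c.hη _ (by omega)]; rfl

lemma defect_eq (S : Pre m p V) (c : Ctx m p) (z : V) (w : ℕ → Fin m → ℝ) (s : ℕ) :
    S.defect c z (fun i => w (s + i)) = S.ξ z + (c.f w 0 (s + 1) + c.η 0 (w s)) := by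
  unfold Pre.defect Ctx.f
  rw [Finset.sum_range_succ']
  congr 2
  refine Finset.sum_congr rfl fun j _ => ?_
  rw [show 0 + 1 + j = j + 1 by omega, show s + 1 + j = s + (j + 1) by omega]

/-- The state of the perturbed system corresponding to the driven trajectory: the look-ahead terms
are moved into the state. -/
def Pre.pstate (S : Pre m p V) (c : Ctx m p) (ε : ℝ) (z : V) (w : ℕ → Fin m → ℝ) (s : ℕ) : V :=
  S.drive c ε z w s + ε • ∑ i ∈ Finset.range c.K, c.f w i s • (S.pA ε ^ i) S.v

/-- `pstate` obeys the state equation of the perturbed system. -/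
lemma pstate_succ (S : Pre m p V) (c : Ctx m p) (hK : 1 ≤ c.K) (ε : ℝ) (z : V)
    (w : ℕ → Fin m → ℝ) (s : ℕ) :
    S.pstate c ε z w (s + 1) = S.pA ε (S.pstate c ε z w s) + S.pB c ε (w s) := by
  have h1 : S.pA ε (∑ i ∈ Finset.range c.K, c.f w i s • (S.pA ε ^ i) S.v) =
      ∑ i ∈ Finset.range c.K, c.η (i + 1) (w s) • (S.pA ε ^ (i + 1)) S.v +
      ∑ i ∈ Finset.range c.K, c.f w (i + 1) (s + 1) • (S.pA ε ^ (i + 1)) S.v := by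
    rw [map_sum, ← Finset.sum_add_distrib]
    refine Finset.sum_congr rfl fun i _ => ?_
    rw [map_smul, ← Module.End.mul_apply, ← pow_succ', ← add_smul, ← f_rec c w i s hK]
  have h2 : ∑ i ∈ Finset.range c.K, c.f w i (s + 1) • (S.pA ε ^ i) S.v =
      ∑ i ∈ Finset.range c.K, c.f w (i + 1) (s + 1) • (S.pA ε ^ (i + 1)) S.v +
        c.f w 0 (s + 1) • S.v := by
    have e := Finset.sum_range_succ (fun i => c.f w i (s + 1) • (S.pA ε ^ i) S.v) c.K
    rw [Finset.sum_range_succ', f_zero c w (s + 1) le_rfl, zero_smul, add_zero] at e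
    exact e.symm
  rw [pB_apply, Pre.pstate, Pre.pstate, map_add, map_smul, h1, h2, Finset.sum_range_succ',
    Pre.drive, defect_eq, pA_apply]
  simp only [smul_add, add_smul, pow_zero, Module.End.one_apply]
  abel

/-- The perturbed system reproduces the output of the driven trajectory. -/
lemma C_pstate {S : Pre m p V} {c : Ctx m p} (h : ∀ i < c.K, S.resp i = 0) (hK : 1 ≤ c.K) (ε : ℝ)
    (z : V) (w : ℕ → Fin m → ℝ) (s : ℕ) :
    S.C (S.pstate c ε z w s) + S.pD c ε (w s) = S.C (S.drive c ε z w s) + c.D (w s) := by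
  obtain ⟨k, hk⟩ : ∃ k, c.K = k + 1 := ⟨c.K - 1, by omega⟩
  have hsum : S.C (∑ i ∈ Finset.range c.K, c.f w i s • (S.pA ε ^ i) S.v) =
      c.η c.K (w s) • S.resp c.K := by
    rw [hk, map_sum, Finset.sum_range_succ, Finset.sum_eq_zero, zero_add, map_smul,
      C_pA_pow h ε (by omega), f_rec c w k s hK, f_zero c w (s + 1) (by omega), add_zero]
    · rfl
    · intro i hi
      have hi' := Finset.mem_range.1 hi
      rw [map_smul, C_pA_pow h ε (by omega),
        show S.C ((S.A ^ i) S.v) = 0 from h (i + 1) (by omega), smul_zero]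
  rw [Pre.pstate, map_add, map_smul, hsum, pD_apply]
  abel

end Perturbation

/-! ### Alternative systems when the data are not rich -/

section Alternative

variable {m p : ℕ}

lemma exists_avoid {Λ : Set ℂ} (hΛ : Λ.Finite) (b : ℂ → ℂ) :
    ∃ r : ℝ, r ≠ 0 ∧ ∀ l ∈ Λ, (r : ℂ) ≠ b l := by
  obtain ⟨r, hr⟩ := ((hΛ.image fun l => (b l).re).union (Set.finite_singleton (0 : ℝ)))
    |>.infinite_compl.nonempty
  refine ⟨r, fun h => hr (Or.inr h), fun l hl h => hr (Or.inl ⟨l, hl, ?_⟩)⟩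
  change (b l).re = r
  rw [← h, Complex.ofReal_re]

/-- Along the data the forcing does not change the outputs: the defect vanishes as long as a whole
window fits into the data, and later forcing is delayed by the channel beyond time `t`. -/
lemma drive_data {V : Type} [AddCommGroup V] [Module ℝ V] {c : Ctx m p} {S : Pre m p V}
    (hz : ∀ i < c.K, S.resp i = 0) (ε : ℝ) {x : ℕ → V}
    (hx : ∀ s < c.t, x (s + 1) = S.A (x s) + S.B (c.u s) ∧ c.y s = S.C (x s) + c.D (c.u s))
    (hann : ∀ s, s + c.K < c.t →
      S.ξ (x s) + ∑ i ∈ Finset.range (c.K + 1), c.η i (c.u (s + i)) = 0) :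
    ∀ s < c.t, c.y s = S.C (S.drive c ε (x 0) c.u s) + c.D (c.u s) := by
  have h1 : ∀ s, s + c.K ≤ c.t → S.drive c ε (x 0) c.u s = x s := by
    intro s
    induction s with
    | zero => exact fun _ => rfl
    | succ s ih =>
      intro hs
      rw [Pre.drive, ih (by omega), Pre.defect, hann s (by omega), zero_smul, smul_zero, sub_zero]
      rcases Nat.lt_or_ge s c.t with h | h
      · rw [(hx s h).1]
      · omega
  have h2 : ∀ s i, i + s < c.t →
      S.C ((S.A ^ i) (S.drive c ε (x 0) c.u s)) = S.C ((S.A ^ i) (x s)) := by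
    intro s
    induction s with
    | zero => exact fun _ _ => rfl
    | succ s ih =>
      intro i hi
      have e := ih (i + 1) (by omega)
      rw [pow_succ, Module.End.mul_apply, Module.End.mul_apply] at e
      rw [(hx s (by omega)).1, Pre.drive]
      simp only [map_add, map_sub, map_smul, e]
      rw [sub_eq_self]
      rcases Nat.lt_or_ge (s + c.K) c.t with h | h
      · rw [h1 s h.le, Pre.defect, hann s h, zero_smul, smul_zero]
      · rw [show S.C ((S.A ^ i) S.v) = 0 from hz (i + 1) (by omega), smul_zero, smul_zero]
  intro s hs
  rw [(hx s hs).2, show S.C (S.drive c ε (x 0) c.u s) = S.C (x s) from h2 s 0 (by omega)]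

/-- A driven trajectory with nonzero initial defect has an output that the original system cannot
produce: by the channel delay and observability the states would have to agree, while the first
step differs by a nonzero multiple of `v`. -/
lemma drive_ne {V : Type} [AddCommGroup V] [Module ℝ V] {c : Ctx m p} {S : Pre m p V} {j : ℕ}
    (h : Tower c S c.K j) (hK : 1 ≤ c.K) {ε : ℝ} (hε : ε ≠ 0) {z : V} {w : ℕ → Fin m → ℝ}
    (hd : S.defect c z w ≠ 0) {xT : ℕ → V} (hT : ∀ s, xT (s + 1) = S.A (xT s) + S.B (w s))
    (heq : ∀ s, S.C (S.drive c ε z w s) = S.C (xT s)) : False := by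
  have h1 : ∀ i < c.K, ∀ s, S.C ((S.A ^ i) (S.drive c ε z w s)) = S.C ((S.A ^ i) (xT s)) := by
    intro i
    induction i with
    | zero => exact fun _ => heq
    | succ i ih =>
      intro hi s
      have e := ih (by omega) (s + 1)
      rw [hT, Pre.drive] at e
      simp only [map_add, map_sub, map_smul] at e
      rw [show S.C ((S.A ^ i) S.v) = 0 from h.resp_zero (i + 1) hi, smul_zero, smul_zero,
        sub_zero, add_right_cancel_iff] at e
      rw [pow_succ, Module.End.mul_apply, Module.End.mul_apply, e]
  have h2 : ∀ s, S.drive c ε z w s = xT s := by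
    intro s
    rw [← sub_eq_zero]
    exact h.obs _ fun i hi => by rw [map_sub, map_sub, h1 i hi s, sub_self]
  have hv : S.v ≠ 0 := by
    intro hv
    refine h.resp_ne ?_
    obtain ⟨k, hk⟩ : ∃ k, c.K = k + 1 := ⟨c.K - 1, by omega⟩
    rw [hk]
    change S.C ((S.A ^ k) S.v) = 0
    rw [hv, map_zero, map_zero]
  have h3 := h2 1
  rw [hT, Pre.drive, h2 0, sub_eq_self, ← h2 0] at h3
  simp only [Nat.zero_add, smul_eq_zero] at h3
  rcases h3 with h3 | h3 | h3
  · exact hε h3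
  · exact hd h3
  · exact hv h3

/-- The perturbed pair is controllable for suitable `ε`. An uncontrollable mode `φ` at `l` solves
the equations of `Tower.spec` with `g = ε φ(v)`; if `g ≠ 0` this forces
`ε = (l + a) ^ j / σ(l)` with `l` in the finite set `Λ`, and these values can be avoided. -/
lemma perturb_ctrl {V : Type} [AddCommGroup V] [Module ℝ V] [FiniteDimensional ℝ V] {c : Ctx m p}
    {S : Pre m p V} {k j : ℕ} (h : Tower c S k j) :
    ∃ ε : ℝ, ε ≠ 0 ∧ CtrlPair (S.pA ε) (S.pB c ε) := by
  obtain ⟨ε, hε, hav⟩ := exists_avoid c.hΛ fun l => (l + c.a) ^ j / c.σ l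
  refine ⟨ε, hε, ctrlPair_of_hautus fun φ l hA hB => ?_⟩
  obtain ⟨h1, h2⟩ := h.spec φ l (ε * φ S.v) (fun x => by
      have := hA x
      rw [pA_apply, map_sub, map_smul, map_smul, Complex.real_smul, Complex.real_smul] at this
      linear_combination this) (fun w => by
      have := hB w
      simp only [pB_apply, map_sub, map_smul, map_sum, Complex.real_smul,
        pow_apply_eigen hA] at this
      rw [sub_eq_zero.1 this, Finset.mul_sum, Finset.mul_sum]
      exact Finset.sum_congr rfl fun i _ => by ring)
  by_cases hv : φ S.v = 0
  · exact h1 (by rw [hv, mul_zero]) hv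
  · exfalso
    obtain ⟨hl, he⟩ := h2 (mul_ne_zero (Complex.ofReal_ne_zero.2 hε) hv)
    have he' : (l + c.a) ^ j = ε * c.σ l := mul_left_cancel₀ hv (by rw [he]; ring)
    have hσ : c.σ l ≠ 0 := by
      intro h0
      rw [h0, mul_zero] at he'
      exact pow_ne_zero j (c.ha l hl) he'
    exact hav l hl (by rw [he', mul_div_cancel_right₀ _ hσ])

/-- When the channel delay equals the depth `K` of the annihilator, a suitable perturbation is a
minimal system of lag at most `K` that explains the data and has a trajectory with an output
which the original system cannot produce. -/
lemma Tower.perturb {V : Type} [AddCommGroup V] [Module ℝ V] [FiniteDimensional ℝ V] {c : Ctx m p}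
    {S : Pre m p V} {j : ℕ} (h : Tower c S c.K j) (hK : 1 ≤ c.K) :
    ∃ T' : LinSys m p, Explains T' c.t c.u c.y ∧ MinimalSys T' ∧ lag T' ≤ c.K ∧
      T'.n = Module.finrank ℝ V ∧
      ∀ z w, S.defect c z w ≠ 0 → ∃ x', ∀ xT : ℕ → V,
        (∀ s, xT (s + 1) = S.A (xT s) + S.B (w s)) →
        ¬ ∀ s, out T' x' w s = S.C (xT s) + c.D (w s) := by
  obtain ⟨ε, hε, hctrl⟩ := perturb_ctrl h
  have hbot : Unobs (realize (S.pA ε) (S.pB c ε) S.C (S.pD c ε)) c.K = ⊥ :=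
    realize_unobs _ _ _ _ fun x hx => h.obs x fun i hi => by
      rw [← C_pA_pow h.resp_zero ε hi]
      exact hx i hi
  have htraj : ∀ z w s, traj (realize (S.pA ε) (S.pB c ε) S.C (S.pD c ε))
      (stateEquiv _ _ _ _ (S.pstate c ε z w 0)) w s =
      stateEquiv _ _ _ _ (S.pstate c ε z w s) := by
    intro z w s
    induction s with
    | zero => rfl
    | succ s ih => rw [traj, ih, realize_A, realize_B, pstate_succ S c hK, map_add]
  have hout : ∀ z w s, out (realize (S.pA ε) (S.pB c ε) S.C (S.pD c ε))
      (stateEquiv _ _ _ _ (S.pstate c ε z w 0)) w s = S.C (S.drive c ε z w s) + c.D (w s) := by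
    intro z w s
    rw [out, htraj, realize_C, realize_D, C_pstate h.resp_zero hK]
  refine ⟨realize (S.pA ε) (S.pB c ε) S.C (S.pD c ε), ?_,
    ⟨realize_controllable _ _ _ _ hctrl, observable_of_bot _ hbot⟩, lag_le_of_bot _ hbot, rfl, ?_⟩
  · obtain ⟨x, hx, hann⟩ := h.expl
    refine ⟨traj _ (stateEquiv _ _ _ _ (S.pstate c ε (x 0) c.u 0)) c.u, fun s hs => ⟨rfl, ?_⟩⟩
    rw [drive_data h.resp_zero ε hx hann s hs, ← hout]
    rfl
  · intro z w hd
    refine ⟨stateEquiv _ _ _ _ (S.pstate c ε z w 0), fun xT hT heq => ?_⟩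
    refine drive_ne h hK hε hd hT fun s => ?_
    have := heq s
    rw [hout] at this
    exact add_right_cancel this

/-- Extending `d` times and then perturbing adds `d` states. -/
lemma Tower.exists_system {c : Ctx m p} (hK : 1 ≤ c.K) (d : ℕ) :
    ∀ {V : Type} [AddCommGroup V] [Module ℝ V] [FiniteDimensional ℝ V] {S : Pre m p V} {k j : ℕ},
      Tower c S k j → k + d = c.K →
      ∃ T' : LinSys m p, Explains T' c.t c.u c.y ∧ MinimalSys T' ∧ lag T' ≤ c.K ∧
        T'.n = Module.finrank ℝ V + d := by
  induction d with
  | zero =>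
    intro V _ _ _ S k j h hk
    obtain rfl : k = c.K := hk
    obtain ⟨T', h1, h2, h3, h4, -⟩ := h.perturb hK
    exact ⟨T', h1, h2, h3, h4⟩
  | succ d ih =>
    intro V _ _ _ S k j h hk
    obtain ⟨T', h1, h2, h3, h4⟩ := ih h.ext (by omega)
    refine ⟨T', h1, h2, h3, ?_⟩
    rw [h4, Module.finrank_prod, Module.finrank_self]
    omega

variable {t : ℕ} {u : ℕ → Fin m → ℝ} {y : ℕ → Fin p → ℝ}

lemma mulVecLin_pow_apply {n : ℕ} (A : Matrix (Fin n) (Fin n) ℝ) (i : ℕ) (x : Fin n → ℝ) :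
    (A.mulVecLin ^ i) x = A ^ i *ᵥ x := by
  induction i generalizing x with
  | zero => exact (Matrix.one_mulVec x).symm
  | succ i ih => rw [pow_succ, Module.End.mul_apply, ih, Matrix.mulVecLin_apply, mulVec_pow_succ]

/-- A direction whose response is delayed by exactly the lag: a state unobservable at depth
`lag T - 1` but not at depth `lag T`, or, when the lag is zero, a pure feedthrough. -/
lemma exists_direction (hp : 1 ≤ p) (T : LinSys m p) :
    ∃ (v : Fin T.n → ℝ) (d0 : Fin p → ℝ), ∀ ξ : (Fin T.n → ℝ) →ₗ[ℝ] ℝ,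
      (∀ i < lag T, Pre.resp (⟨T.A.mulVecLin, T.B.mulVecLin, T.C.mulVecLin, v, d0, ξ⟩ :
        Pre m p (Fin T.n → ℝ)) i = 0) ∧
      Pre.resp (⟨T.A.mulVecLin, T.B.mulVecLin, T.C.mulVecLin, v, d0, ξ⟩ :
        Pre m p (Fin T.n → ℝ)) (lag T) ≠ 0 := by
  rcases Nat.eq_zero_or_pos (lag T) with h0 | hpos
  · refine ⟨0, fun _ => 1, fun ξ => ⟨fun i hi => by omega, ?_⟩⟩
    rw [h0]
    intro h
    exact one_ne_zero (congrFun h ⟨0, hp⟩)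
  · obtain ⟨l, hl⟩ : ∃ l, lag T = l + 1 := ⟨lag T - 1, by omega⟩
    have hne := unobs_ne_of_lt_lag T (k := l) (by omega)
    obtain ⟨v, hv, hv'⟩ := SetLike.exists_of_lt
      (lt_of_le_of_ne (unobs_anti T (Nat.le_succ l)) hne)
    rw [mem_unobs] at hv hv'
    refine ⟨v, 0, fun ξ => ⟨fun i hi => ?_, fun h => hv' fun i hi => ?_⟩⟩
    · cases i with
      | zero => rfl
      | succ i =>
        change T.C *ᵥ ((T.A.mulVecLin ^ i) v) = 0
        rw [mulVecLin_pow_apply]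
        exact hv i (by omega)
    · rcases Nat.lt_or_ge i l with hil | hil
      · exact hv i hil
      · obtain rfl : i = l := by omega
        rw [hl] at h
        change T.C *ᵥ ((T.A.mulVecLin ^ i) v) = 0 at h
        rwa [mulVecLin_pow_apply] at h

/-- The base of the tower: a minimal system together with an annihilator of the data. -/
lemma exists_tower (hp : 1 ≤ p) {T : LinSys m p} (hT : MinimalSys T) {x : ℕ → Fin T.n → ℝ}
    (hx : ExplainsWith T t u y x) {K : ℕ} {ξ : (Fin T.n → ℝ) →ₗ[ℝ] ℝ}
    {η : ℕ → (Fin m → ℝ) →ₗ[ℝ] ℝ} (hη : ∀ i, K < i → η i = 0) (hne : ¬ (ξ = 0 ∧ ∀ i, η i = 0))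
    (hann : ∀ s, s + K < t → ξ (x s) + ∑ i ∈ Finset.range (K + 1), η i (u (s + i)) = 0) :
    ∃ (c : Ctx m p) (S : Pre m p (Fin T.n → ℝ)), c.t = t ∧ c.u = u ∧ c.y = y ∧ c.K = K ∧ c.η = η ∧
      c.D = T.D.mulVecLin ∧ S.A = T.A.mulVecLin ∧ S.B = T.B.mulVecLin ∧ S.C = T.C.mulVecLin ∧
      S.ξ = ξ ∧ Tower c S (lag T) 0 := by
  have hc : CtrlPair T.A.mulVecLin T.B.mulVecLin := by
    intro ψ hψ
    refine (controllable_iff T).1 hT.1 ψ fun i w => ?_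
    rw [← mulVecLin_pow_apply]
    exact hψ i w
  have hfin := resSet_finite hc hη hne
  obtain ⟨a, -, ha⟩ := exists_avoid hfin fun l => -l
  obtain ⟨v, d0, hv⟩ := exists_direction hp T
  obtain ⟨hv1, hv2⟩ := hv ξ
  -- the solution at `l` is unique by controllability, so its value at `v` is a function of `l`
  have hσ : ∀ l : ℂ, ∃ σ : ℂ, ∀ τ : (Fin T.n → ℝ) →ₗ[ℝ] ℂ,
      (∀ x, τ (T.A.mulVecLin x) = l * τ x + ξ x) →
      (∀ w, τ (T.B.mulVecLin w) = ∑ i ∈ Finset.range (K + 1), l ^ i * η i w) → τ v = σ := by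
    intro l
    by_cases hl : l ∈ ResSet T.A.mulVecLin T.B.mulVecLin ξ η K
    · obtain ⟨τ0, h1, h2⟩ := hl
      refine ⟨τ0 v, fun τ h3 h4 => ?_⟩
      have : τ - τ0 = 0 := hautus_of_ctrlPair hc (l := l)
        (fun x => by rw [LinearMap.sub_apply, LinearMap.sub_apply, h1, h3]; ring)
        (fun w => by rw [LinearMap.sub_apply, h2, h4, sub_self])
      rw [sub_eq_zero.1 this]
    · exact ⟨0, fun τ h1 h2 => absurd ⟨τ, h1, h2⟩ hl⟩
  choose σ hσ using hσ
  refine ⟨⟨t, u, y, T.D.mulVecLin, K, η, hη, a, ResSet T.A.mulVecLin T.B.mulVecLin ξ η K, hfin,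
    fun l hl h0 => ha l hl (by linear_combination h0), σ⟩,
    ⟨T.A.mulVecLin, T.B.mulVecLin, T.C.mulVecLin, v, d0, ξ⟩, rfl, rfl, rfl, rfl, rfl, rfl, rfl, rfl,
    rfl, rfl, ⟨x, hx, hann⟩, hv1, hv2, ?_, ?_⟩
  · intro z hz
    rw [← Submodule.mem_bot ℝ, ← unobs_bot T hT.2 le_rfl, mem_unobs]
    intro i hi
    rw [← mulVecLin_pow_apply]
    exact hz i hi
  · intro φ l g hA hB
    refine ⟨fun hg _ => ?_, fun hg => ?_⟩
    · exact hautus_of_ctrlPair hc (l := l) (fun x => by rw [hA, hg, zero_mul, add_zero])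
        (fun w => by rw [hB, hg, zero_mul])
    · have h1 : ∀ x, (g⁻¹ • φ) (T.A.mulVecLin x) = l * (g⁻¹ • φ) x + ξ x := fun x => by
        rw [LinearMap.smul_apply, LinearMap.smul_apply, hA, smul_eq_mul, smul_eq_mul]
        field_simp
      have h2 : ∀ w, (g⁻¹ • φ) (T.B.mulVecLin w) =
          ∑ i ∈ Finset.range (K + 1), l ^ i * η i w := fun w => by
        rw [LinearMap.smul_apply, hB, smul_eq_mul, inv_mul_cancel_left₀ hg]
      refine ⟨⟨_, h1, h2⟩, ?_⟩
      change φ v * (l + a) ^ 0 = g * σ l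
      rw [pow_zero, mul_one, ← hσ l _ h1 h2, LinearMap.smul_apply, smul_eq_mul,
        mul_inv_cancel_left₀ hg]

/-- Isomorphic systems have the same input-output trajectories. -/
lemma not_isomorphic_of_out {T T' : LinSys m p} {x' : Fin T'.n → ℝ} {w : ℕ → Fin m → ℝ}
    (h : ∀ xT : ℕ → Fin T.n → ℝ, (∀ s, xT (s + 1) = T.A *ᵥ xT s + T.B *ᵥ w s) →
      ¬ ∀ s, out T' x' w s = T.C *ᵥ xT s + T.D *ᵥ w s) : ¬ Isomorphic T T' := by
  rintro ⟨hD, S, S', h1, h2, hA, hB, hC⟩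
  have hA' : S' * T'.A = T.A * S' := by
    calc S' * T'.A = S' * (T'.A * S) * S' := by
          rw [Matrix.mul_assoc, Matrix.mul_assoc, h1, Matrix.mul_one]
      _ = T.A * S' := by rw [← hA, ← Matrix.mul_assoc, h2, Matrix.one_mul]
  refine h (fun s => S' *ᵥ traj T' x' w s) (fun s => ?_) fun s => ?_
  · rw [traj, Matrix.mulVec_add, Matrix.mulVec_mulVec, Matrix.mulVec_mulVec, hA', ← hB,
      Matrix.mulVec_mulVec, ← Matrix.mul_assoc, h2, Matrix.one_mul]
  · rw [out, Matrix.mulVec_mulVec, hC, Matrix.mul_assoc, h1, Matrix.mul_one, hD]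

/-- The static case: with no states and depth zero, the annihilator can be added to `D` directly. -/
lemma exists_alternative_zero (hp : 1 ≤ p) {T : LinSys m p} (hT : MinimalSys T)
    {x : ℕ → Fin T.n → ℝ} (hx : ExplainsWith T t u y x) (hl : lag T = 0)
    {ξ : (Fin T.n → ℝ) →ₗ[ℝ] ℝ} {η : ℕ → (Fin m → ℝ) →ₗ[ℝ] ℝ} (hη : ∀ i, 0 < i → η i = 0)
    (hne : ¬ (ξ = 0 ∧ ∀ i, η i = 0))
    (hann : ∀ s, s + 0 < t → ξ (x s) + ∑ i ∈ Finset.range (0 + 1), η i (u (s + i)) = 0) :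
    ∃ T' : LinSys m p, Explains T' t u y ∧ MinimalSys T' ∧ lag T' ≤ 0 ∧ T'.n = T.n ∧
      ¬ Isomorphic T T' := by
  have hn : ∀ z : Fin T.n → ℝ, z = 0 := fun z => by
    rw [← Submodule.mem_bot ℝ, ← unobs_bot T hT.2 hl.le, mem_unobs]
    exact fun i hi => absurd hi (Nat.not_lt_zero i)
  have hξ : ξ = 0 := LinearMap.ext fun z => by rw [hn z, map_zero, map_zero]
  refine ⟨⟨T.n, T.A, T.B, T.C,
    T.D + LinearMap.toMatrix' ((η 0).smulRight (fun _ : Fin p => (1 : ℝ)))⟩, ⟨x, ?_⟩, hT, hl.le,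
    rfl, ?_⟩
  · intro s hs
    refine ⟨(hx s hs).1, ?_⟩
    have h0 : η 0 (u s) = 0 := by
      have := hann s hs
      rwa [hξ, Finset.sum_range_one, LinearMap.zero_apply, zero_add] at this
    change y s = T.C *ᵥ x s + (T.D + _) *ᵥ u s
    rw [(hx s hs).2, Matrix.add_mulVec, LinearMap.toMatrix'_mulVec, LinearMap.smulRight_apply, h0,
      zero_smul, add_zero]
  · rintro ⟨hD, -⟩
    refine hne ⟨hξ, fun i => ?_⟩
    rcases Nat.eq_zero_or_pos i with rfl | hi
    · have h0 := left_eq_add.1 hD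
      refine LinearMap.ext fun w => ?_
      have h1 := LinearMap.toMatrix'_mulVec ((η 0).smulRight (fun _ : Fin p => (1 : ℝ))) w
      rw [h0, Matrix.zero_mulVec] at h1
      have h2 := congrFun h1 ⟨0, hp⟩
      rw [LinearMap.smulRight_apply, Pi.smul_apply, smul_eq_mul, mul_one] at h2
      exact h2.symm
    · exact hη i hi

/-- If the data are not rich at depth `lag T + d` for the minimal explaining system `T`, there is
another minimal explaining system with `d` more states and lag at most `lag T + d`, which is not
isomorphic to `T`. (For `d > 0` the dimensions differ.) -/
lemma exists_alternative (hp : 1 ≤ p) {T : LinSys m p} (hT : MinimalSys T)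
    {x : ℕ → Fin T.n → ℝ} (hx : ExplainsWith T t u y x) (d : ℕ) (hr : ¬ Rich x u (lag T + d) t) :
    ∃ T' : LinSys m p, Explains T' t u y ∧ MinimalSys T' ∧ lag T' ≤ lag T + d ∧ T'.n = T.n + d ∧
      (d = 0 → ¬ Isomorphic T T') := by
  obtain ⟨ξ, η, hη, hne, hann⟩ := exists_annihilator hr
  rcases Nat.eq_zero_or_pos (lag T + d) with h0 | hpos
  · obtain ⟨hl, rfl⟩ : lag T = 0 ∧ d = 0 := by omega
    rw [hl] at hη hann ⊢
    obtain ⟨T', h1, h2, h3, h4, h5⟩ := exists_alternative_zero hp hT hx hl hη hne hann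
    exact ⟨T', h1, h2, h3, h4, fun _ => h5⟩
  obtain ⟨c, S, rfl, rfl, rfl, hK, rfl, hD, hA, hB, hC, rfl, htower⟩ :=
    exists_tower hp hT hx hη hne hann
  rcases Nat.eq_zero_or_pos d with rfl | hd
  · rw [Nat.add_zero] at *
    rw [← hK] at htower hpos
    obtain ⟨T', h1, h2, h3, h4, h5⟩ := htower.perturb hpos
    rw [Module.finrank_fin_fun] at h4
    refine ⟨T', h1, h2, hK ▸ h3, h4, fun _ => ?_⟩
    obtain ⟨z, w, hzw⟩ : ∃ z w, S.defect c z w ≠ 0 := by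
      by_contra! hall
      refine hne ⟨LinearMap.ext fun z => ?_, fun i => ?_⟩
      · have := hall z 0
        simpa [Pre.defect] using this
      · rcases Nat.lt_or_ge c.K i with hi | hi
        · exact c.hη i hi
        · refine LinearMap.ext fun w => ?_
          have := hall 0 (Pi.single i w)
          rw [Pre.defect, map_zero, zero_add, Finset.sum_eq_single i
            (fun b _ hb => by rw [Pi.single_eq_of_ne hb, map_zero])
            (fun hni => absurd (Finset.mem_range.2 (by omega)) hni), Pi.single_eq_same] at this
          exact this
    obtain ⟨x', hx'⟩ := h5 z w hzw
    rw [hA, hB, hC, hD] at hx'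
    exact not_isomorphic_of_out hx'
  · obtain ⟨T', h1, h2, h3, h4⟩ := Tower.exists_system (by omega) d htower hK.symm
    rw [Module.finrank_fin_fun] at h4
    exact ⟨T', h1, h2, hK ▸ h3, h4, fun h => by omega⟩

/-- Necessity of the rank condition: informativity excludes the systems of `exists_alternative`,
so the data are rich at every depth `lag sysT + d` permitted by `L` and `N`, and then
`sysT` attains both `n_min,t` and `ℓ_min,t`. -/
lemma rank_of_informative (hp : 1 ≤ p) (L N : ℕ) (sysT : LinSys m p) (hmin : MinimalSys sysT)
    (hdata : Explains sysT t u y) (hL : lag sysT ≤ L) (hN : sysT.n ≤ N)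
    (hI : Informative t u y sysT.n L N) :
    (Hkt u y (min L (N - nMin t u y + lMin t u y)) t).rank =
          (min L (N - nMin t u y + lMin t u y) + 1) * m + nMin t u y := by
  obtain ⟨x, hx⟩ := hdata
  have hdata : Explains sysT t u y := ⟨x, hx⟩
  have hrich : ∀ d, lag sysT + d ≤ L → sysT.n + d ≤ N → Rich x u (lag sysT + d) t := by
    intro d hdL hdN
    by_contra hr
    obtain ⟨T', h1, h2, h3, h4, h5⟩ := exists_alternative hp hmin hx d hr
    have hmem : T' ∈ ExplSet t u y ∩ Mset m p ∩ SLN m p L N :=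
      ⟨⟨h1, h2⟩, h3.trans hdL, h4.trans_le hdN⟩
    have hn : T'.n = sysT.n := by
      have := hmem
      rw [hI.1] at this
      exact this.1.1.2
    exact h5 (by omega) (hI.2 sysT ⟨⟨hdata, hmin⟩, hL, hN⟩ T' hmem)
  have hrank : ∀ d, lag sysT + d ≤ L → sysT.n + d ≤ N →
      (Hkt u y (lag sysT + d) t).rank = (lag sysT + d + 1) * m + sysT.n := fun d h1 h2 =>
    (rank_eq_iff_rich hx _).2 ⟨hrich d h1 h2, unobs_bot sysT hmin.2 (by omega)⟩
  have hn : sysT.n = nMin t u y := by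
    obtain ⟨s0, hs0, hn0⟩ := nMin_spec hdata
    refine le_antisymm ?_ (nMin_le hdata)
    have h1 := hrank 0 hL hN
    have h2 := rank_Hkt_le hs0 (lag sysT + 0)
    omega
  have hl : lag sysT = lMin t u y := by
    obtain ⟨s0, hs0, hl0⟩ := lMin_spec hdata
    refine le_antisymm ?_ (lMin_le hdata)
    rw [← hl0]
    refine lag_le_of_rich hx hs0 (rich_mono ?_ (hrich 0 hL hN))
    rw [hl0]
    exact lMin_le hdata
  have h := hrank (min L (N - sysT.n + lag sysT) - lag sysT) (by omega) (by omega)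
  rw [show lag sysT + (min L (N - sysT.n + lag sysT) - lag sysT) =
    min L (N - sysT.n + lag sysT) by omega] at h
  rw [← hn, ← hl]
  exact h

/-- A Hankel matrix of rank `(k + 1) * m + n` has at least that many columns. The assumption
`1 ≤ m` makes this number positive, so that `t - k` is not a truncated subtraction. -/
lemma time_bound (hm : 1 ≤ m) {k n : ℕ} (h : (Hkt u y k t).rank = (k + 1) * m + n) :
    k + (k + 1) * m + n ≤ t := by
  have h1 := rank_Hkt_add u y k t
  have h2 : 1 ≤ (k + 1) * m := Nat.mul_pos (Nat.succ_pos k) hm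
  omega

end Alternative

end InfId

/-- **Theorem 1 (characterization of informativity).** The data, generated by a
minimal true system with `ℓ_true ≤ L` and `n_true ≤ N`, are informative for
system identification iff `t ≥ L_t^a + (L_t^a + 1)m + n_min,t` and
`rank H_{L_t^a,t} = (L_t^a + 1)m + n_min,t`, where
`L_t^a = min(L, N - n_min,t + ℓ_min,t)`. -/
theorem informative_iff {m p : ℕ} (hm : 1 ≤ m) (hp : 1 ≤ p)
    (t L N : ℕ) (u : ℕ → Fin m → ℝ) (y : ℕ → Fin p → ℝ)
    (hu : ∃ s < t, u s ≠ 0)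
    (sysT : LinSys m p) (hmin : MinimalSys sysT) (hdata : Explains sysT t u y)
    (hL : lag sysT ≤ L) (hN : sysT.n ≤ N) :
    Informative t u y sysT.n L N ↔
      (min L (N - nMin t u y + lMin t u y) +
          (min L (N - nMin t u y + lMin t u y) + 1) * m + nMin t u y ≤ t ∧
        (Hkt u y (min L (N - nMin t u y + lMin t u y)) t).rank =
          (min L (N - nMin t u y + lMin t u y) + 1) * m + nMin t u y) := by
  constructor
  · intro hI
    have h := InfId.rank_of_informative hp L N sysT hmin hdata hL hN hI
    exact ⟨InfId.time_bound hm h, h⟩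
  · rintro ⟨-, h⟩
    exact InfId.informative_of_rank L N sysT hmin hdata hL hN h
end
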